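/- Let T = S² \ ⋃ᵢ Dᵢ be a Sierpiński curve realized in S² (so each Dᵢ is the interior in S² of a closed disk, the closures D̄ᵢ are pairwise disjoint, diam(Dᵢ) → 0, and ⋃ᵢ D̄ᵢ is dense in S²), and let S ⊆ T be a subset which, in the subspace topology, is a Sierpiński curve entwined in T. Then there exist subsets Sᵢ ⊆ T, each a Sierpiński curve in the subspace topology, with the following properties: (1) T = S ∪ ⋃ᵢ Sᵢ; (2) each intersection Sᵢ ∩ S is a peripheral circle of S and also a peripheral circle of Sᵢ, and every peripheral circle of S equals Sᵢ ∩ S for some i; (3) Sᵢ ∩ Sⱼ = ∅ for i ≠ j; (4) diam(Sᵢ) → 0, where diameters are measured in the metric on T induced from the Euclidean metric of ℝ³. -/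

import Mathlib

open Set Metric Filter Topology

/-- The unit sphere S² in ℝ³. -/
abbrev Sphere2 : Set (EuclideanSpace ℝ (Fin 3)) := Metric.sphere 0 1

/-- The closed unit disk in ℝ². -/
abbrev UnitDisk2 : Set (EuclideanSpace ℝ (Fin 2)) := Metric.closedBall 0 1

/-- The unit circle in ℝ². -/
abbrev UnitCircle : Set (EuclideanSpace ℝ (Fin 2)) := Metric.sphere 0 1

/-- A closed disk in S²: a subset homeomorphic to the closed unit disk in ℝ². -/
def IsClosedDisk (E : Set ↥Sphere2) : Prop := Nonempty (↥E ≃ₜ ↥UnitDisk2)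

/-- A family of open sets in S² realizing a Sierpiński curve as `S² \ ⋃ᵢ Dᵢ`:
each `Dᵢ` is the interior of a closed disk, the closures are pairwise disjoint,
the diameters tend to `0`, and the union of the closures is dense. -/
def IsSierpinskiFamily (D : ℕ → Set ↥Sphere2) : Prop :=
  (∀ i, ∃ E : Set ↥Sphere2, IsClosedDisk E ∧ D i = interior E) ∧
  (Pairwise fun i j => Disjoint (closure (D i)) (closure (D j))) ∧
  Tendsto (fun i => Metric.diam (D i)) atTop (𝓝 0) ∧
  Dense (⋃ i, closure (D i))

/-- A Sierpiński curve: a space homeomorphic to `S² \ ⋃ᵢ Dᵢ` for some Sierpiński family. -/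
def IsSierpinskiCurve (X : Type*) [TopologicalSpace X] : Prop :=
  ∃ D : ℕ → Set ↥Sphere2, IsSierpinskiFamily D ∧ Nonempty (X ≃ₜ ↥((⋃ i, D i)ᶜ))

/-- A peripheral circle of the space `X`: a subspace homeomorphic to the circle whose
complement is connected. -/
def IsPeriphCircle (X : Type*) [TopologicalSpace X] (γ : Set X) : Prop :=
  Nonempty (↥γ ≃ₜ ↥UnitCircle) ∧ IsConnected γᶜ

/-- `γ` is a peripheral circle of the subset `S` (with its subspace topology). -/
def IsPeriphCircleIn {X : Type*} [TopologicalSpace X] (S γ : Set X) : Prop :=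
  γ ⊆ S ∧ IsPeriphCircle ↥S (Subtype.val ⁻¹' γ)

instance fact_finrank_euclideanSpace_three :
    Fact (Module.finrank ℝ (EuclideanSpace ℝ (Fin 3)) = 2 + 1) := ⟨by simp⟩

instance : LocallyConnectedSpace ↥Sphere2 :=
  ChartedSpace.locallyConnectedSpace (EuclideanSpace ℝ (Fin 2)) _

/-- `f` has a continuous logarithm on `s`. -/
def HasLogOn {X : Type*} [TopologicalSpace X] (f : X → ℂ) (s : Set X) : Prop :=
  ∃ g : X → ℂ, ContinuousOn g s ∧ ∀ x ∈ s, Complex.exp (g x) = f x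

namespace HasLogOn

variable {X Y : Type*} [TopologicalSpace X] [TopologicalSpace Y] {f f₁ f₂ : X → ℂ} {s t : Set X}

lemma mono (h : HasLogOn f t) (hst : s ⊆ t) : HasLogOn f s := by
  obtain ⟨g, hg, he⟩ := h
  exact ⟨g, hg.mono hst, fun x hx => he x (hst hx)⟩

lemma congr (h : HasLogOn f₁ s) (hf : EqOn f₂ f₁ s) : HasLogOn f₂ s := by
  obtain ⟨g, hg, he⟩ := h
  exact ⟨g, hg, fun x hx => (he x hx).trans (hf hx).symm⟩

lemma mul (h₁ : HasLogOn f₁ s) (h₂ : HasLogOn f₂ s) : HasLogOn (fun x => f₁ x * f₂ x) s := by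
  obtain ⟨g₁, hg₁, he₁⟩ := h₁
  obtain ⟨g₂, hg₂, he₂⟩ := h₂
  exact ⟨fun x => g₁ x + g₂ x, hg₁.add hg₂, fun x hx => by
    rw [Complex.exp_add, he₁ x hx, he₂ x hx]⟩

lemma zpow (h : HasLogOn f s) (n : ℤ) : HasLogOn (fun x => f x ^ n) s := by
  obtain ⟨g, hg, he⟩ := h
  exact ⟨fun x => n * g x, continuousOn_const.mul hg, fun x hx => by
    rw [Complex.exp_int_mul, he x hx]⟩

lemma inv (h : HasLogOn f s) : HasLogOn (fun x => (f x)⁻¹) s := by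
  simpa using h.zpow (-1)

lemma div (h₁ : HasLogOn f₁ s) (h₂ : HasLogOn f₂ s) : HasLogOn (fun x => f₁ x / f₂ x) s := by
  simpa [div_eq_mul_inv] using h₁.mul h₂.inv

lemma comp {f : Y → ℂ} {t : Set Y} (h : HasLogOn f t) {φ : X → Y} (hφ : ContinuousOn φ s)
    (hm : MapsTo φ s t) : HasLogOn (fun x => f (φ x)) s := by
  obtain ⟨g, hg, he⟩ := h
  exact ⟨fun x => g (φ x), hg.comp hφ hm, fun x hx => he _ (hm hx)⟩

lemma const {c : ℂ} (hc : c ≠ 0) : HasLogOn (fun _ : X => c) s :=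
  ⟨fun _ => Complex.log c, continuousOn_const, fun _ _ => Complex.exp_log hc⟩

lemma of_mem_slitPlane (hf : ContinuousOn f s) (h : ∀ x ∈ s, f x ∈ Complex.slitPlane) :
    HasLogOn f s :=
  ⟨fun x => Complex.log (f x), hf.clog h, fun x hx =>
    Complex.exp_log (Complex.slitPlane_ne_zero (h x hx))⟩

lemma of_norm_sub_one_lt (hf : ContinuousOn f s) (h : ∀ x ∈ s, ‖f x - 1‖ < 1) : HasLogOn f s :=
  of_mem_slitPlane hf fun x hx => Complex.ball_one_subset_slitPlane (by
    simpa [dist_eq_norm] using h x hx)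

end HasLogOn

/-- Two continuous logarithms of the same function on a preconnected set differ by a constant
multiple of `2πi`. -/
lemma exists_int_of_exp_eq {X : Type*} [TopologicalSpace X] {g₁ g₂ : X → ℂ} {C : Set X}
    (hC : IsPreconnected C) (h₁ : ContinuousOn g₁ C) (h₂ : ContinuousOn g₂ C)
    (he : ∀ x ∈ C, Complex.exp (g₁ x) = Complex.exp (g₂ x)) :
    ∃ n : ℤ, ∀ x ∈ C, g₁ x = g₂ x + n * (2 * Real.pi * Complex.I) := by
  rcases C.eq_empty_or_nonempty with rfl | ⟨x₀, hx₀⟩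
  · exact ⟨0, by simp⟩
  have hm : MapsTo (fun x => g₁ x - g₂ x) C
      (AddSubgroup.zmultiples (2 * Real.pi * Complex.I) : Set ℂ) := by
    intro x hx
    obtain ⟨n, hn⟩ := Complex.exp_eq_exp_iff_exists_int.1 (he x hx)
    refine ⟨n, ?_⟩
    simp [hn]
  obtain ⟨n, hn⟩ := Complex.exp_eq_exp_iff_exists_int.1 (he x₀ hx₀)
  refine ⟨n, fun x hx => ?_⟩
  have := hC.constant_of_mapsTo (T := (AddSubgroup.zmultiples (2 * Real.pi * Complex.I) : Set ℂ))
    ⟨NormedSpace.discreteTopology_zmultiples _⟩ (h₁.sub h₂) hm hx hx₀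
  have h' : g₁ x - g₂ x = g₁ x₀ - g₂ x₀ := this
  linear_combination h' + hn

namespace HasLogOn

variable {X Y : Type*} [TopologicalSpace X] [TopologicalSpace Y] {f f₁ f₂ : X → ℂ} {s t : Set X}

/-- Logarithms that agree on the overlap glue, provided continuity on the union is local. -/
lemma glue_of_eqOn {g₁ g₂ : X → ℂ}
    (hU : ∀ g : X → ℂ, ContinuousOn g s → ContinuousOn g t → ContinuousOn g (s ∪ t))
    (h₁ : ContinuousOn g₁ s) (h₂ : ContinuousOn g₂ t)
    (e₁ : ∀ x ∈ s, Complex.exp (g₁ x) = f x) (e₂ : ∀ x ∈ t, Complex.exp (g₂ x) = f x)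
    (hg : ∀ x ∈ s ∩ t, g₁ x = g₂ x) : HasLogOn f (s ∪ t) := by
  classical
  refine ⟨s.piecewise g₁ g₂, hU _ ?_ ?_, ?_⟩
  · exact h₁.congr (piecewise_eqOn s g₁ g₂)
  · refine h₂.congr fun x hx => ?_
    by_cases hs : x ∈ s
    · simp [hs, hg x ⟨hs, hx⟩]
    · simp [hs]
  · intro x hx
    by_cases hs : x ∈ s
    · simp [hs, e₁ x hs]
    · simp [hs, e₂ x (hx.resolve_left hs)]

lemma union_of_eqOn (hs : IsClosed s) (ht : IsClosed t) {g₁ g₂ : X → ℂ}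
    (h₁ : ContinuousOn g₁ s) (h₂ : ContinuousOn g₂ t)
    (e₁ : ∀ x ∈ s, Complex.exp (g₁ x) = f x) (e₂ : ∀ x ∈ t, Complex.exp (g₂ x) = f x)
    (hg : ∀ x ∈ s ∩ t, g₁ x = g₂ x) : HasLogOn f (s ∪ t) :=
  glue_of_eqOn (fun _ a b => a.union_of_isClosed b hs ht) h₁ h₂ e₁ e₂ hg

lemma union_of_continuousOn_union
    (hU : ∀ g : X → ℂ, ContinuousOn g s → ContinuousOn g t → ContinuousOn g (s ∪ t))
    (hc : IsPreconnected (s ∩ t)) (h₁ : HasLogOn f s) (h₂ : HasLogOn f t) :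
    HasLogOn f (s ∪ t) := by
  obtain ⟨g₁, hg₁, e₁⟩ := h₁
  obtain ⟨g₂, hg₂, e₂⟩ := h₂
  obtain ⟨n, hn⟩ := exists_int_of_exp_eq hc (hg₁.mono inter_subset_left)
    (hg₂.mono inter_subset_right) fun x hx => (e₁ x hx.1).trans (e₂ x hx.2).symm
  refine glue_of_eqOn (g₂ := fun x => g₂ x + n * (2 * Real.pi * Complex.I)) hU hg₁
    (hg₂.add continuousOn_const) e₁ (fun x hx => ?_) hn
  rw [Complex.exp_add, Complex.exp_int_mul_two_pi_mul_I, mul_one, e₂ x hx]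

lemma union_of_isClosed (hs : IsClosed s) (ht : IsClosed t) (hc : IsPreconnected (s ∩ t))
    (h₁ : HasLogOn f s) (h₂ : HasLogOn f t) : HasLogOn f (s ∪ t) :=
  union_of_continuousOn_union (fun _ a b => a.union_of_isClosed b hs ht) hc h₁ h₂

lemma union_of_isOpen (hs : IsOpen s) (ht : IsOpen t) (hc : IsPreconnected (s ∩ t))
    (h₁ : HasLogOn f s) (h₂ : HasLogOn f t) : HasLogOn f (s ∪ t) :=
  union_of_continuousOn_union (fun _ a b => a.union_of_isOpen b hs ht) hc h₁ h₂

/-- Having a logarithm is invariant under homotopies through nonvanishing functions. -/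
lemma of_homotopy {F : ℝ → X → ℂ}
    (hF : ContinuousOn (fun p : ℝ × X => F p.1 p.2) (Icc 0 1 ×ˢ s))
    (h0 : ∀ t ∈ Icc (0 : ℝ) 1, ∀ x ∈ s, F t x ≠ 0) (h : HasLogOn (F 0) s) :
    HasLogOn (F 1) s := by
  classical
  obtain ⟨g, hg, he⟩ := h
  let H : C(unitInterval × s, {z : ℂ // z ≠ 0}) :=
    ⟨fun p => ⟨F p.1 p.2, h0 _ p.1.2 _ p.2.2⟩, by
      refine Continuous.subtype_mk ?_ _
      refine hF.comp_continuous (f := fun p : unitInterval × s => ((p.1 : ℝ), (p.2 : X)))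
        (by fun_prop) fun p => ⟨p.1.2, p.2.2⟩⟩
  let f₀ : C(s, ℂ) := ⟨s.domRestrict g, continuousOn_iff_continuous_domRestrict.1 hg⟩
  have H0 : ∀ a, H (0, a) = (⟨_, Complex.exp_ne_zero (f₀ a)⟩ : {z : ℂ // z ≠ 0}) := fun a =>
    Subtype.ext (he a a.2).symm
  let G := Complex.isCoveringMap_exp.liftHomotopy H f₀ H0
  refine ⟨fun x => if hx : x ∈ s then G (1, ⟨x, hx⟩) else 0, ?_, fun x hx => ?_⟩
  · rw [continuousOn_iff_continuous_domRestrict]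
    have : Continuous fun a : s => G (1, a) := by fun_prop
    convert this using 1
    ext a
    simp
  · have := congrFun (Complex.isCoveringMap_exp.liftHomotopy_lifts H f₀ H0) (1, ⟨x, hx⟩)
    have h2 : Complex.exp (G (1, ⟨x, hx⟩)) = F 1 x := congrArg Subtype.val this
    simpa only [hx, dif_pos] using h2

lemma of_convex {E : Type*} [NormedAddCommGroup E] [NormedSpace ℝ E] {s : Set E}
    (hs : Convex ℝ s) {f : E → ℂ} (hf : ContinuousOn f s) (h0 : ∀ x ∈ s, f x ≠ 0) :
    HasLogOn f s := by
  rcases s.eq_empty_or_nonempty with rfl | ⟨x₀, hx₀⟩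
  · exact ⟨0, by simp⟩
  have hm : ∀ t ∈ Icc (0 : ℝ) 1, ∀ x ∈ s, x₀ + t • (x - x₀) ∈ s := fun t ht x hx =>
    hs.add_smul_sub_mem hx₀ hx ht
  have := of_homotopy (s := s) (F := fun t x => f (x₀ + t • (x - x₀)))
    (hf.comp (by fun_prop) fun p hp => hm _ hp.1 _ hp.2)
    (fun t ht x hx => h0 _ (hm t ht x hx)) (by simpa using const (h0 _ hx₀))
  simpa using this

/-- A logarithm descends along an injective continuous map from a compact set. -/
lemma image_of_isCompact [T2Space Y] {φ : X → Y} (hs : IsCompact s) (hφ : ContinuousOn φ s)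
    (hi : InjOn φ s) {f : Y → ℂ} (h : HasLogOn (fun x => f (φ x)) s) : HasLogOn f (φ '' s) := by
  obtain ⟨g, hg, he⟩ := h
  rcases s.eq_empty_or_nonempty with rfl | ⟨x₀, hx₀⟩
  · exact ⟨0, by simp⟩
  have : Nonempty X := ⟨x₀⟩
  have hinv : ∀ x ∈ s, Function.invFunOn φ s (φ x) = x := fun x hx => hi.leftInvOn_invFunOn hx
  have hc : ContinuousOn (Function.invFunOn φ s) (φ '' s) := by
    rw [continuousOn_iff_isClosed]
    intro t ht
    refine ⟨φ '' (t ∩ s), ((hs.inter_left ht).image_of_continuousOn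
      (hφ.mono inter_subset_right)).isClosed, ?_⟩
    ext y
    constructor
    · rintro ⟨hy, x, hx, rfl⟩
      rw [mem_preimage, hinv x hx] at hy
      exact ⟨⟨x, ⟨hy, hx⟩, rfl⟩, x, hx, rfl⟩
    · rintro ⟨⟨x, ⟨hxt, hx⟩, rfl⟩, -⟩
      refine ⟨?_, x, hx, rfl⟩
      rwa [mem_preimage, hinv x hx]
  refine ⟨fun y => g (Function.invFunOn φ s y), hg.comp hc ?_, ?_⟩
  · rintro _ ⟨x, hx, rfl⟩
    rwa [hinv x hx]
  · rintro _ ⟨x, hx, rfl⟩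
    show Complex.exp (g (Function.invFunOn φ s (φ x))) = _
    rw [hinv x hx, he x hx]

end HasLogOn

/-- A set on which every continuous nonvanishing function has a continuous logarithm. -/
def LogAcyclic {X : Type*} [TopologicalSpace X] (s : Set X) : Prop :=
  ∀ f : X → ℂ, ContinuousOn f s → (∀ x ∈ s, f x ≠ 0) → HasLogOn f s

lemma LogAcyclic.image_of_convex {X E : Type*} [TopologicalSpace X] [T2Space X]
    [NormedAddCommGroup E] [NormedSpace ℝ E] {s : Set E} (hs : Convex ℝ s) (hc : IsCompact s)
    {φ : E → X} (hφ : ContinuousOn φ s) (hi : InjOn φ s) : LogAcyclic (φ '' s) := by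
  intro f hf h0
  refine HasLogOn.image_of_isCompact hc hφ hi (HasLogOn.of_convex hs ?_ ?_)
  · exact hf.comp hφ (mapsTo_image φ s)
  · exact fun x hx => h0 _ (mem_image_of_mem φ hx)

lemma not_hasLogOn_zpow_sphere {p : ℂ} {r : ℝ} (hr : 0 < r) {n : ℤ}
    (h : HasLogOn (fun z => (z - p) ^ n) (sphere p r)) : n = 0 := by
  obtain ⟨g, hg, he⟩ := h
  have hm : ∀ t : ℝ, circleMap p r t ∈ sphere p r := circleMap_mem_sphere p hr.le
  have hgc : Continuous fun t : ℝ => g (circleMap p r t) :=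
    hg.comp_continuous (continuous_circleMap p r) hm
  obtain ⟨k, hk⟩ := exists_int_of_exp_eq (C := (univ : Set ℝ)) isPreconnected_univ
    hgc.continuousOn (g₂ := fun t : ℝ => n * (Complex.log r + t * Complex.I)) (by fun_prop)
    (fun t _ => by
      rw [he _ (hm t), Complex.exp_int_mul, Complex.exp_add, Complex.exp_log (by simp [hr.ne'])]
      simp [circleMap])
  have h0 := hk 0 (mem_univ _)
  have h1 := hk (2 * Real.pi) (mem_univ _)
  have hper : circleMap p r (2 * Real.pi) = circleMap p r 0 := by
    simpa using (periodic_circleMap p r) 0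
  rw [hper, h0] at h1
  have : (n : ℂ) * (2 * Real.pi * Complex.I) = 0 := by
    push_cast at h1
    linear_combination -h1
  simpa [Real.pi_ne_zero] using this

lemma exists_continuous_extension {X : Type*} [TopologicalSpace X] [NormalSpace X] {K : Set X}
    (hK : IsClosed K) {g : X → ℂ} (hg : ContinuousOn g K) :
    ∃ G : X → ℂ, Continuous G ∧ EqOn G g K := by
  obtain ⟨G, hG⟩ := ContinuousMap.exists_restrict_eq hK
    ⟨K.domRestrict g, continuousOn_iff_continuous_domRestrict.1 hg⟩
  exact ⟨G, G.continuous, fun x hx => by simpa using DFunLike.congr_fun hG ⟨x, hx⟩⟩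

/-- Eilenberg's criterion: the power `(z - p) ^ n`, corrected by a factor without zeros on `O ∪ K`,
has no logarithm on `K` if `p` lies in a bounded open set `O` with frontier in `K`. -/
lemma eq_zero_of_hasLogOn_zpow_mul {K O : Set ℂ} (hK : IsClosed K) (hO : IsOpen O)
    (hOb : Bornology.IsBounded O) (hOK : frontier O ⊆ K) {p : ℂ} (hp : p ∈ O) {n : ℤ}
    {u : ℂ → ℂ} (hu : ContinuousOn u (O ∪ K)) (hu0 : ∀ z ∈ O ∪ K, u z ≠ 0)
    (h : HasLogOn (fun z => (z - p) ^ n * u z) (K ∩ closure O)) : n = 0 := by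
  classical
  obtain ⟨g, hg, he⟩ := h
  obtain ⟨L, hL, hLg⟩ := exists_continuous_extension (hK.inter isClosed_closure) hg
  have hcl : closure O ⊆ O ∪ K := by
    rw [closure_eq_self_union_frontier]
    exact union_subset_union_right _ hOK
  let F : ℂ → ℂ := O.piecewise (fun z => Complex.exp (L z) / u z) fun z => (z - p) ^ n
  have hF : Continuous F := by
    refine continuous_piecewise ?_ ?_ ?_
    · intro z hz
      have hzK := hOK hz
      have hzc := frontier_subset_closure hz
      rw [hLg ⟨hzK, hzc⟩, he z ⟨hzK, hzc⟩, mul_div_cancel_right₀ _ (hu0 z (Or.inr hzK))]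
    · exact (Complex.continuous_exp.comp hL).continuousOn.div (hu.mono hcl)
        fun z hz => hu0 z (hcl hz)
    · rw [hO.isClosed_compl.closure_eq]
      exact ContinuousOn.zpow₀ (by fun_prop) n fun z hz =>
        Or.inl (sub_ne_zero.2 fun h => hz (h ▸ hp))
  have hF0 : ∀ z, F z ≠ 0 := by
    intro z
    by_cases hz : z ∈ O
    · simp only [F, piecewise_eq_of_mem _ _ _ hz]
      exact div_ne_zero (Complex.exp_ne_zero _) (hu0 z (Or.inl hz))
    · simp only [F, piecewise_eq_of_notMem _ _ _ hz]
      exact zpow_ne_zero _ (sub_ne_zero.2 fun h => hz (h ▸ hp))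
  obtain ⟨R, hR⟩ := hOb.subset_ball p
  have hRpos : 0 < R := by simpa using hR hp
  refine not_hasLogOn_zpow_sphere hRpos
    (((HasLogOn.of_convex convex_univ hF.continuousOn fun z _ => hF0 z).mono
      (subset_univ (sphere p R))).congr fun z hz => ?_)
  have : z ∉ O := fun hzO => by
    have := hR hzO
    rw [mem_sphere] at hz
    rw [mem_ball] at this
    exact this.ne hz
  simp [F, this]

/-- Points far away from a bounded set give functions with logarithms. -/
lemma hasLogOn_sub_of_norm_lt {K : Set ℂ} {p : ℂ} (h : ∀ z ∈ K, ‖z‖ < ‖p‖) :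
    HasLogOn (fun z => z - p) K := by
  rcases eq_or_ne p 0 with rfl | hp
  · exact ⟨0, by fun_prop, fun z hz => absurd (h z hz) (by simp)⟩
  have h1 : HasLogOn (fun z => 1 - z / p) K := by
    refine HasLogOn.of_norm_sub_one_lt (by fun_prop) fun z hz => ?_
    have : (1 - z / p - 1) = -(z / p) := by ring
    rw [this, norm_neg, norm_div, div_lt_one (norm_pos_iff.2 hp)]
    exact h z hz
  refine (h1.mul (HasLogOn.const (neg_ne_zero.2 hp))).congr fun z _ => ?_
  field_simp
  ring

lemma HasLogOn.sub_of_dist_lt {K : Set ℂ} {p q : ℂ} (h : HasLogOn (fun z => z - p) K)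
    (hpq : ∀ z ∈ K, dist p q < dist z p) : HasLogOn (fun z => z - q) K := by
  have hne : ∀ z ∈ K, z - p ≠ 0 := fun z hz h0 => by
    have := hpq z hz
    rw [sub_eq_zero.1 h0, dist_self] at this
    exact absurd dist_nonneg this.not_ge
  have h1 : HasLogOn (fun z => (z - q) / (z - p)) K := by
    refine HasLogOn.of_norm_sub_one_lt (ContinuousOn.div (by fun_prop) (by fun_prop) hne)
      fun z hz => ?_
    have : (z - q) / (z - p) - 1 = (p - q) / (z - p) := by
      field_simp [hne z hz]
      ring
    rw [this, norm_div, div_lt_one (norm_pos_iff.2 (hne z hz))]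
    simpa [dist_eq_norm] using hpq z hz
  exact (h1.mul h).congr fun z hz => by simp [div_mul_cancel₀ _ (hne z hz)]

/-- Stereographic projection from `q`, with values in the complex plane. -/
noncomputable def sphereChart (q : ↥Sphere2) : OpenPartialHomeomorph ↥Sphere2 ℂ :=
  (stereographic' 2 q).transHomeomorph Complex.orthonormalBasisOneI.repr.symm.toHomeomorph

@[simp] lemma sphereChart_source (q : ↥Sphere2) : (sphereChart q).source = {q}ᶜ := by
  simp [sphereChart]

@[simp] lemma sphereChart_target (q : ↥Sphere2) : (sphereChart q).target = univ := by
  simp [sphereChart]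

section

variable (q : ↥Sphere2)

lemma continuousOn_sphereChart : ContinuousOn (sphereChart q) {q}ᶜ := by
  simpa using (sphereChart q).continuousOn

lemma continuous_sphereChart_symm : Continuous (sphereChart q).symm := by
  simpa [continuousOn_univ] using (sphereChart q).continuousOn_symm

lemma sphereChart_symm_ne (z : ℂ) : (sphereChart q).symm z ≠ q := by
  simpa using (sphereChart q).map_target (x := z) (by simp)

@[simp] lemma sphereChart_right_inv (z : ℂ) : sphereChart q ((sphereChart q).symm z) = z :=
  (sphereChart q).right_inv (by simp)

variable {q}

lemma sphereChart_left_inv {x : ↥Sphere2} (hx : x ≠ q) :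
    (sphereChart q).symm (sphereChart q x) = x :=
  (sphereChart q).left_inv (by simpa using hx)

lemma injOn_sphereChart : InjOn (sphereChart q) {q}ᶜ := by
  simpa using (sphereChart q).injOn

lemma injective_sphereChart_symm : Function.Injective (sphereChart q).symm := fun z w h => by
  rw [← sphereChart_right_inv q z, h, sphereChart_right_inv]

/-- A closed set avoiding the centre of projection has compact image. -/
lemma isCompact_sphereChart_image {K : Set ↥Sphere2} (hK : IsClosed K) (hq : q ∉ K) :
    IsCompact (sphereChart q '' K) :=
  hK.isCompact.image_of_continuousOn
    ((continuousOn_sphereChart q).mono (subset_compl_singleton_iff.2 hq))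

lemma sphereChart_image_eq {K : Set ↥Sphere2} (hq : q ∉ K) :
    sphereChart q '' K = (sphereChart q).symm ⁻¹' K := by
  ext z
  constructor
  · rintro ⟨x, hx, rfl⟩
    rwa [mem_preimage, sphereChart_left_inv (ne_of_mem_of_not_mem hx hq)]
  · exact fun hz => ⟨_, hz, sphereChart_right_inv q z⟩

lemma sphereChart_symm_image_eq {A : Set ℂ} :
    (sphereChart q).symm '' A = {q}ᶜ ∩ sphereChart q ⁻¹' A := by
  ext x
  constructor
  · rintro ⟨z, hz, rfl⟩
    exact ⟨sphereChart_symm_ne q z, by simpa using hz⟩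
  · rintro ⟨hx, hz⟩
    exact ⟨_, hz, sphereChart_left_inv hx⟩

lemma isOpen_sphereChart_symm_image {A : Set ℂ} (hA : IsOpen A) :
    IsOpen ((sphereChart q).symm '' A) := by
  rw [sphereChart_symm_image_eq]
  exact (continuousOn_sphereChart q).isOpen_inter_preimage isOpen_compl_singleton hA

/-- The components of an open set are relatively closed. -/
lemma closure_connectedComponentIn_inter {X : Type*} [TopologicalSpace X] {F : Set X} {p : X}  :
    closure (connectedComponentIn F p) ∩ F ⊆ connectedComponentIn F p := by
  rintro x ⟨hx, hxF⟩
  by_cases hp : p ∈ F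
  · have : IsPreconnected (insert x (connectedComponentIn F p)) :=
      isPreconnected_connectedComponentIn.subset_closure (subset_insert _ _)
        (insert_subset hx subset_closure)
    exact this.subset_connectedComponentIn (mem_insert_of_mem _ (mem_connectedComponentIn hp))
      (insert_subset hxF (connectedComponentIn_subset F p)) (mem_insert _ _)
  · rw [connectedComponentIn_eq_empty hp] at hx
    simp at hx

/-- The frontier of a component of the complement of a closed set `K` lies in `K`. -/
lemma frontier_connectedComponentIn_subset {X : Type*} [TopologicalSpace X]
    [LocallyConnectedSpace X] {K : Set X} (hK : IsClosed K) {p : X} :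
    frontier (connectedComponentIn Kᶜ p) ⊆ K := by
  intro x hx
  by_contra hxK
  rw [(hK.isOpen_compl.connectedComponentIn).frontier_eq] at hx
  exact hx.2 (closure_connectedComponentIn_inter ⟨hx.1, hxK⟩)

lemma mem_connectedComponentIn_of_hasLogOn {K : Set ↥Sphere2} (hK : IsClosed K) {p : ↥Sphere2}
    (hp : p ∉ K) (hq : q ∉ K) (hpq : p ≠ q)
    (h : HasLogOn (fun z => sphereChart q z - sphereChart q p) K) :
    q ∈ connectedComponentIn Kᶜ p := by
  by_contra hqO
  set O := connectedComponentIn Kᶜ p with hO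
  have hOo : IsOpen O := hK.isOpen_compl.connectedComponentIn
  have hqc : q ∉ closure O := fun hc => hqO (closure_connectedComponentIn_inter ⟨hc, hq⟩)
  have hc := continuous_sphereChart_symm q
  have hfr : frontier ((sphereChart q).symm ⁻¹' O) ⊆ (sphereChart q).symm ⁻¹' K := by
    intro z hz
    have := hc.frontier_preimage_subset O hz
    exact frontier_connectedComponentIn_subset hK this
  have hb : Bornology.IsBounded ((sphereChart q).symm ⁻¹' O) := by
    refine (isCompact_sphereChart_image isClosed_closure hqc).isBounded.subset ?_
    rw [sphereChart_image_eq hqc]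
    exact preimage_mono subset_closure
  have := eq_zero_of_hasLogOn_zpow_mul (K := (sphereChart q).symm ⁻¹' K)
    (O := (sphereChart q).symm ⁻¹' O) (p := sphereChart q p) (n := 1) (u := fun _ => 1)
    (hK.preimage hc) (hOo.preimage hc) hb hfr
    (by
      rw [mem_preimage, sphereChart_left_inv hpq]
      exact mem_connectedComponentIn hp) continuousOn_const (by simp)
    (by
      refine ((h.comp hc.continuousOn (mapsTo_preimage _ _)).mono inter_subset_left).congr ?_
      intro z _
      simp)
  exact one_ne_zero this

lemma hasLogOn_of_mem_connectedComponentIn {K : Set ↥Sphere2} (hK : IsClosed K) {p : ↥Sphere2}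
    (hp : p ∉ K) (hpq : p ≠ q) (h : q ∈ connectedComponentIn Kᶜ p) :
    HasLogOn (fun z => sphereChart q z - sphereChart q p) K := by
  have hq : q ∉ K := connectedComponentIn_subset _ _ h
  have hcK : ContinuousOn (sphereChart q) K :=
    (continuousOn_sphereChart q).mono (subset_compl_singleton_iff.2 hq)
  have hiff : ∀ x, HasLogOn (fun z => sphereChart q z - sphereChart q x) K ↔
      HasLogOn (fun z => z - sphereChart q x) (sphereChart q '' K) := fun x =>
    ⟨fun h => HasLogOn.image_of_isCompact hK.isCompact hcK
      (injOn_sphereChart.mono (subset_compl_singleton_iff.2 hq)) h,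
      fun h => h.comp hcK (mapsTo_image _ _)⟩
  have hKc := isCompact_sphereChart_image hK hq
  rw [hiff]
  -- being in the good set is locally constant
  have hloc : ∀ x ∉ K, x ≠ q → ∃ U, IsOpen U ∧ x ∈ U ∧ q ∉ U ∧ ∀ y ∈ U,
      (HasLogOn (fun z => z - sphereChart q x) (sphereChart q '' K) ↔
        HasLogOn (fun z => z - sphereChart q y) (sphereChart q '' K)) := by
    intro x hx hxq
    have hxi : sphereChart q x ∉ sphereChart q '' K := by
      rw [sphereChart_image_eq hq, mem_preimage, sphereChart_left_inv hxq]
      exact hx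
    obtain ⟨ε, hε, hb⟩ := Metric.isOpen_iff.1 hKc.isClosed.isOpen_compl _ hxi
    have hd : ∀ z ∈ sphereChart q '' K, ε ≤ dist z (sphereChart q x) := fun z hz => by
      by_contra! hlt
      exact hb hlt hz
    refine ⟨(sphereChart q).symm '' ball (sphereChart q x) (ε / 2),
      isOpen_sphereChart_symm_image isOpen_ball,
      ⟨_, mem_ball_self (half_pos hε), sphereChart_left_inv hxq⟩, ?_, ?_⟩
    · rintro ⟨z, -, hz⟩
      exact sphereChart_symm_ne q z hz
    · rintro _ ⟨y, hy, rfl⟩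
      rw [sphereChart_right_inv]
      rw [mem_ball] at hy
      refine ⟨fun h => h.sub_of_dist_lt fun z hz => ?_, fun h => h.sub_of_dist_lt fun z hz => ?_⟩
      · rw [dist_comm]
        linarith [hd z hz]
      · linarith [hd z hz, dist_triangle z y (sphereChart q x)]
  obtain ⟨R, hR⟩ := hKc.isBounded.subset_ball 0
  let N : Set ↥Sphere2 := ((sphereChart q).symm '' closedBall 0 R)ᶜ
  have hN : IsOpen N := ((isCompact_closedBall 0 R).image
    (continuous_sphereChart_symm q)).isClosed.isOpen_compl
  have hqN : q ∈ N := by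
    rintro ⟨z, -, hz⟩
    exact sphereChart_symm_ne q z hz
  have hNlog : ∀ x ∈ N, x ≠ q →
      HasLogOn (fun z => z - sphereChart q x) (sphereChart q '' K) := by
    intro x hx hxq
    refine hasLogOn_sub_of_norm_lt fun z hz => ?_
    have h1 := hR hz
    rw [mem_ball_zero_iff] at h1
    refine h1.trans ?_
    by_contra! hle
    exact hx ⟨_, by simpa using hle, sphereChart_left_inv hxq⟩
  let G : ↥Sphere2 → Prop := fun x =>
    HasLogOn (fun z => z - sphereChart q x) (sphereChart q '' K)
  let u : Set ↥Sphere2 := {x | ∃ U, IsOpen U ∧ x ∈ U ∧ ∀ y ∈ U, y ≠ q → G y}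
  let v : Set ↥Sphere2 := {x | ∃ U, IsOpen U ∧ x ∈ U ∧ q ∉ U ∧ ∀ y ∈ U, ¬ G y}
  have hu : IsOpen u := isOpen_iff_forall_mem_open.2 fun x ⟨U, hU, hx, h⟩ =>
    ⟨U, fun y hy => ⟨U, hU, hy, h⟩, hU, hx⟩
  have hv : IsOpen v := isOpen_iff_forall_mem_open.2 fun x ⟨U, hU, hx, h⟩ =>
    ⟨U, fun y hy => ⟨U, hU, hy, h⟩, hU, hx⟩
  have huv : Disjoint u v := by
    rw [Set.disjoint_left]
    rintro x ⟨U, -, hx, h⟩ ⟨V, -, hx', hqV, h'⟩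
    exact h' x hx' (h x hx fun e => hqV (e ▸ hx'))
  have hsub := isPreconnected_connectedComponentIn.subset_left_of_subset_union hu hv huv
    (s := connectedComponentIn Kᶜ p) (fun x hx => ?_) ⟨q, h, N, hN, hqN, hNlog⟩
  · obtain ⟨U, -, hpU, hG⟩ := hsub (mem_connectedComponentIn hp)
    exact hG p hpU hpq
  · by_cases hxq : x = q
    · exact Or.inl ⟨N, hN, hxq ▸ hqN, hNlog⟩
    · obtain ⟨U, hU, hxU, hqU, hl⟩ := hloc x (connectedComponentIn_subset _ _ hx) hxq
      by_cases hGx : G x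
      · exact Or.inl ⟨U, hU, hxU, fun y hy _ => (hl y hy).1 hGx⟩
      · exact Or.inr ⟨U, hU, hxU, hqU, fun y hy hGy => hGx ((hl y hy).2 hGy)⟩

/-- Janiszewski's theorem: two closed sets with connected intersection, neither of which
separates `p` from `q`, do not separate these points together. -/
theorem mem_connectedComponentIn_compl_union {A B : Set ↥Sphere2} (hA : IsClosed A)
    (hB : IsClosed B) (hAB : IsPreconnected (A ∩ B)) {p q : ↥Sphere2} (hpA : p ∉ A)
    (hpB : p ∉ B) (h₁ : q ∈ connectedComponentIn Aᶜ p) (h₂ : q ∈ connectedComponentIn Bᶜ p) :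
    q ∈ connectedComponentIn (A ∪ B)ᶜ p := by
  have hp : p ∉ A ∪ B := by simp [hpA, hpB]
  rcases eq_or_ne p q with rfl | hpq
  · exact mem_connectedComponentIn hp
  have hq : q ∉ A ∪ B := not_or.2
    ⟨connectedComponentIn_subset _ _ h₁, connectedComponentIn_subset _ _ h₂⟩
  exact mem_connectedComponentIn_of_hasLogOn (hA.union hB) hp hq hpq
    (HasLogOn.union_of_isClosed hA hB hAB (hasLogOn_of_mem_connectedComponentIn hA hpA hpq h₁)
      (hasLogOn_of_mem_connectedComponentIn hB hpB hpq h₂))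

lemma LogAcyclic.mem_connectedComponentIn_compl {K : Set ↥Sphere2} (h : LogAcyclic K)
    (hK : IsClosed K) {p q : ↥Sphere2} (hp : p ∉ K) (hq : q ∉ K) :
    q ∈ connectedComponentIn Kᶜ p := by
  rcases eq_or_ne p q with rfl | hpq
  · exact mem_connectedComponentIn hp
  refine mem_connectedComponentIn_of_hasLogOn hK hp hq hpq (h _ ?_ ?_)
  · exact ((continuousOn_sphereChart q).mono (subset_compl_singleton_iff.2 hq)).sub continuousOn_const
  · intro x hx h0
    have := injOn_sphereChart (q := q) (subset_compl_singleton_iff.2 hq hx) hpq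
      (sub_eq_zero.1 h0)
    exact hp (this ▸ hx)

lemma LogAcyclic.isPreconnected_compl {K : Set ↥Sphere2} (h : LogAcyclic K)
    (hK : IsClosed K) : IsPreconnected Kᶜ := by
  refine isPreconnected_of_forall_pair fun x hx y hy => ?_
  exact ⟨_, connectedComponentIn_subset _ _, mem_connectedComponentIn hx,
    h.mem_connectedComponentIn_compl hK hx hy, isPreconnected_connectedComponentIn⟩

end

/-- A one-periodic parametrization of a Jordan curve. -/
structure IsJordanParam {X : Type*} [TopologicalSpace X] (c : ℝ → X) : Prop where
  continuous : Continuous c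
  eq_iff : ∀ s t, c s = c t ↔ ∃ n : ℤ, s - t = n

/-- The identification of the complex plane with `ℝ²`. -/
noncomputable abbrev complexToPlane : ℂ ≃ₗᵢ[ℝ] EuclideanSpace ℝ (Fin 2) :=
  Complex.orthonormalBasisOneI.repr

lemma exists_isJordanParam {X : Type*} [TopologicalSpace X] {J : Set X}
    (e : ↥J ≃ₜ ↥UnitCircle) : ∃ c : ℝ → X, IsJordanParam c ∧ range c = J := by
  have hm : ∀ t : ℝ, complexToPlane (Complex.exp (t * (2 * Real.pi * Complex.I))) ∈ UnitCircle := by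
    intro t
    rw [mem_sphere_zero_iff_norm, LinearIsometryEquiv.norm_map, Complex.norm_exp]
    simp
  let u : ℝ → ↥UnitCircle := fun t => ⟨_, hm t⟩
  have hu : Continuous u := by
    refine Continuous.subtype_mk ?_ _
    fun_prop
  refine ⟨fun t => e.symm (u t), ⟨by fun_prop, fun s t => ?_⟩, ?_⟩
  · have : (e.symm (u s) : X) = e.symm (u t) ↔ Complex.exp (s * (2 * Real.pi * Complex.I)) =
        Complex.exp (t * (2 * Real.pi * Complex.I)) := by
      rw [Subtype.coe_inj, e.symm.injective.eq_iff, Subtype.mk_eq_mk,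
        complexToPlane.injective.eq_iff]
    rw [this, Complex.exp_eq_exp_iff_exists_int]
    refine exists_congr fun n => ⟨fun h => ?_, fun h => ?_⟩
    · have hne : (2 * Real.pi * Complex.I) ≠ 0 := by simp [Real.pi_ne_zero]
      have : ((s - t : ℝ) : ℂ) = ((n : ℝ) : ℂ) := by
        apply mul_right_cancel₀ hne
        push_cast
        linear_combination h
      exact_mod_cast this
    · have : ((s - t : ℝ) : ℂ) = ((n : ℝ) : ℂ) := by rw [h]
      push_cast at this
      linear_combination (2 * Real.pi * Complex.I) * this
  · apply Subset.antisymm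
    · rintro _ ⟨t, rfl⟩
      exact (e.symm (u t)).2
    · intro x hx
      let w : ℂ := complexToPlane.symm (e ⟨x, hx⟩)
      have hw : ‖w‖ = 1 := by
        simp only [w, LinearIsometryEquiv.norm_map]
        exact mem_sphere_zero_iff_norm.1 (e ⟨x, hx⟩).2
      refine ⟨w.arg / (2 * Real.pi), ?_⟩
      have : u (w.arg / (2 * Real.pi)) = e ⟨x, hx⟩ := by
        apply Subtype.ext
        apply complexToPlane.symm.injective
        have h1 : complexToPlane.symm (u (w.arg / (2 * Real.pi))) =
            Complex.exp (((w.arg / (2 * Real.pi) : ℝ) : ℂ) * (2 * Real.pi * Complex.I)) := by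
          simp [u]
        rw [h1]
        have h2 := Complex.norm_mul_exp_arg_mul_I w
        rw [hw, Complex.ofReal_one, one_mul] at h2
        refine Eq.trans ?_ h2
        push_cast
        congr 1
        field_simp
      simp [this]

namespace IsJordanParam

section

variable {X : Type*} [TopologicalSpace X] {c : ℝ → X}

lemma add_int (hc : IsJordanParam c) (t : ℝ) (n : ℤ) : c (t + n) = c t :=
  (hc.eq_iff _ _).2 ⟨n, by ring⟩

lemma add_one (hc : IsJordanParam c) (t : ℝ) : c (t + 1) = c t := by
  simpa using hc.add_int t 1

lemma injOn_Ico (hc : IsJordanParam c) {a b : ℝ} (hab : b ≤ a + 1) : InjOn c (Ico a b) := by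
  intro s hs t ht h
  obtain ⟨n, hn⟩ := (hc.eq_iff _ _).1 h
  have h1 : (n : ℝ) < 1 := by linarith [hs.2, ht.1]
  have h2 : (-1 : ℝ) < n := by linarith [hs.1, ht.2]
  have h3 : n < 1 := by exact_mod_cast h1
  have h4 : -1 < n := by exact_mod_cast h2
  have : n = 0 := by omega
  rw [this] at hn
  simpa [sub_eq_zero] using hn

lemma injOn_Icc (hc : IsJordanParam c) {a b : ℝ} (hab : b < a + 1) : InjOn c (Icc a b) :=
  (hc.injOn_Ico (a := a) (b := a + 1) le_rfl).mono (Icc_subset_Ico_right hab)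

lemma exists_mem_Ico (hc : IsJordanParam c) (a : ℝ) {x : X} (hx : x ∈ range c) :
    ∃ t ∈ Ico a (a + 1), c t = x := by
  obtain ⟨t, rfl⟩ := hx
  refine ⟨toIcoMod one_pos a t, toIcoMod_mem_Ico one_pos a t, ?_⟩
  rw [hc.eq_iff]
  exact ⟨-toIcoDiv one_pos a t, by
    have := self_sub_toIcoDiv_zsmul one_pos a t
    rw [← this]
    simp⟩

lemma range_eq (hc : IsJordanParam c) {a b : ℝ} (h1 : a ≤ b) (h2 : b ≤ a + 1) :
    range c = c '' Icc a b ∪ c '' Icc b (a + 1) := by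
  rw [← image_union, Icc_union_Icc_eq_Icc h1 h2]
  refine Subset.antisymm (fun x hx => ?_) (image_subset_range _ _)
  obtain ⟨t, ht, rfl⟩ := hc.exists_mem_Ico a hx
  exact ⟨t, ⟨ht.1, ht.2.le⟩, rfl⟩

lemma inter_eq (hc : IsJordanParam c) {a b : ℝ} (h1 : a ≤ b) (h2 : b ≤ a + 1) :
    c '' Icc a b ∩ c '' Icc b (a + 1) = {c a, c b} := by
  apply Subset.antisymm
  · rintro _ ⟨⟨s, hs, rfl⟩, t, ht, hst⟩
    rcases hs.2.eq_or_lt with rfl | hsb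
    · simp
    rcases ht.2.eq_or_lt with rfl | hta
    · rw [← hst, hc.add_one]
      simp
    have := hc.injOn_Ico le_rfl ⟨h1.trans ht.1, hta⟩ ⟨hs.1, hsb.trans_le h2⟩ hst
    linarith [ht.1]
  · rintro _ (rfl | rfl)
    · exact ⟨⟨a, ⟨le_rfl, h1⟩, rfl⟩, a + 1, ⟨h2, le_rfl⟩, hc.add_one a⟩
    · exact ⟨⟨b, ⟨h1, le_rfl⟩, rfl⟩, b, ⟨le_rfl, h2⟩, rfl⟩

lemma isCompact_range (hc : IsJordanParam c) : IsCompact (range c) := by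
  rw [hc.range_eq (a := 0) (b := 0) le_rfl (by norm_num), ← image_union]
  exact (isCompact_Icc.union isCompact_Icc).image hc.continuous

lemma isPreconnected_image_Icc (hc : IsJordanParam c) (a b : ℝ) :
    IsPreconnected (c '' Icc a b) :=
  isPreconnected_Icc.image _ hc.continuous.continuousOn

variable [T2Space X]

lemma isClosed_range (hc : IsJordanParam c) : IsClosed (range c) := hc.isCompact_range.isClosed

lemma isClosed_image_Icc (hc : IsJordanParam c) (a b : ℝ) : IsClosed (c '' Icc a b) :=
  (isCompact_Icc.image hc.continuous).isClosed

lemma logAcyclic (hc : IsJordanParam c) {a b : ℝ} (hab : b < a + 1) :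
    LogAcyclic (c '' Icc a b) :=
  LogAcyclic.image_of_convex (convex_Icc a b) isCompact_Icc hc.continuous.continuousOn
    (hc.injOn_Icc hab)

/-- On a Jordan curve, any two nonvanishing functions are multiplicatively dependent modulo
exponentials. -/
lemma exists_hasLogOn_zpow_mul (hc : IsJordanParam c) {f g : X → ℂ}
    (hf : ContinuousOn f (range c)) (hf0 : ∀ x ∈ range c, f x ≠ 0)
    (hg : ContinuousOn g (range c)) (hg0 : ∀ x ∈ range c, g x ≠ 0) :
    ∃ m n : ℤ, (m ≠ 0 ∨ n ≠ 0) ∧ HasLogOn (fun x => f x ^ m * g x ^ n) (range c) := by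
  have hR : range c = c '' Icc 0 (1 / 2) ∪ c '' Icc (1 / 2) 1 := by
    simpa using hc.range_eq (a := 0) (b := 1 / 2) (by norm_num) (by norm_num)
  have hI : c '' Icc 0 (1 / 2) ∩ c '' Icc (1 / 2) 1 = {c 0, c (1 / 2)} := by
    simpa using hc.inter_eq (a := 0) (b := 1 / 2) (by norm_num) (by norm_num)
  have hA : c '' Icc 0 (1 / 2) ⊆ range c := image_subset_range _ _
  have hB : c '' Icc (1 / 2) 1 ⊆ range c := image_subset_range _ _
  -- each function has two logarithms and an integral defect
  have key : ∀ f : X → ℂ, ContinuousOn f (range c) → (∀ x ∈ range c, f x ≠ 0) →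
      ∃ (u v : X → ℂ) (d : ℤ), ContinuousOn u (c '' Icc 0 (1 / 2)) ∧
        ContinuousOn v (c '' Icc (1 / 2) 1) ∧
        (∀ x ∈ c '' Icc 0 (1 / 2), Complex.exp (u x) = f x) ∧
        (∀ x ∈ c '' Icc (1 / 2) 1, Complex.exp (v x) = f x) ∧
        u (c 0) = v (c 0) ∧ u (c (1 / 2)) = v (c (1 / 2)) + d * (2 * Real.pi * Complex.I) := by
    intro f hf hf0
    obtain ⟨u, hu, hue⟩ := hc.logAcyclic (a := 0) (b := 1 / 2) (by norm_num) f (hf.mono hA)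
      fun x hx => hf0 x (hA hx)
    obtain ⟨v, hv, hve⟩ := hc.logAcyclic (a := 1 / 2) (b := 1) (by norm_num) f (hf.mono hB)
      fun x hx => hf0 x (hB hx)
    have h0 : c 0 ∈ c '' Icc 0 (1 / 2) ∩ c '' Icc (1 / 2) 1 := by rw [hI]; simp
    have h1 : c (1 / 2) ∈ c '' Icc 0 (1 / 2) ∩ c '' Icc (1 / 2) 1 := by rw [hI]; simp
    obtain ⟨k, hk⟩ := Complex.exp_eq_exp_iff_exists_int.1
      ((hue _ h0.1).trans (hve _ h0.2).symm)
    obtain ⟨l, hl⟩ := Complex.exp_eq_exp_iff_exists_int.1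
      ((hue _ h1.1).trans (hve _ h1.2).symm)
    refine ⟨u, fun x => v x + k * (2 * Real.pi * Complex.I), l - k, hu, by fun_prop, hue,
      fun x hx => ?_, hk, ?_⟩
    · rw [Complex.exp_add, hve x hx, Complex.exp_int_mul_two_pi_mul_I, mul_one]
    · rw [hl]
      push_cast
      ring
  obtain ⟨u, v, d, hu, hv, hue, hve, h0, h1⟩ := key f hf hf0
  obtain ⟨u', v', d', hu', hv', hue', hve', h0', h1'⟩ := key g hg hg0
  obtain ⟨m, n, hmn, hd⟩ : ∃ m n : ℤ, (m ≠ 0 ∨ n ≠ 0) ∧ m * d + n * d' = 0 := by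
    by_cases h : d = 0
    · exact ⟨1, 0, by simp, by simp [h]⟩
    · exact ⟨d', -d, by simp [h], by ring⟩
  refine ⟨m, n, hmn, ?_⟩
  rw [hR]
  refine HasLogOn.union_of_eqOn (hc.isClosed_image_Icc _ _) (hc.isClosed_image_Icc _ _)
    (g₁ := fun x => m * u x + n * u' x) (g₂ := fun x => m * v x + n * v' x)
    (by fun_prop) (by fun_prop) ?_ ?_ ?_
  · intro x hx
    rw [Complex.exp_add, Complex.exp_int_mul, Complex.exp_int_mul, hue x hx, hue' x hx]
  · intro x hx
    rw [Complex.exp_add, Complex.exp_int_mul, Complex.exp_int_mul, hve x hx, hve' x hx]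
  · rw [hI]
    have hd' : (m : ℂ) * d + n * d' = 0 := by exact_mod_cast hd
    rintro x (rfl | rfl)
    · simp only [h0, h0']
    · simp only [h1, h1']
      linear_combination (2 * Real.pi * Complex.I) * hd'

end

section

variable {c : ℝ → ↥Sphere2}

/-- Removing a point from an open connected subset of the sphere keeps it connected. -/
lemma _root_.IsPreconnected.diff_singleton_sphere {O : Set ↥Sphere2} (hO : IsOpen O)
    (h : IsPreconnected O) (q : ↥Sphere2) : IsPreconnected (O \ {q}) := by
  have hq : LogAcyclic ({q} : Set ↥Sphere2) := fun f hf h0 =>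
    ⟨fun _ => Complex.log (f q), continuousOn_const, fun x hx => by
      rw [mem_singleton_iff.1 hx, Complex.exp_log (h0 q rfl)]⟩
  refine isPreconnected_of_forall_pair fun x hx y hy => ?_
  have hd : IsPreconnected (Oᶜ ∩ {q}) :=
    (subsingleton_singleton.anti inter_subset_right).isPreconnected
  have := mem_connectedComponentIn_compl_union (A := Oᶜ) (B := {q}) (p := x) (q := y)
    hO.isClosed_compl isClosed_singleton hd (by simpa using hx.1) hx.2
    (by
      rw [compl_compl]
      exact h.subset_connectedComponentIn hx.1 Subset.rfl hy.1)
    (hq.mem_connectedComponentIn_compl isClosed_singleton hx.2 hy.2)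
  refine ⟨_, ?_, mem_connectedComponentIn ?_, this, isPreconnected_connectedComponentIn⟩
  · refine (connectedComponentIn_subset _ _).trans fun z hz => ?_
    simpa [not_or, and_comm] using hz
  · simpa [not_or, and_comm] using hx

lemma isPreconnected_compl_pair_sphere (a b : ↥Sphere2) :
    IsPreconnected ({a, b}ᶜ : Set ↥Sphere2) := by
  have h : IsPreconnected (univ : Set ↥Sphere2) := by
    simpa using LogAcyclic.isPreconnected_compl (K := (∅ : Set ↥Sphere2))
      (fun f _ _ => ⟨0, by simp, by simp⟩) isClosed_empty
  have h1 := (h.diff_singleton_sphere isOpen_univ a).diff_singleton_sphere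
    (isOpen_univ.sdiff isClosed_singleton) b
  convert h1 using 1
  ext x
  simp [not_or]

lemma range_ne_univ (hc : IsJordanParam c) : range c ≠ univ := by
  intro hu
  have hR : range c = c '' Icc 0 (1 / 2) ∪ c '' Icc (1 / 2) 1 := by
    simpa using hc.range_eq (a := 0) (b := 1 / 2) (by norm_num) (by norm_num)
  have hI : c '' Icc 0 (1 / 2) ∩ c '' Icc (1 / 2) 1 = {c 0, c (1 / 2)} := by
    simpa using hc.inter_eq (a := 0) (b := 1 / 2) (by norm_num) (by norm_num)
  have hpc := isPreconnected_compl_pair_sphere (c 0) (c (1 / 2))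
  rw [← hI, compl_inter] at hpc
  have hmem : ∀ t : ℝ, (∀ n : ℤ, t ≠ n) → (∀ n : ℤ, t - 1 / 2 ≠ n) →
      c t ∉ ({c 0, c (1 / 2)} : Set ↥Sphere2) := by
    rintro t h0 h1 (h | h)
    · obtain ⟨n, hn⟩ := (hc.eq_iff _ _).1 h
      exact h0 n (by simpa using hn)
    · obtain ⟨n, hn⟩ := (hc.eq_iff _ _).1 h
      exact h1 n hn
  have hq : ∀ k : ℤ, k % 2 = 1 → c (k / 4) ∉ ({c 0, c (1 / 2)} : Set ↥Sphere2) := by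
    intro k hk
    refine hmem _ (fun n hn => ?_) fun n hn => ?_
    · have : (k : ℝ) = 4 * n := by linarith
      have : k = 4 * n := by exact_mod_cast this
      omega
    · have : (k : ℝ) = 4 * n + 2 := by linarith
      have : k = 4 * n + 2 := by exact_mod_cast this
      omega
  have h1 := hq 1 (by norm_num)
  have h3 := hq 3 (by norm_num)
  rw [← hI] at h1 h3
  have m1 : c ((1 : ℤ) / 4) ∈ c '' Icc 0 (1 / 2) := ⟨_, by norm_num, rfl⟩
  have m3 : c ((3 : ℤ) / 4) ∈ c '' Icc (1 / 2) 1 := ⟨_, by norm_num, rfl⟩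
  obtain ⟨x, -, hx⟩ := hpc _ _ (hc.isClosed_image_Icc _ _).isOpen_compl
    (hc.isClosed_image_Icc _ _).isOpen_compl Subset.rfl
    ⟨_, Or.inl fun h => h3 ⟨h, m3⟩, fun h => h3 ⟨h, m3⟩⟩
    ⟨_, Or.inr fun h => h1 ⟨m1, h⟩, fun h => h1 ⟨m1, h⟩⟩
  have : x ∈ range c := hu ▸ mem_univ x
  rw [hR] at this
  exact this.elim hx.1 hx.2

/-- A Jordan curve separates the sphere. -/
lemma not_isPreconnected_compl (hc : IsJordanParam c) : ¬ IsPreconnected (range c)ᶜ := by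
  intro hpc
  obtain ⟨q, hq⟩ := (ne_univ_iff_exists_notMem _).1 hc.range_ne_univ
  let φ := sphereChart q
  let γ : ℝ → ℂ := fun t => φ (c t)
  have hcq : ∀ t, c t ≠ q := fun t h => hq ⟨t, h⟩
  have hγ : Continuous γ := (continuousOn_sphereChart q).comp_continuous hc.continuous hcq
  have hγc : IsJordanParam γ := ⟨hγ, fun s t => by
    rw [← hc.eq_iff]
    exact ⟨fun h => injOn_sphereChart (hcq s) (hcq t) h, fun h => congrArg φ h⟩⟩
  have hR : range γ = γ '' Icc 0 (1 / 2) ∪ γ '' Icc (1 / 2) 1 := by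
    simpa using hγc.range_eq (a := 0) (b := 1 / 2) (by norm_num) (by norm_num)
  have hI : γ '' Icc 0 (1 / 2) ∩ γ '' Icc (1 / 2) 1 = {γ 0, γ (1 / 2)} := by
    simpa using hγc.inter_eq (a := 0) (b := 1 / 2) (by norm_num) (by norm_num)
  set a := γ 0 with ha
  set b := γ (1 / 2) with hb
  have hab : a ≠ b := fun h => by
    have := hγc.injOn_Icc (a := 0) (b := 1 / 2) (by norm_num) (by norm_num) (by norm_num) h
    norm_num at this
  -- the quotient has a logarithm off each arc from `b` to `a`
  have harc : ∀ s₀ s₁ : ℝ, γ s₀ = b → γ s₁ = a →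
      HasLogOn (fun z => (z - a) / (z - b)) (γ '' uIcc s₀ s₁)ᶜ := by
    intro s₀ s₁ h0 h1
    have hmem : ∀ t ∈ Icc (0 : ℝ) 1, s₀ + t * (s₁ - s₀) ∈ uIcc s₀ s₁ := fun t ht => by
      have := (convex_uIcc s₀ s₁).add_smul_sub_mem left_mem_uIcc right_mem_uIcc ht
      simpa using this
    have hbn : ∀ z ∈ (γ '' uIcc s₀ s₁)ᶜ, z - b ≠ 0 := fun z hz h =>
      hz ⟨s₀, left_mem_uIcc, by rw [h0, sub_eq_zero.1 h]⟩
    have := HasLogOn.of_homotopy (s := (γ '' uIcc s₀ s₁)ᶜ)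
      (F := fun t z => (z - γ (s₀ + t * (s₁ - s₀))) / (z - b)) ?_ ?_ ?_
    · simpa [h1] using this
    · refine ContinuousOn.div (by fun_prop) (by fun_prop) fun p hp => hbn _ hp.2
    · intro t ht z hz
      refine div_ne_zero (fun h => hz ⟨_, hmem t ht, (sub_eq_zero.1 h).symm⟩) (hbn z hz)
    · refine (HasLogOn.const (c := (1 : ℂ)) one_ne_zero).congr fun z hz => ?_
      simp only [zero_mul, add_zero, h0]
      exact div_self (hbn z hz)
  have hA : HasLogOn (fun z => (z - a) / (z - b)) (γ '' Icc 0 (1 / 2))ᶜ := by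
    have := harc (1 / 2) 0 rfl rfl
    rwa [uIcc_of_ge (by norm_num)] at this
  have hB : HasLogOn (fun z => (z - a) / (z - b)) (γ '' Icc (1 / 2) 1)ᶜ := by
    have := harc (1 / 2) 1 rfl (by simpa using hγc.add_one 0)
    rwa [uIcc_of_le (by norm_num)] at this
  have hconn : IsPreconnected ((γ '' Icc 0 (1 / 2))ᶜ ∩ (γ '' Icc (1 / 2) 1)ᶜ) := by
    rw [← compl_union, ← hR]
    have h1 := (hpc.diff_singleton_sphere hc.isClosed_range.isOpen_compl q).image φ
      ((continuousOn_sphereChart q).mono fun x hx => hx.2)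
    convert h1 using 1
    ext z
    constructor
    · intro hz
      refine ⟨φ.symm z, ⟨?_, sphereChart_symm_ne q z⟩, sphereChart_right_inv q z⟩
      rintro ⟨t, ht⟩
      exact hz ⟨t, by simp only [γ, ht, φ, sphereChart_right_inv]⟩
    · rintro ⟨x, ⟨hx, hxq⟩, rfl⟩ ⟨t, ht⟩
      exact hx ⟨t, injOn_sphereChart (hcq t) hxq ht⟩
  have hlog := HasLogOn.union_of_isOpen (hγc.isClosed_image_Icc _ _).isOpen_compl
    (hγc.isClosed_image_Icc _ _).isOpen_compl hconn hA hB
  rw [← compl_inter, hI] at hlog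
  have hd : 0 < dist a b := dist_pos.2 hab
  have hball : ∀ z ∈ closedBall a (dist a b / 2), z - b ≠ 0 := by
    intro z hz h
    rw [sub_eq_zero.1 h, mem_closedBall, dist_comm] at hz
    linarith
  have hs : HasLogOn (fun z => (z - a) ^ (1 : ℤ)) (sphere a (dist a b / 2)) := by
    have h1 := (HasLogOn.of_convex (convex_closedBall a (dist a b / 2))
      (f := fun z => z - b) (by fun_prop) hball).mono sphere_subset_closedBall
    have h2 := hlog.mono (?_ : sphere a (dist a b / 2) ⊆ {a, b}ᶜ)
    · refine (h2.mul h1).congr fun z hz => ?_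
      simp only [zpow_one]
      rw [div_mul_cancel₀ _ (hball z (sphere_subset_closedBall hz))]
    · rintro z hz (rfl | rfl)
      · simp at hz
        linarith
      · exact hball _ (sphere_subset_closedBall hz) (sub_self _)
  exact one_ne_zero (not_hasLogOn_zpow_sphere (half_pos hd) hs)

/-- Among any three points off a Jordan curve, two lie in the same component. -/
lemma mem_connectedComponentIn_of_three (hc : IsJordanParam c) {p₁ p₂ q : ↥Sphere2}
    (h1 : p₁ ∉ range c) (h2 : p₂ ∉ range c) (hq : q ∉ range c)
    (h12 : p₂ ∉ connectedComponentIn (range c)ᶜ p₁) 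
    (h1q : q ∉ connectedComponentIn (range c)ᶜ p₁) :
    q ∈ connectedComponentIn (range c)ᶜ p₂ := by
  by_contra h2q
  have hK := hc.isClosed_range
  have hqne : ∀ p ∉ range c, q ∉ connectedComponentIn (range c)ᶜ p → p ≠ q := by
    rintro p hp hqp rfl
    exact hqp (mem_connectedComponentIn hp)
  have hcont : ContinuousOn (sphereChart q) (range c) :=
    (continuousOn_sphereChart q).mono (subset_compl_singleton_iff.2 hq)
  have hne : ∀ p ∉ range c, q ∉ connectedComponentIn (range c)ᶜ p → ∀ x ∈ range c,
      sphereChart q x - sphereChart q p ≠ 0 := by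
    intro p hp hqp x hx h
    have := injOn_sphereChart (subset_compl_singleton_iff.2 hq hx) (hqne p hp hqp)
      (sub_eq_zero.1 h)
    exact hp (this ▸ hx)
  -- an exponent belonging to a component not containing `q` vanishes
  have key : ∀ p p' : ↥Sphere2, p ∉ range c → p' ∉ range c →
      q ∉ connectedComponentIn (range c)ᶜ p → q ∉ connectedComponentIn (range c)ᶜ p' →
      p' ∉ connectedComponentIn (range c)ᶜ p → ∀ m n : ℤ,
      HasLogOn (fun x => (sphereChart q x - sphereChart q p) ^ m *
        (sphereChart q x - sphereChart q p') ^ n) (range c) → m = 0 := by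
    intro p p' hp hp' hqp hqp' hpp m n hlog
    set O := connectedComponentIn (range c)ᶜ p with hO
    have hqc : q ∉ closure O := fun h => hqp (closure_connectedComponentIn_inter ⟨h, hq⟩)
    have hsc := continuous_sphereChart_symm q
    have hp'c : sphereChart q p' ∉ (sphereChart q).symm ⁻¹' O ∪ (sphereChart q).symm ⁻¹' range c := by
      rw [← preimage_union, mem_preimage, sphereChart_left_inv (hqne p' hp' hqp')]
      exact not_or.2 ⟨hpp, hp'⟩
    have hu0 : ∀ z ∈ (sphereChart q).symm ⁻¹' O ∪ (sphereChart q).symm ⁻¹' range c,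
        z - sphereChart q p' ≠ 0 := fun z hz h => hp'c (sub_eq_zero.1 h ▸ hz)
    refine eq_zero_of_hasLogOn_zpow_mul (K := (sphereChart q).symm ⁻¹' range c)
      (O := (sphereChart q).symm ⁻¹' O) (p := sphereChart q p)
      (u := fun z => (z - sphereChart q p') ^ n) (hK.preimage hsc)
      (hK.isOpen_compl.connectedComponentIn.preimage hsc) ?_ ?_ ?_ ?_ ?_ ?_
    · refine (isCompact_sphereChart_image isClosed_closure hqc).isBounded.subset ?_
      rw [sphereChart_image_eq hqc]
      exact preimage_mono subset_closure
    · exact fun z hz => frontier_connectedComponentIn_subset hK (hsc.frontier_preimage_subset O hz)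
    · rw [mem_preimage, sphereChart_left_inv (hqne p hp hqp)]
      exact mem_connectedComponentIn hp
    · exact ContinuousOn.zpow₀ (by fun_prop) n fun z hz => Or.inl (hu0 z hz)
    · exact fun z hz => zpow_ne_zero _ (hu0 z hz)
    · refine ((hlog.comp hsc.continuousOn (mapsTo_preimage _ _)).mono inter_subset_left).congr ?_
      intro z _
      simp
  obtain ⟨m, n, hmn, hlog⟩ := hc.exists_hasLogOn_zpow_mul
    (f := fun x => sphereChart q x - sphereChart q p₁)
    (g := fun x => sphereChart q x - sphereChart q p₂)
    (by fun_prop) (hne p₁ h1 h1q) (by fun_prop) (hne p₂ h2 h2q)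
  have h21 : p₁ ∉ connectedComponentIn (range c)ᶜ p₂ := fun h => h12 (by
    rw [← connectedComponentIn_eq h]
    exact mem_connectedComponentIn h2)
  have hm := key p₁ p₂ h1 h2 h1q h2q h12 m n hlog
  have hn := key p₂ p₁ h2 h1 h2q h1q h21 n m (hlog.congr fun x _ => mul_comm _ _)
  exact hmn.elim (fun h => h hm) fun h => h hn

/-- Every complementary component of a Jordan curve has the whole curve as its frontier. -/
lemma frontier_connectedComponentIn (hc : IsJordanParam c) {p : ↥Sphere2} (hp : p ∉ range c) :
    frontier (connectedComponentIn (range c)ᶜ p) = range c := by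
  have hK := hc.isClosed_range
  set O := connectedComponentIn (range c)ᶜ p with hO
  have hOo : IsOpen O := hK.isOpen_compl.connectedComponentIn
  refine Subset.antisymm (frontier_connectedComponentIn_subset hK) ?_
  rintro _ ⟨s, rfl⟩
  rw [hOo.frontier_eq]
  refine ⟨?_, fun h => connectedComponentIn_subset _ _ h ⟨s, rfl⟩⟩
  by_contra hs
  obtain ⟨δ, hδ, hb⟩ := Metric.isOpen_iff.1
    (isClosed_closure.isOpen_compl.preimage hc.continuous) s hs
  set η := min (δ / 2) (1 / 4) with hη
  have hη0 : 0 < η := by positivity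
  have hη1 : η ≤ 1 / 4 := min_le_right _ _
  have hη2 : η < δ := (min_le_left _ _).trans_lt (by linarith)
  have hacyc := hc.logAcyclic (a := s + η) (b := s - η + 1) (by linarith)
  set K := c '' Icc (s + η) (s - η + 1) with hKdef
  have hKc : IsClosed K := hc.isClosed_image_Icc _ _
  have hKr : K ⊆ range c := image_subset_range _ _
  have hfr : closure O ∩ Kᶜ ⊆ O := by
    rintro x ⟨hx, hxK⟩
    by_cases hxr : x ∈ range c
    · exfalso
      obtain ⟨t, ht, rfl⟩ := hc.exists_mem_Ico (s - η) hxr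
      refine hb (a := t) ?_ hx
      have : t < s + η := by
        by_contra! h
        exact hxK ⟨t, ⟨h, by linarith [ht.2]⟩, rfl⟩
      rw [mem_ball, Real.dist_eq, abs_lt]
      constructor <;> linarith [ht.1]
    · exact closure_connectedComponentIn_inter ⟨hx, hxr⟩
  have hsub : Kᶜ ⊆ O := by
    refine (hacyc.isPreconnected_compl hKc).subset_left_of_subset_union hOo
      isClosed_closure.isOpen_compl (v := (closure O)ᶜ) ?_ ?_ ?_
    · exact disjoint_compl_right.mono_left subset_closure
    · intro x hx
      by_cases h : x ∈ closure O
      · exact Or.inl (hfr ⟨h, hx⟩)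
      · exact Or.inr h
    · exact ⟨p, fun h => hp (hKr h), mem_connectedComponentIn hp⟩
  refine hc.not_isPreconnected_compl ?_
  have : (range c)ᶜ = O := Subset.antisymm ((compl_subset_compl.2 hKr).trans hsub)
    (connectedComponentIn_subset _ _)
  rw [this]
  exact isPreconnected_connectedComponentIn

/-- The Jordan curve theorem. -/
theorem exists_components (hc : IsJordanParam c) : ∃ V₁ V₂ : Set ↥Sphere2,
    IsOpen V₁ ∧ IsOpen V₂ ∧ IsConnected V₁ ∧ IsConnected V₂ ∧ Disjoint V₁ V₂ ∧
    V₁ ∪ V₂ = (range c)ᶜ ∧ frontier V₁ = range c ∧ frontier V₂ = range c := by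
  have hK := hc.isClosed_range
  obtain ⟨p, hp⟩ := (ne_univ_iff_exists_notMem _).1 hc.range_ne_univ
  obtain ⟨q, hq, hpq⟩ : ∃ q ∉ range c, q ∉ connectedComponentIn (range c)ᶜ p := by
    by_contra! h
    refine hc.not_isPreconnected_compl ?_
    rw [show (range c)ᶜ = connectedComponentIn (range c)ᶜ p from
      Subset.antisymm (fun x hx => h x hx) (connectedComponentIn_subset _ _)]
    exact isPreconnected_connectedComponentIn
  refine ⟨connectedComponentIn (range c)ᶜ p, connectedComponentIn (range c)ᶜ q,
    hK.isOpen_compl.connectedComponentIn, hK.isOpen_compl.connectedComponentIn,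
    isConnected_connectedComponentIn_iff.2 hp, isConnected_connectedComponentIn_iff.2 hq, ?_, ?_,
    hc.frontier_connectedComponentIn hp, hc.frontier_connectedComponentIn hq⟩
  · rw [Set.disjoint_left]
    intro x hx hx'
    refine hpq ?_
    rw [connectedComponentIn_eq hx, ← connectedComponentIn_eq hx']
    exact mem_connectedComponentIn hq
  · refine Subset.antisymm (union_subset (connectedComponentIn_subset _ _)
      (connectedComponentIn_subset _ _)) fun x hx => ?_
    by_cases h : x ∈ connectedComponentIn (range c)ᶜ p
    · exact Or.inl h
    · exact Or.inr (hc.mem_connectedComponentIn_of_three hp hq hx hpq h)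

end

end IsJordanParam

/-- A set homeomorphic to the unit circle. -/
abbrev IsJordanCurve {X : Type*} [TopologicalSpace X] (J : Set X) : Prop := Nonempty (↥J ≃ₜ ↥UnitCircle)

lemma Topology.IsEmbedding.isJordanCurve_image {X Y : Type*} [TopologicalSpace X] [TopologicalSpace Y]
    {f : X → Y} (hf : IsEmbedding f) {J : Set X} : IsJordanCurve (f '' J) ↔ IsJordanCurve J :=
  ⟨fun ⟨e⟩ => ⟨(hf.homeomorphImage J).trans e⟩, fun ⟨e⟩ => ⟨(hf.homeomorphImage J).symm.trans e⟩⟩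

lemma isJordanCurve_preimage_val {X : Type*} [TopologicalSpace X] {S J : Set X} (h : J ⊆ S) :
    IsJordanCurve (Subtype.val ⁻¹' J : Set ↥S) ↔ IsJordanCurve J := by
  rw [← IsEmbedding.subtypeVal.isJordanCurve_image, Subtype.image_preimage_val, inter_eq_right.2 h]

lemma IsJordanCurve.exists_isJordanParam {X : Type*} [TopologicalSpace X] {J : Set X}
    (h : IsJordanCurve J) : ∃ c : ℝ → X, IsJordanParam c ∧ range c = J :=
  h.elim fun e => _root_.exists_isJordanParam e

/-- The Jordan curve theorem for sets homeomorphic to the circle. -/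
theorem IsJordanCurve.exists_components {J : Set ↥Sphere2} (h : IsJordanCurve J) : ∃ V₁ V₂ : Set ↥Sphere2,
    IsOpen V₁ ∧ IsOpen V₂ ∧ IsConnected V₁ ∧ IsConnected V₂ ∧ Disjoint V₁ V₂ ∧
    V₁ ∪ V₂ = Jᶜ ∧ frontier V₁ = J ∧ frontier V₂ = J := by
  obtain ⟨c, hc, rfl⟩ := h.exists_isJordanParam
  exact hc.exists_components

/-- The boundary curve of a closed disk with parametrization `e`. -/
def diskBoundary {E : Set ↥Sphere2} (e : ↥E ≃ₜ ↥UnitDisk2) : Set ↥Sphere2 :=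
  Subtype.val '' (e ⁻¹' (Subtype.val ⁻¹' UnitCircle))

lemma isCompact_of_homeomorph_unitDisk {E : Set ↥Sphere2} (e : ↥E ≃ₜ ↥UnitDisk2) :
    IsCompact E := by
  have : CompactSpace ↥UnitDisk2 := isCompact_iff_compactSpace.1 (isCompact_closedBall _ _)
  have := e.symm.compactSpace
  exact isCompact_iff_compactSpace.2 this

section

variable {E : Set ↥Sphere2} (e : ↥E ≃ₜ ↥UnitDisk2)

lemma diskBoundary_subset : diskBoundary e ⊆ E := by
  rintro _ ⟨x, -, rfl⟩
  exact x.2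

lemma isJordanCurve_diskBoundary : IsJordanCurve (diskBoundary e) := by
  rw [diskBoundary, IsEmbedding.subtypeVal.isJordanCurve_image, ← e.isEmbedding.isJordanCurve_image,
    image_preimage_eq _ e.surjective, isJordanCurve_preimage_val sphere_subset_closedBall]
  exact ⟨Homeomorph.refl _⟩

lemma diskBoundary_spec : IsConnected Eᶜ ∧ IsConnected (interior E) ∧
    interior E = E \ diskBoundary e ∧ frontier (interior E) = diskBoundary e ∧
    frontier Eᶜ = diskBoundary e ∧ closure (interior E) = E := by
  obtain ⟨V₁, V₂, o1, o2, c1, c2, hd, hu, f1, f2⟩ := (isJordanCurve_diskBoundary e).exists_components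
  set J := diskBoundary e with hJ
  have hEc := isCompact_of_homeomorph_unitDisk e
  have hJE : J ⊆ E := diskBoundary_subset e
  have hB : E \ J = Subtype.val '' (e ⁻¹' (Subtype.val ⁻¹' ball 0 1)) := by
    ext x
    constructor
    · rintro ⟨hx, hxJ⟩
      refine ⟨⟨x, hx⟩, ?_, rfl⟩
      have h1 : ‖(e ⟨x, hx⟩ : EuclideanSpace ℝ (Fin 2))‖ ≤ 1 := by
        exact mem_closedBall_zero_iff.1 (e ⟨x, hx⟩).2
      have h2 : ‖(e ⟨x, hx⟩ : EuclideanSpace ℝ (Fin 2))‖ ≠ 1 := fun h =>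
        hxJ ⟨⟨x, hx⟩, by simpa using h, rfl⟩
      simpa using lt_of_le_of_ne h1 h2
    · rintro ⟨x, hx, rfl⟩
      refine ⟨x.2, ?_⟩
      rintro ⟨y, hy, hxy⟩
      rw [Subtype.ext hxy] at hy
      simp only [mem_preimage, mem_sphere_iff_norm, sub_zero, mem_ball_zero_iff] at hx hy
      exact hx.ne hy
  have hBc : IsPreconnected (E \ J) := by
    rw [hB]
    refine IsPreconnected.image ?_ _ continuous_subtype_val.continuousOn
    rw [e.isPreconnected_preimage]
    refine (IsInducing.subtypeVal.isPreconnected_image).1 ?_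
    rw [Subtype.image_preimage_val, inter_eq_right.2 ball_subset_closedBall]
    exact (convex_ball _ _).isPreconnected
  have hBn : (E \ J).Nonempty := by
    rw [hB]
    exact ⟨_, e.symm ⟨0, by simp⟩, by simp, rfl⟩
  have hac : LogAcyclic E := by
    classical
    let ψ : EuclideanSpace ℝ (Fin 2) → ↥Sphere2 := fun x =>
      if hx : x ∈ UnitDisk2 then e.symm ⟨x, hx⟩ else e.symm ⟨0, by simp⟩
    have hψ : ∀ x (hx : x ∈ UnitDisk2), ψ x = e.symm ⟨x, hx⟩ := fun x hx => dif_pos hx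
    have him : ψ '' UnitDisk2 = E := by
      apply Subset.antisymm
      · rintro _ ⟨x, hx, rfl⟩
        rw [hψ x hx]
        exact (e.symm _).2
      · intro x hx
        exact ⟨e ⟨x, hx⟩, (e ⟨x, hx⟩).2, by rw [hψ _ (e ⟨x, hx⟩).2]; simp⟩
    rw [← him]
    refine LogAcyclic.image_of_convex (convex_closedBall _ _) (isCompact_closedBall _ _) ?_ ?_
    · rw [continuousOn_iff_continuous_domRestrict]
      have : Continuous fun x : ↥UnitDisk2 => (e.symm x : ↥Sphere2) := by fun_prop
      convert this using 1
      ext1 x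
      exact hψ x x.2
    · intro x hx y hy hxy
      rw [hψ x hx, hψ y hy] at hxy
      exact congrArg Subtype.val (e.symm.injective (Subtype.ext hxy))
  have hEpre : IsPreconnected Eᶜ := hac.isPreconnected_compl hEc.isClosed
  -- after renaming the components, the open disk lies in the first one
  have main : ∀ V₁ V₂ : Set ↥Sphere2, IsOpen V₁ → IsOpen V₂ → IsConnected V₁ → IsConnected V₂ →
      Disjoint V₁ V₂ → V₁ ∪ V₂ = Jᶜ → ((E \ J) ∩ V₁).Nonempty → E \ J = V₁ ∧ Eᶜ = V₂ := by
    intro V₁ V₂ o1 o2 c1 c2 hd hu hne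
    have hsub : E \ J ⊆ V₁ := hBc.subset_left_of_subset_union o1 o2 hd
      (fun x hx => by rw [hu]; exact hx.2) hne
    obtain ⟨y, hy⟩ := c2.nonempty
    have hyE : y ∈ Eᶜ := by
      intro hyE
      have hyJ : y ∉ J := (hu.subset (Or.inr hy) : y ∈ Jᶜ)
      exact Set.disjoint_left.1 hd (hsub ⟨hyE, hyJ⟩) hy
    have hsub2 : Eᶜ ⊆ V₂ := hEpre.subset_left_of_subset_union o2 o1 hd.symm
      (fun x hx => by rw [union_comm, hu]; exact fun h => hx (hJE h)) ⟨y, hyE, hy⟩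
    refine ⟨hsub.antisymm fun x hx => ?_, hsub2.antisymm fun x hx => ?_⟩
    · refine ⟨?_, (hu.subset (Or.inl hx) : x ∈ Jᶜ)⟩
      by_contra h
      exact Set.disjoint_left.1 hd hx (hsub2 h)
    · intro h
      exact Set.disjoint_left.1 hd (hsub ⟨h, (hu.subset (Or.inr hx) : x ∈ Jᶜ)⟩) hx
  have fin : ∀ V₁ V₂ : Set ↥Sphere2, IsOpen V₁ → IsOpen V₂ → IsConnected V₁ → IsConnected V₂ →
      E \ J = V₁ → Eᶜ = V₂ → frontier V₁ = J → frontier V₂ = J → IsConnected Eᶜ ∧ IsConnected (interior E) ∧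
    interior E = E \ J ∧ frontier (interior E) = J ∧
    frontier Eᶜ = J ∧ closure (interior E) = E := by
    intro V₁ V₂ o1 o2 c1 c2 h1 h2 f1 f2
    have hinterior : interior E = E \ J := by
      apply Subset.antisymm
      · intro x hx
        refine ⟨interior_subset hx, fun hxJ => ?_⟩
        rw [← f2, ← h2, frontier_compl] at hxJ
        exact hxJ.2 hx
      · exact interior_maximal sdiff_subset (h1 ▸ o1)
    refine ⟨h2 ▸ c2, by rwa [hinterior, h1], hinterior, by rw [hinterior, h1, f1], by rw [h2, f2], ?_⟩
    rw [hinterior, h1, closure_eq_self_union_frontier, f1, ← h1, sdiff_union_of_subset hJE]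
  obtain ⟨x, hx⟩ := hBn
  rcases (hu.superset hx.2 : x ∈ V₁ ∪ V₂) with h | h
  · obtain ⟨h1, h2⟩ := main V₁ V₂ o1 o2 c1 c2 hd hu ⟨x, hx, h⟩
    exact fin V₁ V₂ o1 o2 c1 c2 h1 h2 f1 f2
  · obtain ⟨h1, h2⟩ := main V₂ V₁ o2 o1 c2 c1 hd.symm (by rw [union_comm, hu]) ⟨x, hx, h⟩
    exact fin V₂ V₁ o2 o1 c2 c1 h1 h2 f2 f1

end

lemma differentiableOn_of_exp_eq {W : Set ℂ} (hW : IsOpen W) {L h : ℂ → ℂ}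
    (hL : ContinuousOn L W) (hh : DifferentiableOn ℂ h W)
    (he : ∀ z ∈ W, Complex.exp (L z) = h z) : DifferentiableOn ℂ L W := by
  intro z₀ hz₀
  have hne : h z₀ ≠ 0 := he z₀ hz₀ ▸ Complex.exp_ne_zero _
  have hd : DifferentiableAt ℂ (fun z => Complex.log (h z / h z₀) + L z₀) z₀ := by
    refine DifferentiableAt.add_const _ (DifferentiableAt.clog ?_ ?_)
    · exact ((hh z₀ hz₀).differentiableAt (hW.mem_nhds hz₀)).div_const _
    · simp [div_self hne]
  refine (hd.congr_of_eventuallyEq ?_).differentiableWithinAt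
  have hc : ContinuousAt L z₀ := hL.continuousAt (hW.mem_nhds hz₀)
  filter_upwards [hW.mem_nhds hz₀, hc (ball_mem_nhds _ Real.pi_pos)] with z hz hzb
  rw [mem_preimage, mem_ball, dist_eq_norm] at hzb
  have him := abs_lt.1 ((Complex.abs_im_le_norm _).trans_lt hzb)
  rw [← he z hz, ← he z₀ hz₀, ← Complex.exp_sub, Complex.log_exp him.1 him.2.le]
  ring

/-- A local Lipschitz estimate for bounded holomorphic functions. -/
lemma dist_le_of_mapsTo_ball {g : ℂ → ℂ} {z x : ℂ} {r : ℝ}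
    (hg : DifferentiableOn ℂ g (ball z r)) (hm : MapsTo g (ball z r) (ball 0 1))
    (hx : x ∈ ball z r) : dist (g x) (g z) ≤ 2 / r * dist x z := by
  refine Complex.dist_le_div_mul_dist_of_mapsTo_ball (R₂ := 2) hg (fun y hy => ?_) hx
  have h1 := hm hy
  have h2 := hm (mem_ball_self (pos_of_mem_ball hx))
  rw [mem_closedBall]
  rw [mem_ball] at h1 h2
  have := dist_triangle_right (g y) (g z) 0
  linarith

/-- Montel's theorem along an ultrafilter. -/
lemma exists_tendstoLocallyUniformlyOn_of_mapsTo_ball {W : Set ℂ} (hW : IsOpen W) {g : ℕ → ℂ → ℂ}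
    (hg : ∀ n, DifferentiableOn ℂ (g n) W) (hm : ∀ n, MapsTo (g n) W (ball 0 1))
    (𝒰 : Ultrafilter ℕ) : ∃ f : ℂ → ℂ, TendstoLocallyUniformlyOn g f 𝒰 W ∧
      MapsTo f W (closedBall 0 1) := by
  have hpt : ∀ z, ∃ w, z ∈ W → w ∈ closedBall (0 : ℂ) 1 ∧ Tendsto (fun n => g n z) 𝒰 (𝓝 w) := by
    intro z
    by_cases hz : z ∈ W
    · obtain ⟨w, hw, hl⟩ := (isCompact_closedBall (0 : ℂ) 1).ultrafilter_le_nhds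
        (𝒰.map fun n => g n z) (by
          rw [le_principal_iff]
          exact Filter.mem_map.2 (Filter.univ_mem' fun n => ball_subset_closedBall (hm n hz)))
      exact ⟨w, fun _ => ⟨hw, hl⟩⟩
    · exact ⟨0, fun h => absurd h hz⟩
  choose f hf using hpt
  refine ⟨f, ?_, fun z hz => (hf z hz).1⟩
  rw [Metric.tendstoLocallyUniformlyOn_iff]
  intro ε hε z hz
  obtain ⟨r, hr, hb⟩ := Metric.isOpen_iff.1 hW z hz
  have hlip : ∀ n, ∀ x ∈ ball z r, dist (g n x) (g n z) ≤ 2 / r * dist x z := fun n x hx =>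
    dist_le_of_mapsTo_ball ((hg n).mono hb) ((hm n).mono_left hb) hx
  have hlipf : ∀ x ∈ ball z r, dist (f x) (f z) ≤ 2 / r * dist x z := fun x hx =>
    le_of_tendsto ((hf x (hb hx)).2.dist (hf z hz).2) (Eventually.of_forall fun n => hlip n x hx)
  have hδ : 0 < min r (ε * r / 8) := by positivity
  refine ⟨ball z (min r (ε * r / 8)), mem_nhdsWithin_of_mem_nhds (ball_mem_nhds z hδ), ?_⟩
  filter_upwards [Metric.tendsto_nhds.1 (hf z hz).2 (ε / 4) (by positivity)] with n hn y hy
  have hy1 : y ∈ ball z r := ball_subset_ball (min_le_left _ _) hy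
  have hy2 : dist y z < ε * r / 8 := (mem_ball.1 hy).trans_le (min_le_right _ _)
  have hy3 : 2 / r * dist y z ≤ ε / 4 := by
    rw [div_mul_eq_mul_div, div_le_iff₀ hr]
    linarith
  have h1 := hlip n y hy1
  have h2 := hlipf y hy1
  have h3 := dist_triangle4 (f y) (f z) (g n z) (g n y)
  rw [dist_comm (f z), dist_comm (g n z) (g n y)] at h3
  linarith

/-- Hurwitz's theorem on limits of injective holomorphic functions. -/
lemma injOn_of_tendstoLocallyUniformlyOn {W : Set ℂ} (hW : IsOpen W) (hWc : IsPreconnected W)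
    {g : ℕ → ℂ → ℂ} {f : ℂ → ℂ} {l : Filter ℕ} [l.NeBot]
    (hg : ∀ n, DifferentiableOn ℂ (g n) W) (hi : ∀ n, InjOn (g n) W)
    (hlim : TendstoLocallyUniformlyOn g f l W) {z₀ : ℂ} (hz₀ : z₀ ∈ W) (hd : deriv f z₀ ≠ 0) :
    InjOn f W := by
  have hf : DifferentiableOn ℂ f W := hlim.differentiableOn (Eventually.of_forall hg) hW
  intro a ha b hb hab
  by_contra hne
  have hfa : AnalyticOnNhd ℂ f W := hf.analyticOnNhd hW
  have hiso : ∀ᶠ z in 𝓝[≠] a, f z ≠ f a := by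
    have hana : AnalyticAt ℂ (fun z => f z - f a) a := (hfa a ha).sub analyticAt_const
    rcases hana.eventually_eq_zero_or_eventually_ne_zero with h | h
    · exfalso
      have hh : EqOn f (fun _ => f a) W :=
        hfa.eqOn_of_preconnected_of_eventuallyEq analyticOnNhd_const hWc ha (by
          filter_upwards [h] with z hz
          exact sub_eq_zero.1 hz)
      apply hd
      rw [(hh.eventuallyEq_of_mem (hW.mem_nhds hz₀)).deriv_eq]
      simp
    · filter_upwards [h] with z hz
      exact sub_ne_zero.1 hz
  obtain ⟨r, hr, hrW, hrf⟩ : ∃ r > 0, closedBall a r ⊆ W \ {b} ∧ ∀ z ∈ sphere a r, f z ≠ f a := by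
    rw [eventually_nhdsWithin_iff, Metric.eventually_nhds_iff] at hiso
    obtain ⟨ε, hε, h⟩ := hiso
    obtain ⟨δ, hδ, h'⟩ := Metric.isOpen_iff.1 (hW.sdiff isClosed_singleton) a ⟨ha, hne⟩
    refine ⟨min ε δ / 2, by positivity, ?_, ?_⟩
    · refine (closedBall_subset_ball ?_).trans h'
      have := min_le_right ε δ
      have : 0 < min ε δ := by positivity
      linarith
    · intro z hz
      have h1 := min_le_left ε δ
      have h2 : 0 < min ε δ := by positivity
      rw [mem_sphere] at hz
      refine h (by rw [hz]; linarith) fun hza => ?_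
      rw [hza, dist_self] at hz
      linarith
  have hsub : sphere a r ⊆ W := fun z hz => (hrW (sphere_subset_closedBall hz)).1
  obtain ⟨ε, hε, hεf⟩ : ∃ ε > 0, ∀ z ∈ sphere a r, ε ≤ dist (f z) (f a) := by
    obtain ⟨z, hz, hmin⟩ := (isCompact_sphere a r).exists_isMinOn
      (NormedSpace.sphere_nonempty.2 hr.le)
      (f := fun z => dist (f z) (f a)) (by have := hf.continuousOn.mono hsub; fun_prop)
    exact ⟨_, dist_pos.2 (hrf z hz), fun y hy => hmin hy⟩
  have hK : IsCompact (closedBall a r ∪ {b}) := (isCompact_closedBall a r).union isCompact_singleton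
  have hKW : closedBall a r ∪ {b} ⊆ W :=
    union_subset (fun z hz => (hrW hz).1) (singleton_subset_iff.2 hb)
  have hu := (tendstoLocallyUniformlyOn_iff_forall_isCompact hW).1 hlim _ hKW hK
  obtain ⟨n, hn⟩ := (Metric.tendstoUniformlyOn_iff.1 hu (ε / 8) (by positivity)).exists
  have hna := hn a (Or.inl (mem_closedBall_self hr.le))
  have hnb := hn b (Or.inr rfl)
  have himg : ball (g n a) (ε / 2 / 2) ⊆ g n '' closedBall a r := by
    refine DiffContOnCl.ball_subset_image_closedBall (DifferentiableOn.diffContOnCl ?_) hr ?_ ?_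
    · rw [closure_ball a hr.ne']
      exact (hg n).mono fun z hz => (hrW hz).1
    · intro z hz
      have h1 := hn z (Or.inl (sphere_subset_closedBall hz))
      have h2 := hεf z hz
      rw [← dist_eq_norm]
      have h3 := dist_triangle4 (f z) (g n z) (g n a) (f a)
      rw [dist_comm (g n a)] at h3
      linarith
    · refine Eventually.frequently (f := 𝓝[≠] a) ?_ |>.filter_mono nhdsWithin_le_nhds
      filter_upwards [mem_nhdsWithin_of_mem_nhds (hW.mem_nhds ha), self_mem_nhdsWithin] with z hz hza h
      exact hza (hi n hz ha h)
  obtain ⟨z, hz, hzb⟩ := himg (show g n b ∈ ball (g n a) (ε / 2 / 2) by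
    rw [mem_ball]
    have h3 := dist_triangle4 (g n b) (f b) (f a) (g n a)
    have h4 : dist (f b) (f a) = 0 := by rw [hab, dist_self]
    rw [dist_comm (g n b) (f b), h4] at h3
    linarith)
  exact (hrW hz).2 (hi n (hrW hz).1 hb hzb)

/-- The disk automorphism exchanging `c` and `0` up to sign. -/
noncomputable def blaschke (c w : ℂ) : ℂ := (w - c) / (1 - (starRingEnd ℂ) c * w)

lemma one_sub_conj_mul_ne_zero {c w : ℂ} (hc : ‖c‖ < 1) (hw : ‖w‖ < 1) :
    1 - (starRingEnd ℂ) c * w ≠ 0 := by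
  intro h
  have : ‖(starRingEnd ℂ) c * w‖ = 1 := by rw [← sub_eq_zero.1 h, norm_one]
  rw [norm_mul, RCLike.norm_conj] at this
  nlinarith [norm_nonneg c, norm_nonneg w]

lemma norm_blaschke_lt {c w : ℂ} (hc : ‖c‖ < 1) (hw : ‖w‖ < 1) : ‖blaschke c w‖ < 1 := by
  have h0 := one_sub_conj_mul_ne_zero hc hw
  rw [blaschke, norm_div, div_lt_one (norm_pos_iff.2 h0)]
  refine lt_of_pow_lt_pow_left₀ 2 (norm_nonneg _) ?_
  rw [← Complex.normSq_eq_norm_sq, ← Complex.normSq_eq_norm_sq]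
  have h1 : Complex.normSq c < 1 := by
    rw [Complex.normSq_eq_norm_sq]
    nlinarith [norm_nonneg c]
  have h2 : Complex.normSq w < 1 := by
    rw [Complex.normSq_eq_norm_sq]
    nlinarith [norm_nonneg w]
  simp only [Complex.normSq_apply, Complex.sub_re, Complex.sub_im, Complex.mul_re, Complex.mul_im,
    Complex.conj_re, Complex.conj_im, Complex.one_re, Complex.one_im] at *
  nlinarith [mul_pos (sub_pos.2 h1) (sub_pos.2 h2)]

lemma injOn_blaschke {c : ℂ} (hc : ‖c‖ < 1) : InjOn (blaschke c) (ball 0 1) := by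
  intro w hw v hv h
  rw [mem_ball_zero_iff] at hw hv
  have h1 := one_sub_conj_mul_ne_zero hc hw
  have h2 := one_sub_conj_mul_ne_zero hc hv
  rw [blaschke, blaschke, div_eq_div_iff h1 h2] at h
  have h3 : (w - v) * (1 - (starRingEnd ℂ) c * c) = 0 := by linear_combination h
  rcases mul_eq_zero.1 h3 with h4 | h4
  · exact sub_eq_zero.1 h4
  · exact absurd h4 (one_sub_conj_mul_ne_zero hc hc)

lemma hasDerivAt_blaschke {c w : ℂ} (hc : ‖c‖ < 1) (hw : ‖w‖ < 1) :
    HasDerivAt (blaschke c) ((1 - (starRingEnd ℂ) c * c) / (1 - (starRingEnd ℂ) c * w) ^ 2) w := by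
  have h1 : HasDerivAt (fun w => w - c) 1 w := (hasDerivAt_id w).sub_const c
  have h2 : HasDerivAt (fun w => 1 - (starRingEnd ℂ) c * w) (-((starRingEnd ℂ) c * 1)) w :=
    ((hasDerivAt_id w).const_mul _).const_sub 1
  refine (h1.div h2 (one_sub_conj_mul_ne_zero hc hw)).congr_deriv ?_
  congr 1
  ring

/-- The Riemann mapping theorem for bounded domains on which omitted values have logarithms. -/
theorem exists_bijOn_ball {W : Set ℂ} (hW : IsOpen W) (hWc : IsConnected W)
    (hWb : Bornology.IsBounded W)
    (hlog : ∀ f : ℂ → ℂ, DifferentiableOn ℂ f W → InjOn f W → ∀ c ∉ f '' W,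
      HasLogOn (fun z => f z - c) W) :
    ∃ f : ℂ → ℂ, DifferentiableOn ℂ f W ∧ BijOn f W (ball 0 1) := by
  obtain ⟨z₀, hz₀⟩ := hWc.nonempty
  let Fam : Set (ℂ → ℂ) :=
    {g | DifferentiableOn ℂ g W ∧ InjOn g W ∧ MapsTo g W (ball 0 1) ∧ g z₀ = 0}
  obtain ⟨R, hR⟩ := hWb.subset_ball z₀
  have hR0 : 0 < R := pos_of_mem_ball (hR hz₀)
  have hmem : (fun z => (z - z₀) / R) ∈ Fam := by
    refine ⟨by fun_prop, fun z _ w _ h => ?_, fun z hz => ?_, by simp⟩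
    · have hRc : (R : ℂ) ≠ 0 := by exact_mod_cast hR0.ne'
      simpa [div_left_inj' hRc] using h
    · have := hR hz
      rw [mem_ball, dist_eq_norm] at this
      rw [mem_ball_zero_iff, norm_div, Complex.norm_real, Real.norm_of_nonneg hR0.le,
        div_lt_one hR0]
      exact this
  let A : Set ℝ := (fun g => ‖deriv g z₀‖) '' Fam
  obtain ⟨r, hr, hrW⟩ := Metric.isOpen_iff.1 hW z₀ hz₀
  have hA : BddAbove A := by
    refine ⟨2 / r, ?_⟩
    rintro _ ⟨g, hg, rfl⟩
    refine Complex.norm_deriv_le_div_of_mapsTo_ball (R₂ := 2) (hg.1.mono hrW) (fun y hy => ?_) hr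
    have := hg.2.2.1 (hrW hy)
    rw [hg.2.2.2]
    exact ball_subset_closedBall (ball_subset_ball (by norm_num) this)
  have hAn : A.Nonempty := ⟨_, _, hmem, rfl⟩
  obtain ⟨u, -, hu, huA⟩ := exists_seq_tendsto_sSup hAn hA
  choose g hg hgu using huA
  obtain ⟨f, hlim, hfm⟩ := exists_tendstoLocallyUniformlyOn_of_mapsTo_ball hW
    (fun n => (hg n).1) (fun n => (hg n).2.2.1) (hyperfilter ℕ)
  have hle : ((hyperfilter ℕ : Ultrafilter ℕ) : Filter ℕ) ≤ atTop := by
    rw [← Nat.cofinite_eq_atTop]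
    exact hyperfilter_le_cofinite
  have hf : DifferentiableOn ℂ f W :=
    hlim.differentiableOn (Eventually.of_forall fun n => (hg n).1) hW
  have hder : ‖deriv f z₀‖ = sSup A := by
    have h1 := (hlim.deriv (Eventually.of_forall fun n => (hg n).1) hW).tendsto_at hz₀
    refine tendsto_nhds_unique h1.norm ?_
    refine (hu.mono_left hle).congr fun n => ?_
    exact (hgu n).symm
  have hpos : 0 < sSup A := by
    refine lt_of_lt_of_le ?_ (le_csSup hA ⟨_, hmem, rfl⟩)
    simp [hR0.ne']
  have hd : deriv f z₀ ≠ 0 := norm_pos_iff.1 (hder ▸ hpos)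
  have hfi : InjOn f W := injOn_of_tendstoLocallyUniformlyOn hW hWc.isPreconnected
    (fun n => (hg n).1) (fun n => (hg n).2.1) hlim hz₀ hd
  have hf0 : f z₀ = 0 := by
    refine tendsto_nhds_unique (hlim.tendsto_at hz₀) ?_
    simp [(hg _).2.2.2]
  have hfo : IsOpen (f '' W) := by
    rcases (hf.analyticOnNhd hW).is_constant_or_isOpen hWc.isPreconnected with ⟨w, hw⟩ | h
    · exfalso
      apply hd
      have hh : EqOn f (fun _ => w) W := hw
      rw [(hh.eventuallyEq_of_mem (hW.mem_nhds hz₀)).deriv_eq]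
      simp
    · exact h W Subset.rfl hW
  have hfb : MapsTo f W (ball 0 1) := by
    intro z hz
    have : f '' W ⊆ interior (closedBall 0 1) := interior_maximal hfm.image_subset hfo
    rw [interior_closedBall _ one_ne_zero] at this
    exact this ⟨z, hz, rfl⟩
  refine ⟨f, hf, hfb, hfi, fun c hc => ?_⟩
  by_contra hcf
  rw [mem_ball_zero_iff] at hc
  have hc0 : c ≠ 0 := by
    rintro rfl
    exact hcf ⟨z₀, hz₀, hf0⟩
  have hn : ∀ z ∈ W, ‖f z‖ < 1 := fun z hz => mem_ball_zero_iff.1 (hfb hz)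
  let h : ℂ → ℂ := fun z => blaschke c (f z)
  have hh : ∀ z ∈ W, HasDerivAt h ((1 - (starRingEnd ℂ) c * c) /
      (1 - (starRingEnd ℂ) c * f z) ^ 2 * deriv f z) z := fun z hz =>
    (hasDerivAt_blaschke hc (hn z hz)).comp z
      ((hf z hz).differentiableAt (hW.mem_nhds hz)).hasDerivAt
  have hhd : DifferentiableOn ℂ h W := fun z hz => (hh z hz).differentiableAt.differentiableWithinAt
  obtain ⟨L, hLc, hLe⟩ : HasLogOn h W := by
    refine (hlog f hf hfi c hcf).div (HasLogOn.of_norm_sub_one_lt ?_ fun z hz => ?_)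
    · have := hf.continuousOn
      fun_prop
    · have := hn z hz
      simp only [sub_sub_cancel_left, norm_neg, norm_mul, RCLike.norm_conj]
      nlinarith [norm_nonneg c, norm_nonneg (f z)]
  have hLd := differentiableOn_of_exp_eq hW hLc hhd hLe
  let s : ℂ → ℂ := fun z => Complex.exp (L z / 2)
  have hs2 : ∀ z ∈ W, s z ^ 2 = h z := fun z hz => by
    rw [← hLe z hz, ← Complex.exp_nat_mul]
    congr 1
    push_cast
    ring
  have hsd : DifferentiableOn ℂ s W := (hLd.div_const 2).cexp
  have hsn : ∀ z ∈ W, ‖s z‖ < 1 := fun z hz => by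
    have h1 : ‖s z‖ ^ 2 < 1 := by
      rw [← norm_pow, hs2 z hz]
      exact norm_blaschke_lt hc (hn z hz)
    nlinarith [norm_nonneg (s z)]
  set b := s z₀ with hb
  have hbn : ‖b‖ < 1 := hsn z₀ hz₀
  have hb2 : b ^ 2 = -c := by
    rw [hs2 z₀ hz₀]
    simp [h, blaschke, hf0]
  have hbc : ‖b‖ ^ 2 = ‖c‖ := by rw [← norm_pow, hb2, norm_neg]
  have hb0 : 0 < ‖b‖ := by
    rw [norm_pos_iff]
    intro h0
    rw [h0] at hb2
    simp at hb2
    exact hc0 hb2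
  have hnew : (fun z => blaschke b (s z)) ∈ Fam := by
    refine ⟨fun z hz => ?_, ?_, ?_, by simp [blaschke, hb]⟩
    · exact ((hasDerivAt_blaschke hbn (hsn z hz)).differentiableAt.comp z
        ((hsd z hz).differentiableAt (hW.mem_nhds hz))).differentiableWithinAt
    · intro z hz w hw hzw
      have h1 := injOn_blaschke hbn (mem_ball_zero_iff.2 (hsn z hz))
        (mem_ball_zero_iff.2 (hsn w hw)) hzw
      have h2 : h z = h w := by rw [← hs2 z hz, ← hs2 w hw, h1]
      exact hfi hz hw (injOn_blaschke hc (hfb hz) (hfb hw) h2)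
    · exact fun z hz => mem_ball_zero_iff.2 (norm_blaschke_lt hbn (hsn z hz))
  have hsder : HasDerivAt s (deriv s z₀) z₀ :=
    ((hsd z₀ hz₀).differentiableAt (hW.mem_nhds hz₀)).hasDerivAt
  have hs' : 2 * b * deriv s z₀ = (1 - (starRingEnd ℂ) c * c) * deriv f z₀ := by
    have h1 : HasDerivAt (fun z => s z ^ 2) (2 * b * deriv s z₀) z₀ := by
      simpa using hsder.fun_pow 2
    have h2 : HasDerivAt (fun z => s z ^ 2) ((1 - (starRingEnd ℂ) c * c) * deriv f z₀) z₀ := by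
      refine ((hh z₀ hz₀).congr_of_eventuallyEq ?_).congr_deriv ?_
      · filter_upwards [hW.mem_nhds hz₀] with z hz using hs2 z hz
      · simp [hf0]
    exact h1.unique h2
  have hnd : deriv (fun z => blaschke b (s z)) z₀ =
      (1 - (starRingEnd ℂ) b * b) / (1 - (starRingEnd ℂ) b * b) ^ 2 * deriv s z₀ :=
    (HasDerivAt.comp (h₂ := blaschke b) z₀ (hasDerivAt_blaschke hbn hbn) hsder).deriv
  have hconj : ∀ w : ℂ, ‖w‖ < 1 → ‖1 - (starRingEnd ℂ) w * w‖ = 1 - ‖w‖ ^ 2 := by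
    intro w hw
    rw [mul_comm, Complex.mul_conj, Complex.normSq_eq_norm_sq]
    rw [← Complex.ofReal_one, ← Complex.ofReal_sub, Complex.norm_real, Real.norm_of_nonneg]
    nlinarith [norm_nonneg w]
  have hle' := le_csSup hA ⟨_, hnew, rfl⟩
  simp only [hnd, norm_mul, norm_div, norm_pow, hconj b hbn] at hle'
  have hs'' := congrArg norm hs'
  simp only [norm_mul, hconj c hc, hder, Complex.norm_ofNat] at hs''
  rw [← hbc] at hs''
  have hp : 0 < 1 - ‖b‖ ^ 2 := by nlinarith
  have e1 : (1 - ‖b‖ ^ 2) / (1 - ‖b‖ ^ 2) ^ 2 * ‖deriv s z₀‖ = ‖deriv s z₀‖ / (1 - ‖b‖ ^ 2) := by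
    field_simp
  rw [e1, div_le_iff₀ hp] at hle'
  have h5 : (1 - (‖b‖ ^ 2) ^ 2) * sSup A ≤ 2 * ‖b‖ * (sSup A * (1 - ‖b‖ ^ 2)) := by
    rw [← hs'']
    exact mul_le_mul_of_nonneg_left hle' (by positivity)
  have h6 : 0 < sSup A * (1 - ‖b‖ ^ 2) * (1 - ‖b‖) ^ 2 := by
    have : 0 < 1 - ‖b‖ := by linarith
    positivity
  nlinarith

/-- Logarithms on all compact subsets of a plane domain patch to a logarithm on the domain. -/
lemma HasLogOn.of_forall_isCompact {W : Set ℂ} (hW : IsOpen W) (hWc : IsConnected W) {f : ℂ → ℂ}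
    (h : ∀ Q ⊆ W, IsCompact Q → HasLogOn f Q) : HasLogOn f W := by
  obtain ⟨z₀, hz₀⟩ := hWc.nonempty
  have hpc : IsPathConnected W := hW.isConnected_iff_isPathConnected.1 hWc
  obtain ⟨w₀, hw₀⟩ : ∃ w, Complex.exp w = f z₀ := by
    obtain ⟨g, -, hg⟩ := h {z₀} (singleton_subset_iff.2 hz₀) isCompact_singleton
    exact ⟨g z₀, hg z₀ rfl⟩
  have hnorm : ∀ Q ⊆ W, IsCompact Q → z₀ ∈ Q → ∃ g : ℂ → ℂ, ContinuousOn g Q ∧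
      (∀ x ∈ Q, Complex.exp (g x) = f x) ∧ g z₀ = w₀ := by
    intro Q hQW hQ hzQ
    obtain ⟨g, hg, hge⟩ := h Q hQW hQ
    refine ⟨fun z => g z + (w₀ - g z₀), hg.add continuousOn_const, fun x hx => ?_, by ring⟩
    rw [Complex.exp_add, Complex.exp_sub, hw₀, hge z₀ hzQ, hge x hx, div_self, mul_one]
    rw [← hw₀]
    exact Complex.exp_ne_zero _
  have huniq : ∀ Q, IsPreconnected Q → z₀ ∈ Q → ∀ g₁ g₂ : ℂ → ℂ, ContinuousOn g₁ Q →
      ContinuousOn g₂ Q → (∀ x ∈ Q, Complex.exp (g₁ x) = f x) →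
      (∀ x ∈ Q, Complex.exp (g₂ x) = f x) → g₁ z₀ = w₀ → g₂ z₀ = w₀ → EqOn g₁ g₂ Q := by
    intro Q hQ hzQ g₁ g₂ h₁ h₂ e₁ e₂ n₁ n₂
    obtain ⟨n, hn⟩ := exists_int_of_exp_eq hQ h₁ h₂ fun x hx => (e₁ x hx).trans (e₂ x hx).symm
    have h0 := hn z₀ hzQ
    rw [n₁, n₂, left_eq_add] at h0
    intro x hx
    rw [hn x hx, h0, add_zero]
  have hex : ∀ x, ∃ (Q : Set ℂ) (g : ℂ → ℂ), x ∈ W → Q ⊆ W ∧ IsCompact Q ∧ IsPreconnected Q ∧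
      z₀ ∈ Q ∧ x ∈ Q ∧ ContinuousOn g Q ∧ (∀ x ∈ Q, Complex.exp (g x) = f x) ∧ g z₀ = w₀ := by
    intro x
    by_cases hx : x ∈ W
    · obtain ⟨γ, hγ⟩ := hpc.joinedIn z₀ hz₀ x hx
      have hzQ : z₀ ∈ range γ := ⟨0, γ.source⟩
      have hQW : range γ ⊆ W := range_subset_iff.2 hγ
      have hQ : IsCompact (range γ) := isCompact_range γ.continuous
      obtain ⟨g, hg⟩ := hnorm _ hQW hQ hzQ
      exact ⟨_, g, fun _ => ⟨hQW, hQ, isPreconnected_range γ.continuous, hzQ, ⟨1, γ.target⟩, hg⟩⟩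
    · exact ⟨∅, f, fun h => absurd h hx⟩
  choose Q g hQg using hex
  refine ⟨fun x => g x x, fun x hx => ?_, fun x hx => ?_⟩
  · obtain ⟨hQW, hQ, hQc, hzQ, hxQ, -⟩ := hQg x hx
    obtain ⟨r, hr, hrW⟩ := nhds_basis_closedBall.mem_iff.1 (hW.mem_nhds hx)
    have hBc : IsPreconnected (Q x ∪ closedBall x r) :=
      hQc.union x hxQ (mem_closedBall_self hr.le) (convex_closedBall x r).isPreconnected
    have hB : IsCompact (Q x ∪ closedBall x r) := hQ.union (isCompact_closedBall x r)
    obtain ⟨G, hG, hGe, hG0⟩ := hnorm _ (union_subset hQW hrW) hB (Or.inl hzQ)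
    have hGx : ContinuousAt G x := hG.continuousAt
      (mem_of_superset (closedBall_mem_nhds x hr) subset_union_right)
    refine (hGx.congr ?_).continuousWithinAt
    filter_upwards [closedBall_mem_nhds x hr] with y hy
    obtain ⟨hQW', hQ', hQc', hzQ', hyQ', hg', hge', hg0'⟩ := hQg y (hrW hy)
    obtain ⟨G', hG', hGe', hG0'⟩ := hnorm _ (union_subset (union_subset hQW hrW) hQW')
      (hB.union hQ') (Or.inr hzQ')
    have e1 := huniq _ hBc (Or.inl hzQ) G G' hG (hG'.mono subset_union_left) hGe
      (fun x hx => hGe' x (Or.inl hx)) hG0 hG0' (Or.inr hy)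
    have e2 := huniq _ hQc' hzQ' (g y) G' hg' (hG'.mono subset_union_right) hge'
      (fun x hx => hGe' x (Or.inr hx)) hg0' hG0' hyQ'
    exact e1.trans e2.symm
  · obtain ⟨-, -, -, -, hxQ, -, hge, -⟩ := hQg x hx
    exact hge x hxQ

instance : PreconnectedSpace ↥Sphere2 := by
  refine isPreconnected_iff_preconnectedSpace.1 (isPreconnected_sphere ?_ 0 1)
  rw [← Module.finrank_eq_rank, finrank_euclideanSpace_fin]
  norm_num

/-- If the complement of a plane domain in the sphere is connected, then so is the complement of
its image under an open embedding into the plane, in the form that omitted values have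
logarithms. -/
lemma hasLogOn_sub_of_injOn {q : ↥Sphere2} {W : Set ℂ} (hW : IsOpen W) (hWc : IsConnected W)
    (hC : IsConnected ((sphereChart q).symm '' W)ᶜ) {f : ℂ → ℂ} (hf : ContinuousOn f W)
    (hfi : InjOn f W) (hfo : IsOpen (f '' W)) {c : ℂ} (hc : c ∉ f '' W) :
    HasLogOn (fun z => f z - c) W := by
  set ψ := (sphereChart q).symm with hψ
  have hψc : Continuous ψ := continuous_sphereChart_symm q
  have hψi : Function.Injective ψ := injective_sphereChart_symm
  refine HasLogOn.of_forall_isCompact hW hWc fun Q hQW hQ => ?_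
  have hqC : q ∈ (ψ '' W)ᶜ := by
    rintro ⟨z, -, hz⟩
    exact sphereChart_symm_ne q z hz
  have hψW : IsOpen (ψ '' W) := isOpen_sphereChart_symm_image hW
  have hQ1 : IsClosed (ψ '' Q) := (hQ.image hψc).isClosed
  have hCQ : (ψ '' W)ᶜ ⊆ (ψ '' Q)ᶜ := compl_subset_compl.2 (image_mono hQW)
  set O := connectedComponentIn (ψ '' Q)ᶜ q with hO
  have hOo : IsOpen O := hQ1.isOpen_compl.connectedComponentIn
  have hCO : (ψ '' W)ᶜ ⊆ O := hC.isPreconnected.subset_connectedComponentIn hqC hCQ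
  have hOW : Oᶜ ⊆ ψ '' W := compl_subset_comm.1 hCO
  have hQO : ψ '' Q ⊆ Oᶜ := subset_compl_comm.1 (connectedComponentIn_subset _ _)
  have hconn : IsPreconnected (ψ '' W \ Oᶜ) := by
    refine isPreconnected_of_forall_pair fun x hx y hy => ?_
    have e : (Oᶜ ∪ (ψ '' W)ᶜ)ᶜ = ψ '' W \ Oᶜ := by
      ext x
      simp
      tauto
    refine ⟨_, (connectedComponentIn_subset _ x).trans e.subset, ?_, ?_,
      isPreconnected_connectedComponentIn⟩
    · exact mem_connectedComponentIn (e.symm ▸ hx)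
    · refine mem_connectedComponentIn_compl_union hOo.isClosed_compl hψW.isClosed_compl ?_ hx.2
        (fun h => h hx.1) ?_ ?_
      · have : Oᶜ ∩ (ψ '' W)ᶜ = ∅ := by
          rw [← disjoint_iff_inter_eq_empty]
          exact disjoint_left.2 fun a ha ha' => ha' (hOW ha)
        rw [this]
        exact isPreconnected_empty
      · rw [compl_compl]
        have : IsPreconnected O := isPreconnected_connectedComponentIn
        exact this.subset_connectedComponentIn (by simpa using hx.2) Subset.rfl (by simpa using hy.2)
      · rw [compl_compl]
        exact (hWc.isPreconnected.image _ hψc.continuousOn).subset_connectedComponentIn hx.1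
          Subset.rfl hy.1
  set Q' := ψ ⁻¹' Oᶜ with hQ'
  have hQ'e : ψ '' Q' = Oᶜ := by
    refine image_preimage_eq_of_subset (hOW.trans (image_subset_range _ _))
  have hQ'W : Q' ⊆ W := fun z hz => by
    obtain ⟨w, hw, hwz⟩ := hOW hz
    exact hψi hwz ▸ hw
  have hQ'c : IsCompact Q' := by
    have hqO : q ∉ Oᶜ := fun h => hqC (hOW h)
    rw [hQ', hψ, ← sphereChart_image_eq hqO]
    exact isCompact_sphereChart_image hOo.isClosed_compl hqO
  have hconn' : IsPreconnected (W \ Q') := by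
    have : W \ Q' = sphereChart q '' (ψ '' W \ Oᶜ) := by
      rw [← hQ'e, ← image_sdiff hψi, image_image]
      simp [hψ]
    rw [this]
    refine hconn.image _ ((continuousOn_sphereChart q).mono ?_)
    rintro _ ⟨⟨z, -, rfl⟩, -⟩
    exact sphereChart_symm_ne q z
  suffices HasLogOn (fun z => f z - c) Q' from
    this.mono fun z hz => hQO (mem_image_of_mem ψ hz)
  set K := ψ '' (f '' Q') with hK
  have hKc : IsClosed K :=
    ((hQ'c.image_of_continuousOn (hf.mono hQ'W)).image hψc).isClosed
  have hKV : K ⊆ ψ '' (f '' W) := image_mono (image_mono hQ'W)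
  have hVo : IsOpen (ψ '' (f '' W)) := isOpen_sphereChart_symm_image hfo
  have hP : IsPreconnected (ψ '' (f '' W) \ K) := by
    rw [hK, ← image_sdiff hψi, ← hfi.image_sdiff_subset hQ'W]
    exact (hconn'.image _ (hf.mono sdiff_subset)).image _ hψc.continuousOn
  have hqK : q ∉ K := by
    rintro ⟨z, -, hz⟩
    exact sphereChart_symm_ne q z hz
  have hcK : ψ c ∉ K := by
    intro h
    obtain ⟨w, hw, hwc⟩ := hKV h
    exact hc (hψi hwc ▸ hw)
  have hmeet : ∀ x, x ∉ K → K.Nonempty → (connectedComponentIn Kᶜ x ∩ (ψ '' (f '' W) \ K)).Nonempty := by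
    intro x hx hKne
    have hne : (connectedComponentIn Kᶜ x).Nonempty := ⟨x, mem_connectedComponentIn hx⟩
    have hne' : connectedComponentIn Kᶜ x ≠ univ := by
      intro h
      obtain ⟨y, hy⟩ := hKne
      exact connectedComponentIn_subset Kᶜ x (h ▸ mem_univ y) hy
    obtain ⟨y, hy⟩ := nonempty_frontier_iff.2 ⟨hne, hne'⟩
    have hyK := frontier_connectedComponentIn_subset hKc hy
    obtain ⟨z, hz1, hz2⟩ := mem_closure_iff.1 (frontier_subset_closure hy) _ hVo (hKV hyK)
    exact ⟨z, hz2, hz1, connectedComponentIn_subset _ _ hz2⟩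
  have hcomp : q ∈ connectedComponentIn Kᶜ (ψ c) := by
    rcases K.eq_empty_or_nonempty with h0 | hne
    · rw [h0, compl_empty, connectedComponentIn_univ, PreconnectedSpace.connectedComponent_eq_univ]
      trivial
    · obtain ⟨a, ha, haP⟩ := hmeet q hqK hne
      obtain ⟨b, hb, hbP⟩ := hmeet _ hcK hne
      have h1 := hP.subset_connectedComponentIn haP (show _ ⊆ Kᶜ from fun x hx => hx.2) hbP
      rw [connectedComponentIn_eq hb, ← connectedComponentIn_eq h1, ← connectedComponentIn_eq ha]
      exact mem_connectedComponentIn hqK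
  have hlog := hasLogOn_of_mem_connectedComponentIn hKc hcK (sphereChart_symm_ne q c) hcomp
  have := hlog.comp (φ := fun z => ψ (f z)) (hψc.comp_continuousOn (hf.mono hQ'W))
    (fun z hz => ⟨_, ⟨z, hz, rfl⟩, rfl⟩)
  simpa [hψ] using this

/-- The Riemann mapping theorem for bounded plane domains with connected complement. -/
theorem exists_bijOn_ball_of_isConnected_compl {q : ↥Sphere2} {W : Set ℂ} (hW : IsOpen W)
    (hWc : IsConnected W) (hWb : Bornology.IsBounded W)
    (hC : IsConnected ((sphereChart q).symm '' W)ᶜ) :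
    ∃ f : ℂ → ℂ, DifferentiableOn ℂ f W ∧ BijOn f W (ball 0 1) := by
  refine exists_bijOn_ball hW hWc hWb fun f hf hfi c hc =>
    hasLogOn_sub_of_injOn hW hWc hC hf.continuousOn hfi ?_ hc
  rcases (hf.analyticOnNhd hW).is_constant_or_isOpen hWc.isPreconnected with ⟨w, hw⟩ | h
  · exfalso
    obtain ⟨z, hz⟩ := hWc.nonempty
    obtain ⟨r, hr, hrW⟩ := Metric.isOpen_iff.1 hW z hz
    have hz' : z + (r / 2 : ℝ) ∈ ball z r := by
      rw [mem_ball_iff_norm, add_sub_cancel_left, Complex.norm_real, Real.norm_of_nonneg] <;> linarith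
    have := hfi hz (hrW hz') ((hw z hz).trans (hw _ (hrW hz')).symm)
    have h0 : ((r / 2 : ℝ) : ℂ) = 0 := by simpa using this.symm
    rw [Complex.ofReal_eq_zero] at h0
    linarith
  · exact h W Subset.rfl hW

open MeasureTheory in
/-- The area of an injective holomorphic image bounds the Dirichlet integral, so some vertical
slice arbitrarily far to the left has small energy. -/
lemma exists_setLIntegral_norm_deriv_sq_lt {Ω : Set ℂ} (hΩ : IsOpen Ω) {k : ℂ → ℂ}
    (hk : DifferentiableOn ℂ k Ω) (hi : InjOn k Ω) (hb : Bornology.IsBounded (k '' Ω)) (s₀ : ℝ)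
    {η : ℝ} (hη : 0 < η) : ∃ s < s₀,
      ∫⁻ θ in {θ : ℝ | (⟨s, θ⟩ : ℂ) ∈ Ω}, ENNReal.ofReal (‖deriv k ⟨s, θ⟩‖ ^ 2) <
        ENNReal.ofReal η := by
  have hfin : ∫⁻ z in Ω, ENNReal.ofReal (‖deriv k z‖ ^ 2) < ⊤ := by
    have h1 := lintegral_abs_det_fderiv_eq_addHaar_image (volume : Measure ℂ) hΩ.measurableSet
      (fun z hz => (((hk z hz).differentiableAt
        (hΩ.mem_nhds hz)).hasDerivAt.complexToReal_fderiv).hasFDerivWithinAt) hi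
    refine lt_of_eq_of_lt ?_ (h1.trans_lt hb.measure_lt_top)
    refine setLIntegral_congr_fun hΩ.measurableSet fun z _ => ?_
    have hdet : ContinuousLinearMap.det (deriv k z • (1 : ℂ →L[ℝ] ℂ)) = Complex.normSq (deriv k z) := by
      rw [← Algebra.norm_complex_apply, Algebra.norm_apply, ContinuousLinearMap.det]
      congr 1
    simp only [hdet, Complex.normSq_eq_norm_sq, abs_pow, abs_norm]
  by_contra! hcon
  refine hfin.ne ?_
  have hm : Measurable fun z : ℂ => Ω.indicator (fun z => ENNReal.ofReal (‖deriv k z‖ ^ 2)) z :=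
    Measurable.indicator (by have := measurable_deriv k; fun_prop) hΩ.measurableSet
  rw [← lintegral_indicator hΩ.measurableSet,
    ← (Complex.volume_preserving_equiv_real_prod.symm).lintegral_comp hm, Measure.volume_eq_prod]
  have hm' := (hm.comp Complex.measurableEquivRealProd.symm.measurable).aemeasurable
    (μ := (volume : Measure ℝ).prod volume)
  refine (lintegral_prod _ hm').trans ?_
  refine top_unique ?_
  calc (⊤ : ENNReal) = ∫⁻ _ in Iio s₀, ENNReal.ofReal η := by
        rw [setLIntegral_const, Real.volume_Iio, ENNReal.mul_top]
        simpa using hη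
    _ ≤ ∫⁻ s in Iio s₀, ∫⁻ θ, Ω.indicator (fun z => ENNReal.ofReal (‖deriv k z‖ ^ 2))
          (Complex.measurableEquivRealProd.symm (s, θ)) := by
        refine setLIntegral_mono' measurableSet_Iio fun s hs => (hcon s hs).trans ?_
        have hms : MeasurableSet {θ : ℝ | (⟨s, θ⟩ : ℂ) ∈ Ω} := by
          refine (hΩ.preimage ?_).measurableSet
          exact Complex.equivRealProdCLM.symm.continuous.comp (Continuous.prodMk_right s)
        rw [← lintegral_indicator hms]
        rfl
    _ ≤ _ := setLIntegral_le_lintegral _ _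

open MeasureTheory in
lemma dist_le_of_setLIntegral_lt {Ω : Set ℂ} (hΩ : IsOpen Ω) {k : ℂ → ℂ}
    (hk : DifferentiableOn ℂ k Ω) {s η : ℝ} (hη : 0 < η)
    (h : ∫⁻ θ in {θ : ℝ | (⟨s, θ⟩ : ℂ) ∈ Ω}, ENNReal.ofReal (‖deriv k ⟨s, θ⟩‖ ^ 2) <
        ENNReal.ofReal (η ^ 2)) {a b : ℝ} (hab : a ≤ b)
    (hsub : ∀ θ ∈ Icc a b, (⟨s, θ⟩ : ℂ) ∈ Ω) :
    dist (k ⟨s, a⟩) (k ⟨s, b⟩) ≤ η * (b - a + 1) := by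
  have hline : Continuous fun θ : ℝ => (⟨s, θ⟩ : ℂ) :=
    Complex.equivRealProdCLM.symm.continuous.comp (Continuous.prodMk_right s)
  have hderiv : ∀ θ ∈ uIcc a b, HasDerivAt (fun θ : ℝ => k ⟨s, θ⟩)
      (deriv k ⟨s, θ⟩ * Complex.I) θ := by
    intro θ hθ
    rw [uIcc_of_le hab] at hθ
    have h1 : HasDerivAt (fun θ : ℝ => (⟨s, θ⟩ : ℂ)) Complex.I θ := by
      have h2 : (fun θ : ℝ => (⟨s, θ⟩ : ℂ)) = fun θ : ℝ => (s : ℂ) + θ * Complex.I := by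
        ext θ
        simp [Complex.ext_iff]
      rw [h2]
      simpa using ((hasDerivAt_id θ).ofReal_comp.mul_const Complex.I).const_add (s : ℂ)
    exact ((hk _ (hsub θ hθ)).differentiableAt (hΩ.mem_nhds (hsub θ hθ))).hasDerivAt.comp θ h1
  have hcd : ContinuousOn (fun θ : ℝ => deriv k ⟨s, θ⟩) (uIcc a b) := by
    rw [uIcc_of_le hab]
    exact (hk.deriv hΩ).continuousOn.comp hline.continuousOn hsub
  have hinterior := intervalIntegral.integral_eq_sub_of_hasDerivAt hderiv
    ((hcd.mul continuousOn_const).intervalIntegrable)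
  have hsq : ∫ θ in a..b, ‖deriv k ⟨s, θ⟩‖ ^ 2 ≤ η ^ 2 := by
    rw [intervalIntegral.integral_of_le hab]
    have hi : IntegrableOn (fun θ : ℝ => ‖deriv k ⟨s, θ⟩‖ ^ 2) (Ioc a b) :=
      (intervalIntegrable_iff_integrableOn_Ioc_of_le hab).1 (hcd.norm.pow 2).intervalIntegrable
    rw [← ENNReal.ofReal_le_ofReal_iff (by positivity),
      ofReal_integral_eq_lintegral_ofReal hi (Eventually.of_forall fun _ => by positivity)]
    exact (lintegral_mono_set fun θ hθ => hsub θ (Ioc_subset_Icc_self hθ)).trans h.le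
  rw [dist_comm, dist_eq_norm, ← hinterior]
  calc ‖∫ θ in a..b, deriv k ⟨s, θ⟩ * Complex.I‖
      ≤ ∫ θ in a..b, (η + η⁻¹ * ‖deriv k ⟨s, θ⟩‖ ^ 2) := by
        refine intervalIntegral.norm_integral_le_of_norm_le hab (Eventually.of_forall fun θ _ => ?_) ?_
        · rw [norm_mul, Complex.norm_I, mul_one]
          set x := ‖deriv k ⟨s, θ⟩‖
          have : 0 ≤ η⁻¹ * ((x - η) ^ 2 + x * η) := by positivity
          have e : η⁻¹ * ((x - η) ^ 2 + x * η) = η + η⁻¹ * x ^ 2 - x := by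
            field_simp
            ring
          linarith
        · exact (continuousOn_const.add
            (continuousOn_const.mul (hcd.norm.pow 2))).intervalIntegrable
    _ = η * (b - a) + η⁻¹ * ∫ θ in a..b, ‖deriv k ⟨s, θ⟩‖ ^ 2 := by
        have hi : IntervalIntegrable (fun θ : ℝ => η⁻¹ * ‖deriv k ⟨s, θ⟩‖ ^ 2) MeasureTheory.volume a b :=
          (continuousOn_const.mul (hcd.norm.pow 2)).intervalIntegrable
        rw [intervalIntegral.integral_add intervalIntegrable_const hi, intervalIntegral.integral_const, intervalIntegral.integral_const_mul, smul_eq_mul, mul_comm]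
    _ ≤ η * (b - a) + η⁻¹ * η ^ 2 := by gcongr
    _ = η * (b - a + 1) := by
        field_simp

/-- Some vertical slice arbitrarily far to the left has a small image. -/
lemma exists_slice_dist_le {Ω : Set ℂ} (hΩ : IsOpen Ω) {k : ℂ → ℂ}
    (hk : DifferentiableOn ℂ k Ω) (hi : InjOn k Ω) (hb : Bornology.IsBounded (k '' Ω))
    (him : ∀ z ∈ Ω, |z.im| < Real.pi) (hord : ∀ s : ℝ, OrdConnected {θ : ℝ | (⟨s, θ⟩ : ℂ) ∈ Ω})
    (s₀ : ℝ) {ε : ℝ} (hε : 0 < ε) :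
    ∃ s < s₀, ∀ z ∈ Ω, ∀ w ∈ Ω, z.re = s → w.re = s → dist (k z) (k w) ≤ ε := by
  have hη : 0 < ε / (2 * Real.pi + 1) := by positivity
  obtain ⟨s, hs, hlt⟩ := exists_setLIntegral_norm_deriv_sq_lt hΩ hk hi hb s₀ (pow_pos hη 2)
  have key : ∀ a b : ℝ, a ≤ b → (⟨s, a⟩ : ℂ) ∈ Ω → (⟨s, b⟩ : ℂ) ∈ Ω →
      dist (k ⟨s, a⟩) (k ⟨s, b⟩) ≤ ε := by
    intro a b hab ha hb
    refine (dist_le_of_setLIntegral_lt hΩ hk hη hlt hab fun θ hθ => (hord s).out ha hb hθ).trans ?_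
    have h1 := abs_lt.1 (him _ ha)
    have h2 := abs_lt.1 (him _ hb)
    rw [div_mul_eq_mul_div, div_le_iff₀ (by positivity)]
    simp only at h1 h2
    gcongr
    linarith
  refine ⟨s, hs, ?_⟩
  rintro ⟨x, a⟩ ha ⟨y, b⟩ hb (rfl : x = s) (rfl : y = x)
  rcases le_total a b with h | h
  · exact key a b h ha hb
  · rw [dist_comm]
    exact key b a h hb ha

/-- The length-area principle on circular arcs around a boundary point of the unit disk. -/
lemma exists_arc_dist_le {g : ℂ → ℂ} (hg : DifferentiableOn ℂ g (ball 0 1))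
    (hi : InjOn g (ball 0 1)) (hb : Bornology.IsBounded (g '' ball 0 1)) {ζ : ℂ} (hζ : ‖ζ‖ = 1)
    {δ ε : ℝ} (hδ : 0 < δ) (hε : 0 < ε) :
    ∃ r > 0, r < δ ∧ ∀ z ∈ ball (0 : ℂ) 1, ∀ w ∈ ball (0 : ℂ) 1, dist z ζ = r → dist w ζ = r →
      dist (g z) (g w) ≤ ε := by
  have hζ0 : ζ ≠ 0 := norm_ne_zero_iff.1 (by rw [hζ]; exact one_ne_zero)
  let e : ℂ → ℂ := fun w => ζ * (1 - Complex.exp w)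
  have he : Differentiable ℂ e := by fun_prop
  let Ω : Set ℂ := {w | |w.im| < Real.pi} ∩ e ⁻¹' ball 0 1
  have hΩ : IsOpen Ω := (isOpen_lt (by fun_prop) continuous_const).inter
    (isOpen_ball.preimage he.continuous)
  have hord : ∀ s : ℝ, OrdConnected {θ : ℝ | (⟨s, θ⟩ : ℂ) ∈ Ω} := by
    intro s
    have hiff : ∀ θ : ℝ, ‖e ⟨s, θ⟩‖ < 1 ↔ Real.exp s < 2 * Real.cos θ := by
      intro θ
      have h1 : ‖e ⟨s, θ⟩‖ ^ 2 = 1 + Real.exp s * (Real.exp s - 2 * Real.cos θ) := by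
        simp only [e, norm_mul, hζ, one_mul]
        rw [← Complex.normSq_eq_norm_sq, Complex.normSq_apply]
        simp only [Complex.sub_re, Complex.sub_im, Complex.one_re, Complex.one_im,
          Complex.exp_re, Complex.exp_im]
        linear_combination Real.exp s ^ 2 * Real.sin_sq_add_cos_sq θ
      rw [← sq_lt_one_iff₀ (norm_nonneg _), h1]
      constructor
      · intro h
        by_contra! h2
        nlinarith [Real.exp_pos s]
      · intro h
        nlinarith [Real.exp_pos s]
    refine ⟨fun a ha b hb θ hθ => ?_⟩
    obtain ⟨ha1, ha2⟩ := ha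
    obtain ⟨hb1, hb2⟩ := hb
    rw [mem_preimage, mem_ball_zero_iff, hiff] at ha2 hb2
    simp only [mem_ofPred_eq] at ha1 hb1
    have hθle : |θ| ≤ max |a| |b| := by
      rw [abs_le]
      constructor
      · have := neg_abs_le a
        have := le_max_left |a| |b|
        linarith [hθ.1]
      · have := le_abs_self b
        have := le_max_right |a| |b|
        linarith [hθ.2]
    refine ⟨lt_of_le_of_lt hθle (max_lt ha1 hb1), ?_⟩
    rw [mem_preimage, mem_ball_zero_iff, hiff]
    rcases le_max_iff.1 hθle with h | h
    · have := Real.cos_le_cos_of_nonneg_of_le_pi (abs_nonneg θ) ha1.le h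
      rw [Real.cos_abs, Real.cos_abs] at this
      linarith
    · have := Real.cos_le_cos_of_nonneg_of_le_pi (abs_nonneg θ) hb1.le h
      rw [Real.cos_abs, Real.cos_abs] at this
      linarith
  have hinj : InjOn (fun w => g (e w)) Ω := by
    intro w hw v hv h
    have h1 := hi hw.2 hv.2 h
    have h2 : Complex.exp w = Complex.exp v := by
      have := mul_left_cancel₀ hζ0 h1
      linear_combination -this
    have h3 := abs_lt.1 (show |w.im| < Real.pi from hw.1)
    have h4 := abs_lt.1 (show |v.im| < Real.pi from hv.1)
    exact Complex.exp_inj_of_neg_pi_lt_of_le_pi h3.1 h3.2.le h4.1 h4.2.le h2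
  obtain ⟨s, hs, hsd⟩ := exists_slice_dist_le (k := fun w => g (e w)) hΩ
    (hg.comp he.differentiableOn fun w hw => hw.2) hinj
    (hb.subset (by rintro _ ⟨w, hw, rfl⟩; exact ⟨_, hw.2, rfl⟩)) (fun z hz => hz.1) hord
    (Real.log δ) hε
  have hlift : ∀ z ∈ ball (0 : ℂ) 1, dist z ζ = Real.exp s → ∃ w ∈ Ω, w.re = s ∧ e w = z := by
    intro z hz hzr
    have hu : ‖1 - z / ζ‖ = Real.exp s := by
      rw [← hzr, dist_comm, dist_eq_norm, ← mul_one ‖1 - z / ζ‖, ← hζ, ← norm_mul]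
      congr 1
      field_simp
    have hre : 0 < (1 - z / ζ).re := by
      have h1 : ‖z / ζ‖ < 1 := by
        rw [norm_div, hζ, div_one]
        exact mem_ball_zero_iff.1 hz
      have h2 := (Complex.abs_re_le_norm (z / ζ)).trans_lt h1
      rw [Complex.sub_re, Complex.one_re]
      linarith [(abs_lt.1 h2).2]
    have hne : 1 - z / ζ ≠ 0 := fun h => by
      rw [h] at hre
      exact lt_irrefl _ hre
    have hez : e (Complex.log (1 - z / ζ)) = z := by
      simp only [e]
      rw [Complex.exp_log hne]
      field_simp
      ring
    refine ⟨Complex.log (1 - z / ζ), ⟨?_, ?_⟩, ?_, hez⟩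
    · rw [mem_ofPred_eq, Complex.log_im]
      have := Complex.abs_arg_lt_pi_div_two_iff.2 (Or.inl hre)
      linarith [Real.pi_pos]
    · rw [mem_preimage, hez]
      exact hz
    · rw [Complex.log_re, hu, Real.log_exp]
  refine ⟨Real.exp s, Real.exp_pos s, (Real.lt_log_iff_exp_lt hδ).1 hs, fun z hz w hw hzr hwr => ?_⟩
  obtain ⟨z', hz', hzs, rfl⟩ := hlift z hz hzr
  obtain ⟨w', hw', hws, rfl⟩ := hlift w hw hwr
  exact hsd z' hz' w' hw' hzs hws

/-- Injective holomorphic functions are open maps. -/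
lemma isOpen_image_of_injOn {W U : Set ℂ} (hW : IsOpen W) {g : ℂ → ℂ} (hg : DifferentiableOn ℂ g W)
    (hi : InjOn g W) (hU : IsOpen U) (hUW : U ⊆ W) : IsOpen (g '' U) := by
  have hloc : ∀ z ∈ U, g '' U ∈ 𝓝 (g z) := by
    intro z hz
    rcases (hg.analyticOnNhd hW z (hUW hz)).eventually_constant_or_nhds_le_map_nhds with h | h
    · exfalso
      obtain ⟨r, hr, hr'⟩ := Metric.eventually_nhds_iff.1 (h.and (hW.mem_nhds (hUW hz)))
      have hd : dist (z + (r / 2 : ℝ)) z = r / 2 := by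
        rw [dist_eq_norm, add_sub_cancel_left, Complex.norm_real, Real.norm_of_nonneg]
        positivity
      have h1 := hr' (y := z + (r / 2 : ℝ)) (by rw [hd]; linarith)
      have h2 := hi h1.2 (hUW hz) h1.1
      rw [h2, dist_self] at hd
      linarith
    · exact h (image_mem_map (hU.mem_nhds hz))
  rw [isOpen_iff_mem_nhds]
  rintro _ ⟨z, hz, rfl⟩
  exact hloc z hz

/-- Jordan curves are locally connected, in terms of small closed subarcs. -/
lemma IsJordanParam.exists_small_subarc {X : Type*} [TopologicalSpace X] [T2Space X] {c : ℝ → X}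
    (hc : IsJordanParam c) {x : X} {O : Set X} (hO : O ∈ 𝓝 x) :
    ∃ σ ⊆ range c ∩ O, IsClosed σ ∧ IsPreconnected σ ∧ ∃ N ∈ 𝓝 x, N ∩ range c ⊆ σ := by
  by_cases hx : x ∈ range c
  · obtain ⟨t₀, rfl⟩ := hx
    obtain ⟨τ, hτ, hτO⟩ := nhds_basis_closedBall.mem_iff.1 (hc.continuous.continuousAt hO)
    set ρ := min τ (1 / 4) with hρ
    have hρ0 : 0 < ρ := by positivity
    have hρ1 : ρ ≤ 1 / 4 := min_le_right _ _
    refine ⟨c '' Icc (t₀ - ρ) (t₀ + ρ), ?_, hc.isClosed_image_Icc _ _,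
      hc.isPreconnected_image_Icc _ _, (c '' Icc (t₀ + ρ) (t₀ - ρ + 1))ᶜ, ?_, ?_⟩
    · rintro _ ⟨t, ht, rfl⟩
      refine ⟨⟨t, rfl⟩, hτO ?_⟩
      rw [Real.closedBall_eq_Icc]
      have : ρ ≤ τ := min_le_left _ _
      exact ⟨by linarith [ht.1], by linarith [ht.2]⟩
    · refine (hc.isClosed_image_Icc _ _).isOpen_compl.mem_nhds ?_
      rintro ⟨t, ht, h⟩
      obtain ⟨n, hn⟩ := (hc.eq_iff _ _).1 h
      have h1 : (0 : ℝ) < n := by linarith [ht.1]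
      have h2 : (n : ℝ) < 1 := by linarith [ht.2]
      norm_cast at h1 h2
      lia
    · rintro y ⟨hy, hyc⟩
      rw [hc.range_eq (a := t₀ - ρ) (b := t₀ + ρ) (by linarith) (by linarith)] at hyc
      exact hyc.resolve_right hy
  · exact ⟨∅, empty_subset _, isClosed_empty, isPreconnected_empty, (range c)ᶜ,
      hc.isClosed_range.isOpen_compl.mem_nhds hx, by simp⟩

/-- A crosscut of small diameter cuts off a small piece of a Jordan domain. -/
lemma mem_closedBall_of_crosscut {q : ↥Sphere2} {J : Set ↥Sphere2} (hJ : IsClosed J) {g : ℂ → ℂ}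
    (hg : DifferentiableOn ℂ g (ball 0 1)) (hi : InjOn g (ball 0 1))
    (hgJ : Disjoint ((sphereChart q).symm '' (g '' ball 0 1)) J)
    (hfr : frontier ((sphereChart q).symm '' (g '' ball 0 1)) ⊆ J) {ζ x : ℂ} (hζ : ‖ζ‖ = 1)
    {r ρ : ℝ} (hr : r < 1) {σ : Set ↥Sphere2} (hσ : IsClosed σ) (hσc : IsPreconnected σ)
    (hσJ : σ ⊆ J ∩ (sphereChart q).symm '' closedBall x ρ)
    (hΛ : g '' (ball 0 1 ∩ sphere ζ r) ⊆ closedBall x ρ)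
    (hΛσ : closure ((sphereChart q).symm '' (g '' (ball 0 1 ∩ sphere ζ r))) ∩ J ⊆ σ)
    (h0 : g 0 ∉ closedBall x ρ) {z : ℂ} (hz : z ∈ ball (0 : ℂ) 1) (hzr : dist z ζ < r) :
    g z ∈ closedBall x ρ := by
  by_contra hzB
  set ψ := (sphereChart q).symm with hψ
  have hψc : Continuous ψ := continuous_sphereChart_symm q
  have hψi : Function.Injective ψ := injective_sphereChart_symm
  set V := ψ '' (g '' ball 0 1) with hV
  have hop : ∀ U ⊆ ball (0 : ℂ) 1, IsOpen U → IsOpen (ψ '' (g '' U)) := fun U hU hUo =>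
    isOpen_sphereChart_symm_image (isOpen_image_of_injOn isOpen_ball hg hi hUo hU)
  have hVo : IsOpen V := hop _ Subset.rfl isOpen_ball
  have h0b : (0 : ℂ) ∈ ball (0 : ℂ) 1 := mem_ball_self one_pos
  have hVc : IsPreconnected V := ((convex_ball (0 : ℂ) 1).isPreconnected.image _
    hg.continuousOn).image _ hψc.continuousOn
  set Λ := closure (ψ '' (g '' (ball 0 1 ∩ sphere ζ r))) with hΛd
  set B := ψ '' closedBall x ρ with hB
  have hBc : IsClosed B := ((isCompact_closedBall x ρ).image hψc).isClosed
  have hBcompl : IsPreconnected Bᶜ := (LogAcyclic.image_of_convex (convex_closedBall x ρ)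
    (isCompact_closedBall x ρ) hψc.continuousOn hψi.injOn).isPreconnected_compl hBc
  have hΛB : Λ ⊆ B := closure_minimal (image_mono hΛ) hBc
  set Γ := Λ ∪ σ with hΓ
  have hΓB : Γ ⊆ B := union_subset hΛB fun y hy => (hσJ hy).2
  have hmemV : ∀ y ∈ ball (0 : ℂ) 1, ψ (g y) ∈ V := fun y hy => ⟨_, ⟨y, hy, rfl⟩, rfl⟩
  have hnB : ∀ y, g y ∉ closedBall x ρ → ψ (g y) ∈ Bᶜ := by
    rintro y hy ⟨w, hw, hwy⟩
    exact hy (hψi hwy ▸ hw)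
  have hVJ : V ⊆ Jᶜ := subset_compl_iff_disjoint_right.2 hgJ
  have hJΓ : J ∩ Γ = σ := by
    apply Subset.antisymm
    · rintro y ⟨hyJ, hy | hy⟩
      · exact hΛσ ⟨hy, hyJ⟩
      · exact hy
    · exact fun y hy => ⟨(hσJ hy).1, Or.inr hy⟩
  have hmem : ψ (g 0) ∈ connectedComponentIn (J ∪ Γ)ᶜ (ψ (g z)) := by
    refine mem_connectedComponentIn_compl_union hJ (isClosed_closure.union hσ)
      (by rw [hJΓ]; exact hσc) (hVJ (hmemV z hz)) (fun h => hnB z hzB (hΓB h)) ?_ ?_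
    · exact hVc.subset_connectedComponentIn (hmemV z hz) hVJ (hmemV 0 h0b)
    · exact hBcompl.subset_connectedComponentIn (hnB z hzB) (compl_subset_compl.2 hΓB) (hnB 0 h0)
  set X := connectedComponentIn (J ∪ Γ)ᶜ (ψ (g z)) with hX
  have hXc : IsPreconnected X := isPreconnected_connectedComponentIn
  have hXsub : X ⊆ (J ∪ Γ)ᶜ := connectedComponentIn_subset _ _
  have hzX : ψ (g z) ∈ X := mem_connectedComponentIn (by
    rintro (h | h)
    · exact hVJ (hmemV z hz) h
    · exact hnB z hzB (hΓB h))
  have hXV : X ⊆ V := by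
    refine hXc.subset_left_of_subset_union hVo isClosed_closure.isOpen_compl
      (disjoint_compl_right.mono_left subset_closure) ?_ ⟨_, hzX, hmemV z hz⟩
    intro y hy
    by_cases hyV : y ∈ V
    · exact Or.inl hyV
    · refine Or.inr fun hyc => hXsub hy (Or.inl (hfr ?_))
      rw [hVo.frontier_eq]
      exact ⟨hyc, hyV⟩
  have hU₁ : IsOpen (ball (0 : ℂ) 1 ∩ ball ζ r) := isOpen_ball.inter isOpen_ball
  have hU₂ : IsOpen (ball (0 : ℂ) 1 \ closedBall ζ r) := isOpen_ball.sdiff isClosed_closedBall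
  have hXU : X ⊆ ψ '' (g '' (ball (0 : ℂ) 1 ∩ ball ζ r)) ∪
      ψ '' (g '' (ball (0 : ℂ) 1 \ closedBall ζ r)) := by
    intro y hy
    obtain ⟨_, ⟨w, hw, rfl⟩, rfl⟩ := hXV hy
    rcases lt_trichotomy (dist w ζ) r with h | h | h
    · exact Or.inl ⟨_, ⟨w, ⟨hw, h⟩, rfl⟩, rfl⟩
    · have hyΛ : ψ (g w) ∈ Λ := subset_closure ⟨_, ⟨w, ⟨hw, h⟩, rfl⟩, rfl⟩
      exact absurd (Or.inr (Or.inl hyΛ)) (hXsub hy)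
    · exact Or.inr ⟨_, ⟨w, ⟨hw, not_le.2 h⟩, rfl⟩, rfl⟩
  obtain ⟨y, -, ⟨_, ⟨w, hw, rfl⟩, rfl⟩, ⟨_, ⟨w', hw', rfl⟩, he⟩⟩ := hXc _ _
    (hop _ inter_subset_left hU₁) (hop _ sdiff_subset hU₂) hXU
    ⟨_, hzX, ⟨_, ⟨z, ⟨hz, hzr⟩, rfl⟩, rfl⟩⟩
    ⟨_, hmem, ⟨_, ⟨0, ⟨h0b, by simpa [hζ] using hr⟩, rfl⟩, rfl⟩⟩
  rw [← hi hw'.1 hw.1 (hψi he)] at hw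
  exact hw'.2 (ball_subset_closedBall hw.2)

/-- Conformal maps onto Jordan domains have boundary limits. -/
lemma exists_tendsto_nhdsWithin_ball {q : ↥Sphere2} {J : Set ↥Sphere2} {c : ℝ → ↥Sphere2}
    (hc : IsJordanParam c) (hcJ : range c = J) {g : ℂ → ℂ}
    (hg : DifferentiableOn ℂ g (ball 0 1)) (hi : InjOn g (ball 0 1))
    (hb : Bornology.IsBounded (g '' ball 0 1))
    (hgJ : Disjoint ((sphereChart q).symm '' (g '' ball 0 1)) J)
    (hfr : frontier ((sphereChart q).symm '' (g '' ball 0 1)) ⊆ J) {ζ : ℂ} (hζ : ‖ζ‖ = 1) :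
    ∃ x, Tendsto g (𝓝[ball 0 1] ζ) (𝓝 x) := by
  set ψ := (sphereChart q).symm with hψ
  have hψc : Continuous ψ := continuous_sphereChart_symm q
  have hψi : Function.Injective ψ := injective_sphereChart_symm
  have hex : ∀ n : ℕ, ∃ r > 0, r < 1 / ((n : ℝ) + 1) ∧ ∀ z ∈ ball (0 : ℂ) 1, ∀ w ∈ ball (0 : ℂ) 1,
      dist z ζ = r → dist w ζ = r → dist (g z) (g w) ≤ 1 / ((n : ℝ) + 1) := fun n =>
    exists_arc_dist_le hg hi hb hζ Nat.one_div_pos_of_nat Nat.one_div_pos_of_nat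
  choose r hr0 hr1 hrd using hex
  have hr1' : ∀ n, r n < 1 := fun n => (hr1 n).trans_le (by
    rw [div_le_one (by positivity)]
    linarith [(Nat.cast_nonneg n : (0 : ℝ) ≤ n)])
  let z : ℕ → ℂ := fun n => ζ * (1 - r n)
  have hzd : ∀ n, dist (z n) ζ = r n := by
    intro n
    have : z n - ζ = -(ζ * r n) := by
      simp only [z]
      ring
    rw [dist_eq_norm, this, norm_neg, norm_mul, hζ, one_mul, Complex.norm_real,
      Real.norm_of_nonneg (hr0 n).le]
  have hzb : ∀ n, z n ∈ ball (0 : ℂ) 1 := by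
    intro n
    rw [mem_ball_zero_iff, norm_mul, hζ, one_mul, ← Complex.ofReal_one, ← Complex.ofReal_sub,
      Complex.norm_real, Real.norm_of_nonneg] <;> linarith [hr0 n, hr1' n]
  have hrt : Tendsto r atTop (𝓝 0) := squeeze_zero (fun n => (hr0 n).le) (fun n => (hr1 n).le)
    tendsto_one_div_add_atTop_nhds_zero_nat
  have hzt : Tendsto z atTop (𝓝 ζ) := by
    rw [tendsto_iff_dist_tendsto_zero]
    simpa only [hzd] using hrt
  obtain ⟨x, -, φ, hφ, hx⟩ := tendsto_subseq_of_bounded hb fun n => ⟨z n, hzb n, rfl⟩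
  have hx0 : x ≠ g 0 := by
    rintro rfl
    have hN : g '' ball 0 (1 / 2) ∈ 𝓝 (g 0) := (isOpen_image_of_injOn isOpen_ball hg hi isOpen_ball
      (ball_subset_ball (by norm_num))).mem_nhds ⟨0, by simp, rfl⟩
    have hN' : (ball (0 : ℂ) (1 / 2))ᶜ ∈ 𝓝 ζ := by
      refine mem_of_superset (isClosed_closedBall.isOpen_compl.mem_nhds (x := ζ)
        (s := (closedBall (0 : ℂ) (1 / 2))ᶜ) ?_) (compl_subset_compl.2 ball_subset_closedBall)
      simp [hζ]
      norm_num
    obtain ⟨n, h1, h2⟩ := ((hx.eventually hN).and ((hzt.comp hφ.tendsto_atTop).eventually hN')).exists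
    obtain ⟨w, hw, hwe⟩ := h1
    rw [hi (ball_subset_ball (by norm_num) hw) (hzb _) hwe] at hw
    exact h2 hw
  refine ⟨x, Metric.tendsto_nhds.2 fun ε hε => ?_⟩
  set ρ := min (ε / 2) (dist (g 0) x / 2) with hρ
  have hd : 0 < dist (g 0) x := dist_pos.2 hx0.symm
  have hρ0 : 0 < ρ := by positivity
  have hρ1 : ρ < ε := (min_le_left _ _).trans_lt (by linarith)
  have hρ2 : g 0 ∉ closedBall x ρ := by
    rw [mem_closedBall, not_le]
    exact (min_le_right _ _).trans_lt (by linarith)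
  have hBn : ψ '' closedBall x ρ ∈ 𝓝 (ψ x) := by
    refine mem_of_superset ((isOpen_sphereChart_symm_image (q := q) (isOpen_ball (x := x)
      (ε := ρ))).mem_nhds ⟨x, mem_ball_self hρ0, rfl⟩) (image_mono ball_subset_closedBall)
  obtain ⟨σ, hσ, hσcl, hσc, N, hN, hNσ⟩ := hc.exists_small_subarc hBn
  obtain ⟨N', hN', hNcl, hNN⟩ := exists_mem_nhds_isClosed_subset hN
  obtain ⟨η, hη, hηN⟩ := Metric.mem_nhds_iff.1 (hψc.continuousAt hN')
  obtain ⟨n, h1, h2⟩ := ((Metric.tendsto_nhds.1 hx (min η ρ / 2) (by positivity)).and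
    ((tendsto_one_div_add_atTop_nhds_zero_nat.comp hφ.tendsto_atTop).eventually
      (gt_mem_nhds (show (0 : ℝ) < min η ρ / 2 by positivity)))).exists
  have hΛ : g '' (ball 0 1 ∩ sphere ζ (r (φ n))) ⊆ ball x (min η ρ) := by
    rintro _ ⟨w, ⟨hw, hwr⟩, rfl⟩
    have h3 := hrd (φ n) w hw (z (φ n)) (hzb _) hwr (hzd _)
    have h4 := dist_triangle (g w) (g (z (φ n))) x
    simp only [Function.comp] at h1 h2
    rw [mem_ball]
    linarith
  have hmain : ∀ w ∈ ball (0 : ℂ) 1, dist w ζ < r (φ n) → g w ∈ closedBall x ρ := by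
    intro w hw hwr
    refine mem_closedBall_of_crosscut (hcJ ▸ hc.isClosed_range) hg hi hgJ hfr hζ (hr1' (φ n)) hσcl hσc
      (hcJ ▸ hσ) (hΛ.trans ((ball_subset_ball (min_le_right _ _)).trans ball_subset_closedBall)) ?_
      hρ2 hw hwr
    rintro y ⟨hy, hyJ⟩
    refine hNσ ⟨hNN (closure_minimal ?_ hNcl hy), hcJ ▸ hyJ⟩
    rintro _ ⟨v, hv, rfl⟩
    exact hηN (ball_subset_ball (min_le_left _ _) (hΛ hv))
  filter_upwards [self_mem_nhdsWithin, mem_nhdsWithin_of_mem_nhds (ball_mem_nhds ζ (hr0 (φ n)))]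
    with w hw hwr
  exact (mem_closedBall.1 (hmain w hw hwr)).trans_lt hρ1

lemma continuousOn_invFunOn_of_injOn {W : Set ℂ} (hW : IsOpen W) {f : ℂ → ℂ}
    (hf : DifferentiableOn ℂ f W) (hi : InjOn f W) :
    ContinuousOn (Function.invFunOn f W) (f '' W) := by
  rintro _ ⟨x, hx, rfl⟩
  refine ContinuousAt.continuousWithinAt fun U hU => ?_
  rw [hi.leftInvOn_invFunOn hx] at hU
  rw [Filter.mem_map]
  obtain ⟨O, hO, hOo, hxO⟩ := _root_.mem_nhds_iff.1 (inter_mem hU (hW.mem_nhds hx))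
  refine mem_of_superset ((isOpen_image_of_injOn hW hf hi hOo fun z hz => (hO hz).2).mem_nhds
    (mem_image_of_mem f hxO)) ?_
  rintro _ ⟨z, hz, rfl⟩
  rw [mem_preimage, hi.leftInvOn_invFunOn (hO hz).2]
  exact (hO hz).1

lemma differentiableOn_invFunOn_of_injOn {W : Set ℂ} (hW : IsOpen W) {f : ℂ → ℂ}
    (hf : DifferentiableOn ℂ f W) (hi : InjOn f W) :
    DifferentiableOn ℂ (Function.invFunOn f W) (f '' W) := by
  have ho := isOpen_image_of_injOn hW hf hi hW Subset.rfl
  have hc := continuousOn_invFunOn_of_injOn hW hf hi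
  set g := Function.invFunOn f W with hg
  have hl : LeftInvOn g f W := hi.leftInvOn_invFunOn
  have hr : ∀ y ∈ f '' W, f (g y) = y := by
    rintro _ ⟨x, hx, rfl⟩; rw [hl hx]
  have hgW : ∀ y ∈ f '' W, g y ∈ W := by
    rintro _ ⟨x, hx, rfl⟩; rwa [hl hx]
  have key : ∀ y ∈ f '' W, deriv f (g y) ≠ 0 → DifferentiableAt ℂ g y := by
    intro y hy h0
    refine (HasDerivAt.of_local_left_inverse (hc.continuousAt (ho.mem_nhds hy))
      (hf.differentiableAt (hW.mem_nhds (hgW y hy))).hasDerivAt h0 ?_).differentiableAt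
    filter_upwards [ho.mem_nhds hy] with z hz using hr z hz
  rintro _ ⟨x, hx, rfl⟩
  have hxn := ho.mem_nhds (mem_image_of_mem f hx)
  have hcx := hc.continuousAt hxn
  refine DifferentiableAt.differentiableWithinAt ?_
  have hda : AnalyticAt ℂ (deriv f) x := (hf.analyticOnNhd hW x hx).deriv
  rcases hda.eventually_eq_zero_or_eventually_ne_zero with h | h
  · exfalso
    obtain ⟨r, hr0, hrs⟩ := Metric.mem_nhds_iff.1 (inter_mem h (hW.mem_nhds hx))
    have hconst := fun y hy => isOpen_ball.is_const_of_deriv_eq_zero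
      (convex_ball x r).isPreconnected (hf.mono fun z hz => (hrs hz).2) (fun z hz => (hrs hz).1)
      (mem_ball_self hr0) (y := y) hy
    have hy : x + (r / 2 : ℝ) ∈ ball x r := by
      rw [mem_ball, dist_eq_norm]; simp [abs_of_pos hr0]; linarith
    have := hi hx (hrs hy).2 (hconst _ hy)
    simp at this
    linarith
  · refine (Complex.analyticAt_of_differentiable_on_punctured_nhds_of_continuousAt ?_ hcx).differentiableAt
    rw [eventually_nhdsWithin_iff] at h ⊢
    rw [ContinuousAt, hl hx] at hcx
    filter_upwards [hcx.eventually h, hxn] with y hy hyW hne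
    refine key y hyW (hy ?_)
    rintro h'
    exact hne (by rw [← hr y hyW, h', mem_singleton_iff])

/-- An injective holomorphic function, continuous up to the circle, is not constant on an arc. -/
lemma false_of_eq_zero_on_arc {F : ℂ → ℂ} (hF : ContinuousOn F (closedBall 0 1))
    (hd : DifferentiableOn ℂ F (ball 0 1)) (hi : InjOn F (ball 0 1)) {U : Set ℂ} (hU : IsOpen U)
    (hne : (U ∩ sphere 0 1).Nonempty) (h0 : ∀ z ∈ U ∩ sphere 0 1, F z = 0) : False := by
  obtain ⟨a, haU, ha⟩ := hne
  have ha1 : ‖a‖ = 1 := mem_sphere_zero_iff_norm.1 ha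
  have hnorm : ∀ x ∈ sphere (0 : ℂ) 1, ∀ z, ‖a / x * z‖ = ‖z‖ := by
    intro x hx z
    rw [norm_mul, norm_div, ha1, mem_sphere_zero_iff_norm.1 hx, div_one, one_mul]
  obtain ⟨t, hts, hcov⟩ := (isCompact_sphere (0 : ℂ) 1).elim_nhds_subcover
    (fun x => (fun z => a / x * z) ⁻¹' U) (by
      intro x hx
      refine (hU.preimage (by fun_prop)).mem_nhds ?_
      have : x ≠ 0 := by rintro rfl; simp at hx
      rwa [mem_preimage, div_mul_cancel₀ _ this])
  set P : ℂ → ℂ := fun z => ∏ x ∈ t, F (a / x * z) with hP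
  have hPd : DiffContOnCl ℂ P (ball 0 1) := by
    constructor
    · refine DifferentiableOn.fun_finsetProd fun x hx => ?_
      refine hd.comp (by fun_prop) fun z hz => ?_
      rw [mem_ball_zero_iff] at hz ⊢
      rwa [hnorm x (hts x hx)]
    · rw [closure_ball _ one_ne_zero]
      refine continuousOn_finsetProd _ fun x hx => ?_
      refine hF.comp (by fun_prop) fun z hz => ?_
      rw [mem_closedBall_zero_iff] at hz ⊢
      rwa [hnorm x (hts x hx)]
  have hP0 : ∀ z ∈ ball (0 : ℂ) 1, P z = 0 := by
    intro z hz
    have := Complex.norm_le_of_forall_mem_frontier_norm_le isBounded_ball hPd (C := 0) (by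
      intro y hy
      rw [frontier_ball _ one_ne_zero] at hy
      obtain ⟨x, hx, hyx⟩ := mem_iUnion₂.1 (hcov hy)
      rw [norm_le_zero_iff]
      refine Finset.prod_eq_zero hx (h0 _ ⟨hyx, ?_⟩)
      rw [mem_sphere_zero_iff_norm] at hy ⊢
      rwa [hnorm x (hts x hx)]) (subset_closure hz)
    exact norm_le_zero_iff.1 this
  have hfin : (ball (0 : ℂ) 1).Finite := by
    refine Set.Finite.subset (t.finite_toSet.biUnion
      (t := fun x => {z | z ∈ ball (0 : ℂ) 1 ∧ F (a / x * z) = 0}) fun x hx => ?_) ?_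
    · refine Set.Subsingleton.finite fun z hz y hy => ?_
      have hx := hts x hx
      have hx0 : a / x ≠ 0 := by
        have := hnorm x hx 1
        intro h; simp [h] at this
      refine mul_left_cancel₀ hx0 (hi ?_ ?_ (hz.2.trans hy.2.symm))
      · rw [mem_ball_zero_iff, hnorm x hx]; exact mem_ball_zero_iff.1 hz.1
      · rw [mem_ball_zero_iff, hnorm x hx]; exact mem_ball_zero_iff.1 hy.1
    · intro z hz
      obtain ⟨x, hx, h⟩ := Finset.prod_eq_zero_iff.1 (hP0 z hz)
      exact mem_iUnion₂.2 ⟨x, hx, hz, h⟩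
  exact (infinite_of_mem_nhds (0 : ℂ) (ball_mem_nhds 0 one_pos)) hfin

lemma norm_chord_sq {ζ₁ ζ₂ : ℂ} (h₁ : ‖ζ₁‖ = 1) (h₂ : ‖ζ₂‖ = 1) (t : ℝ) :
    ‖ζ₁ + t * (ζ₂ - ζ₁)‖ ^ 2 = 1 + t * (t - 1) * ‖ζ₂ - ζ₁‖ ^ 2 := by
  have e1 : ζ₁.re ^ 2 + ζ₁.im ^ 2 = 1 := by
    have := Complex.sq_norm ζ₁; rw [h₁, Complex.normSq_apply] at this; linarith
  have e2 : ζ₂.re ^ 2 + ζ₂.im ^ 2 = 1 := by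
    have := Complex.sq_norm ζ₂; rw [h₂, Complex.normSq_apply] at this; linarith
  rw [Complex.sq_norm, Complex.sq_norm, Complex.normSq_apply, Complex.normSq_apply]
  simp
  linear_combination (1 - t) * e1 + t * e2

lemma norm_chord_lt {ζ₁ ζ₂ : ℂ} (h₁ : ‖ζ₁‖ = 1) (h₂ : ‖ζ₂‖ = 1) (hne : ζ₁ ≠ ζ₂) {t : ℝ} :
    ‖ζ₁ + t * (ζ₂ - ζ₁)‖ < 1 ↔ 0 < t ∧ t < 1 := by
  have hd : 0 < ‖ζ₂ - ζ₁‖ ^ 2 := by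
    have : ζ₂ - ζ₁ ≠ 0 := sub_ne_zero.2 hne.symm
    positivity
  rw [← sq_lt_one_iff₀ (norm_nonneg _), norm_chord_sq h₁ h₂]
  constructor
  · intro h
    have : t * (t - 1) < 0 := by
      by_contra! h'
      nlinarith
    constructor <;> nlinarith
  · rintro ⟨h0, h1⟩
    have : 0 < t * (1 - t) := mul_pos h0 (by linarith)
    nlinarith

lemma isJordanParam_chord {X : Type*} [TopologicalSpace X] {Φ : ℂ → X}
    (hΦ : ContinuousOn Φ (closedBall 0 1)) (hi : InjOn Φ (ball 0 1)) {J : Set X}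
    (hd : ∀ z ∈ ball (0 : ℂ) 1, Φ z ∉ J) {ζ₁ ζ₂ : ℂ} (h₁ : ‖ζ₁‖ = 1) (h₂ : ‖ζ₂‖ = 1)
    (hne : ζ₁ ≠ ζ₂) (hJ : Φ ζ₁ ∈ J) (he : Φ ζ₁ = Φ ζ₂) :
    IsJordanParam fun t : ℝ => Φ (ζ₁ + (Int.fract t : ℝ) * (ζ₂ - ζ₁)) := by
  set L : ℝ → ℂ := fun t => ζ₁ + t * (ζ₂ - ζ₁) with hL
  have hb : ∀ {t : ℝ}, L t ∈ ball (0 : ℂ) 1 ↔ 0 < t ∧ t < 1 := fun {t} => by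
    rw [mem_ball_zero_iff]; exact norm_chord_lt h₁ h₂ hne
  have hLi : Function.Injective L := by
    intro s t hst
    have := mul_right_cancel₀ (sub_ne_zero.2 hne.symm) (add_left_cancel hst)
    exact_mod_cast this
  have hL0 : L 0 = ζ₁ := by simp [hL]
  have hL1 : L 1 = ζ₂ := by simp [hL]
  have hinj : ∀ s t : ℝ, 0 ≤ s → s < 1 → 0 ≤ t → t < 1 → Φ (L s) = Φ (L t) → s = t := by
    intro s t hs hs' ht ht' h
    rcases hs.eq_or_lt with rfl | hs <;> rcases ht.eq_or_lt with rfl | ht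
    · rfl
    · exact absurd (by rw [← h, hL0]; exact hJ) (hd _ (hb.2 ⟨ht, ht'⟩))
    · exact absurd (by rw [h, hL0]; exact hJ) (hd _ (hb.2 ⟨hs, hs'⟩))
    · exact hLi (hi (hb.2 ⟨hs, hs'⟩) (hb.2 ⟨ht, ht'⟩) h)
  constructor
  · refine ContinuousOn.comp_fract'' (f := fun t : ℝ => Φ (L t)) (hΦ.comp (by fun_prop) ?_) ?_
    · intro t ht
      rcases ht.1.eq_or_lt with rfl | h0
      · rw [hL0]; simp [h₁]
      rcases ht.2.eq_or_lt with rfl | h1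
      · rw [hL1]; simp [h₂]
      exact ball_subset_closedBall (hb.2 ⟨h0, h1⟩)
    · simp only [hL0, hL1, he]
  · intro s t
    rw [← Int.fract_eq_fract]
    refine ⟨hinj _ _ (Int.fract_nonneg _) (Int.fract_lt_one _) (Int.fract_nonneg _)
      (Int.fract_lt_one _), fun h => by rw [h]⟩

lemma exists_arc_of_eq {Φ : ℂ → ↥Sphere2}
    (hΦ : ContinuousOn Φ (closedBall 0 1)) (hi : InjOn Φ (ball 0 1)) {c : ℝ → ↥Sphere2}
    (hc : IsJordanParam c) (ho : IsOpen (Φ '' ball 0 1))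
    (hd : ∀ z ∈ ball (0 : ℂ) 1, Φ z ∉ range c) (hs : ∀ z ∈ sphere (0 : ℂ) 1, Φ z ∈ range c)
    {ζ₁ ζ₂ : ℂ} (h₁ : ‖ζ₁‖ = 1) (h₂ : ‖ζ₂‖ = 1)
    (hne : ζ₁ ≠ ζ₂) (he : Φ ζ₁ = Φ ζ₂) :
    ∃ U : Set ℂ, IsOpen U ∧ (U ∩ sphere 0 1).Nonempty ∧ ∀ z ∈ U ∩ sphere 0 1, Φ z = Φ ζ₁ := by
  have hw : Φ ζ₁ ∈ range c := hs _ (by simp [h₁])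
  have hγ := isJordanParam_chord hΦ hi hd h₁ h₂ hne hw he
  set γ := fun t : ℝ => Φ (ζ₁ + (Int.fract t : ℝ) * (ζ₂ - ζ₁)) with hγdef
  have hγb : ∀ t : ℝ, γ t = Φ ζ₁ ∨ ∃ z ∈ ball (0 : ℂ) 1, γ t = Φ z := by
    intro t
    rcases (Int.fract_nonneg t).eq_or_lt with h | h
    · left; simp only [hγdef, ← h]; simp
    · right
      exact ⟨_, mem_ball_zero_iff.2 ((norm_chord_lt h₁ h₂ hne).2 ⟨h, Int.fract_lt_one t⟩), rfl⟩
  have hγc : range γ ∩ range c ⊆ {Φ ζ₁} := by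
    rintro _ ⟨⟨t, rfl⟩, h⟩
    rcases hγb t with h' | ⟨z, hz, h'⟩
    · exact h'
    · rw [h'] at h; exact absurd h (hd z hz)
  obtain ⟨t₀, ht₀⟩ := hw
  -- the rest of the curve lies on one side of the chord
  have hpre : IsPreconnected (c '' Ioo t₀ (t₀ + 1)) :=
    isPreconnected_Ioo.image _ hc.continuous.continuousOn
  have hrest : ∀ x ∈ range c, x ≠ Φ ζ₁ → x ∈ c '' Ioo t₀ (t₀ + 1) := by
    intro x hx hxw
    obtain ⟨u, hu, rfl⟩ := hc.exists_mem_Ico t₀ hx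
    refine ⟨u, ⟨hu.1.lt_of_ne ?_, hu.2⟩, rfl⟩
    rintro rfl
    exact hxw ht₀
  obtain ⟨Y, hYo, hYfr, hYΓ, hYc, X, hXo, hXY, hXYu⟩ : ∃ Y : Set ↥Sphere2, IsOpen Y ∧ frontier Y = range γ ∧
      Disjoint Y (range γ) ∧ Disjoint Y (range c) ∧ ∃ X : Set ↥Sphere2, IsOpen X ∧ Disjoint X Y ∧
        X ∪ Y = (range γ)ᶜ := by
    obtain ⟨V₁, V₂, o1, o2, -, -, hdis, hu, f1, f2⟩ := hγ.exists_components
    have hsub : c '' Ioo t₀ (t₀ + 1) ⊆ V₁ ∪ V₂ := by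
      rw [hu]
      rintro _ ⟨s, hs, rfl⟩ hsγ
      have h := hγc ⟨hsγ, mem_range_self s⟩
      rw [mem_singleton_iff, ← ht₀] at h
      have := hc.injOn_Ico (a := t₀) le_rfl ⟨hs.1.le, hs.2⟩ ⟨le_rfl, by linarith⟩ h
      exact hs.1.ne' this
    have hcond : ∀ V V' : Set ↥Sphere2, Disjoint V V' → V ∪ V' = (range γ)ᶜ →
        c '' Ioo t₀ (t₀ + 1) ⊆ V → Disjoint V' (range γ) ∧ Disjoint V' (range c) := by
      intro V V' hVV hVu hV
      have hV'γ : Disjoint V' (range γ) := by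
        rw [← subset_compl_iff_disjoint_right, ← hVu]; exact subset_union_right
      refine ⟨hV'γ, Set.disjoint_left.2 fun x hx hxc => ?_⟩
      by_cases hxw : x = Φ ζ₁
      · refine Set.disjoint_left.1 hV'γ hx ⟨0, ?_⟩
        simp [hγdef, hxw]
      · exact Set.disjoint_left.1 hVV (hV (hrest x hxc hxw)) hx
    by_cases hm : c '' Ioo t₀ (t₀ + 1) ⊆ V₁
    · obtain ⟨a, b⟩ := hcond V₁ V₂ hdis hu hm
      exact ⟨V₂, o2, f2, a, b, V₁, o1, hdis, hu⟩
    · have hm' : c '' Ioo t₀ (t₀ + 1) ⊆ V₂ := by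
        obtain ⟨x, hx, hx1⟩ := not_subset.1 hm
        exact hpre.subset_right_of_subset_union o1 o2 hdis hsub
          ⟨x, hx, (hsub hx).resolve_left hx1⟩
      obtain ⟨a, b⟩ := hcond V₂ V₁ hdis.symm (by rw [union_comm, hu]) hm'
      exact ⟨V₁, o1, f1, a, b, V₂, o2, hdis.symm, by rw [union_comm, hu]⟩
  have hYcl : closure Y ∩ range c ⊆ {Φ ζ₁} := by
    rintro x ⟨hx, hxc⟩
    rw [closure_eq_self_union_frontier, hYfr] at hx
    rcases hx with hx | hx
    · exact absurd hxc (Set.disjoint_left.1 hYc hx)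
    · exact hγc ⟨hx, hxc⟩
  -- a point of the disc mapped into `Y`
  set m : ℂ := ζ₁ + (1 / 2 : ℝ) * (ζ₂ - ζ₁) with hm
  have hmb : m ∈ ball (0 : ℂ) 1 :=
    mem_ball_zero_iff.2 ((norm_chord_lt h₁ h₂ hne).2 ⟨by norm_num, by norm_num⟩)
  obtain ⟨z₀, hz₀, hz₀Y⟩ : ∃ z ∈ ball (0 : ℂ) 1, Φ z ∈ Y := by
    have : Φ m ∈ closure Y := by
      refine frontier_subset_closure ?_
      rw [hYfr]
      refine ⟨1 / 2, ?_⟩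
      have : Int.fract (1 / 2 : ℝ) = 1 / 2 := Int.fract_eq_self.2 ⟨by norm_num, by norm_num⟩
      simp only [hγdef, this, hm]
    obtain ⟨_, ⟨z, hz, rfl⟩, hy⟩ := mem_closure_iff.1 this _ ho (mem_image_of_mem _ hmb)
    exact ⟨z, hz, hy⟩
  have hd0 : ζ₂ - ζ₁ ≠ 0 := sub_ne_zero.2 hne.symm
  have him : ((z₀ - ζ₁) / (ζ₂ - ζ₁)).im ≠ 0 := by
    intro h
    have hz : z₀ = ζ₁ + (((z₀ - ζ₁) / (ζ₂ - ζ₁)).re : ℝ) * (ζ₂ - ζ₁) := by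
      rw [show ((((z₀ - ζ₁) / (ζ₂ - ζ₁)).re : ℝ) : ℂ) = (z₀ - ζ₁) / (ζ₂ - ζ₁) from
        Complex.ext (by simp) (by simp [h])]
      field_simp; ring
    set t := ((z₀ - ζ₁) / (ζ₂ - ζ₁)).re
    have ht := hz₀
    rw [hz, mem_ball_zero_iff, norm_chord_lt h₁ h₂ hne] at ht
    refine Set.disjoint_left.1 hYΓ hz₀Y ⟨t, ?_⟩
    simp only [hγdef]
    rw [Int.fract_eq_self.2 ⟨ht.1.le, ht.2⟩, ← hz]
  obtain ⟨e, he0, hed, hez⟩ : ∃ e : ℂ, e ≠ 0 ∧ (e = ζ₂ - ζ₁ ∨ e = -(ζ₂ - ζ₁)) ∧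
      0 < ((z₀ - ζ₁) / e).im := by
    rcases him.lt_or_gt with h | h
    · exact ⟨_, neg_ne_zero.2 hd0, Or.inr rfl, by rw [div_neg, Complex.neg_im]; linarith⟩
    · exact ⟨_, hd0, Or.inl rfl, h⟩
  have hUo : IsOpen {z : ℂ | 0 < ((z - ζ₁) / e).im} :=
    isOpen_lt continuous_const (Complex.continuous_im.comp (by fun_prop))
  have hUc : Convex ℝ {z : ℂ | 0 < ((z - ζ₁) / e).im} := by
    have : {z : ℂ | 0 < ((z - ζ₁) / e).im} = {z : ℂ | (ζ₁ / e).im < (z / e).im} := by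
      ext z; simp [sub_div]
    rw [this]
    refine convex_halfSpace_gt (f := fun z : ℂ => (z / e).im) ⟨fun x y => by simp [add_div], fun a x => ?_⟩ _
    simp [mul_div_assoc]
  set U := {z : ℂ | 0 < ((z - ζ₁) / e).im} with hU
  have hchord : ∀ t : ℝ, ζ₁ + t * (ζ₂ - ζ₁) ∉ U := by
    intro t ht
    have ht : 0 < ((ζ₁ + t * (ζ₂ - ζ₁) - ζ₁) / e).im := ht
    rw [add_sub_cancel_left] at ht
    rcases hed with rfl | rfl
    · rw [mul_div_cancel_right₀ _ hd0] at ht; simp at ht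
    · rw [div_neg, mul_div_cancel_right₀ _ hd0] at ht; simp at ht
  have hAY : Φ '' (U ∩ ball 0 1) ⊆ Y := by
    refine ((hUc.inter (convex_ball 0 1)).isPreconnected.image Φ
      (hΦ.mono fun z hz => ball_subset_closedBall hz.2)).subset_right_of_subset_union hXo hYo hXY ?_ ?_
    · rw [hXYu]
      rintro _ ⟨z, hz, rfl⟩ ⟨t, ht⟩
      rcases (Int.fract_nonneg t).eq_or_lt with h | h
      · simp only [hγdef, ← h] at ht
        simp only [Complex.ofReal_zero, zero_mul, add_zero] at ht
        exact hd z hz.2 ⟨t₀, by rw [ht₀, ht]⟩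
      · have := hi (mem_ball_zero_iff.2 ((norm_chord_lt h₁ h₂ hne).2 ⟨h, Int.fract_lt_one t⟩)) hz.2 ht
        exact hchord _ (by rw [this]; exact hz.1)
    · exact ⟨_, ⟨z₀, ⟨hez, hz₀⟩, rfl⟩, hz₀Y⟩
  refine ⟨U, hUo, ?_, ?_⟩
  · have hen : 0 < ‖e‖ := norm_pos_iff.2 he0
    refine ⟨Complex.I * e / ‖e‖, ?_, ?_⟩
    · show 0 < ((Complex.I * e / ‖e‖ - ζ₁) / e).im
      have e1 : (Complex.I * e / ‖e‖ - ζ₁) / e = Complex.I * ((1 / ‖e‖ : ℝ) : ℂ) - ζ₁ / e := by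
        have : (‖e‖ : ℂ) ≠ 0 := by exact_mod_cast hen.ne'
        push_cast
        field_simp
      have e2 : (ζ₁ / e).im = (m / e).im := by
        rw [hm, add_div, Complex.add_im]
        rcases hed with rfl | rfl
        · rw [mul_div_cancel_right₀ _ hd0]; simp
        · rw [div_neg (_ * _), mul_div_cancel_right₀ _ hd0]; simp
      have e3 : (m / e).im < 1 / ‖e‖ := by
        refine (Complex.im_le_norm _).trans_lt ?_
        rw [norm_div]
        exact div_lt_div_of_pos_right (mem_ball_zero_iff.1 hmb) hen
      rw [e1, Complex.sub_im, e2, Complex.I_mul_im, Complex.ofReal_re]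
      linarith
    · rw [mem_sphere_zero_iff_norm]
      simp [hen.ne']
  · rintro z ⟨hzU, hz⟩
    have hcl : z ∈ closure (U ∩ ball 0 1) := by
      refine hUo.inter_closure ⟨hzU, ?_⟩
      rw [closure_ball _ one_ne_zero]
      exact sphere_subset_closedBall hz
    refine hYcl ⟨?_, hs z hz⟩
    have h1 : ContinuousWithinAt Φ (U ∩ ball 0 1) z :=
      (hΦ z (sphere_subset_closedBall hz)).mono fun z hz => ball_subset_closedBall hz.2
    exact closure_mono hAY (h1.mem_closure_image hcl)

lemma closure_eq_of_components {V₁ V₂ J : Set ↥Sphere2} (hd : Disjoint V₁ V₂) (hu : V₁ ∪ V₂ = Jᶜ)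
    (f1 : frontier V₁ = J) : closure V₁ = V₂ᶜ := by
  rw [closure_eq_self_union_frontier, f1]
  have h1 : ∀ x, x ∈ V₁ ∪ V₂ ↔ x ∈ Jᶜ := fun x => by rw [hu]
  ext x
  have := h1 x
  simp only [mem_union, mem_compl_iff] at this ⊢
  have hdx : x ∈ V₁ → x ∉ V₂ := fun h => Set.disjoint_left.1 hd h
  tauto

/-- The Schoenflies theorem: the closure of a complementary component of a Jordan curve is a
closed disk. -/
theorem isClosedDisk_closure {J V₁ V₂ : Set ↥Sphere2} (hJ : IsJordanCurve J) (o1 : IsOpen V₁)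
    (c1 : IsConnected V₁) (c2 : IsConnected V₂) (hd : Disjoint V₁ V₂)
    (hu : V₁ ∪ V₂ = Jᶜ) (f1 : frontier V₁ = J) (f2 : frontier V₂ = J) :
    IsClosedDisk (closure V₁) := by
  obtain ⟨q, hq⟩ := c2.nonempty
  obtain ⟨c, hc, hcJ⟩ := hJ.exists_isJordanParam
  have hcl1 := closure_eq_of_components hd hu f1
  have hcl2 := closure_eq_of_components hd.symm (by rw [union_comm, hu]) f2
  have hqc : q ∉ closure V₁ := by rw [hcl1]; simpa using hq
  have hq1 : q ∉ V₁ := fun h => hqc (subset_closure h)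
  set ψ := (sphereChart q).symm with hψ
  have hψc : Continuous ψ := continuous_sphereChart_symm q
  have hψi : Function.Injective ψ := injective_sphereChart_symm
  set W : Set ℂ := ψ ⁻¹' V₁ with hW
  have hWo : IsOpen W := o1.preimage hψc
  have hWimg : sphereChart q '' V₁ = W := sphereChart_image_eq hq1
  have hWc : IsConnected W := by
    rw [← hWimg]
    refine c1.image _ ((continuousOn_sphereChart q).mono ?_)
    exact subset_compl_singleton_iff.2 hq1
  have hψW : ψ '' W = V₁ := by
    refine image_preimage_eq_of_subset fun x hx => ⟨sphereChart q x, ?_⟩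
    exact sphereChart_left_inv fun h => hq1 (h ▸ hx)
  have hWb : Bornology.IsBounded W := by
    refine (isCompact_sphereChart_image (K := closure V₁) isClosed_closure hqc).isBounded.subset ?_
    rw [← hWimg]
    exact image_mono subset_closure
  have hC : IsConnected (ψ '' W)ᶜ := by
    rw [hψW, ← hcl2]; exact c2.closure
  obtain ⟨f, hfd, hfb⟩ := exists_bijOn_ball_of_isConnected_compl hWo hWc hWb hC
  set g := Function.invFunOn f W with hg
  have hgd : DifferentiableOn ℂ g (ball 0 1) := by
    rw [← hfb.image_eq]; exact differentiableOn_invFunOn_of_injOn hWo hfd hfb.injOn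
  have hinv : InvOn g f W (ball 0 1) := hfb.invOn_invFunOn
  have hgb : BijOn g (ball 0 1) W := (bijOn_comm hinv).2 hfb
  have hlim : ∀ z ∈ closedBall (0 : ℂ) 1, ∃ x, Tendsto g (𝓝[ball 0 1] z) (𝓝 x) := by
    intro z hz
    by_cases hz1 : ‖z‖ = 1
    · refine exists_tendsto_nhdsWithin_ball hc hcJ hgd hgb.injOn (by rwa [hgb.image_eq]) ?_ ?_ hz1 (q := q)
      · rw [hgb.image_eq, hψW, ← subset_compl_iff_disjoint_right, ← hu]
        exact subset_union_left
      · rw [hgb.image_eq, hψW, f1]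
    · have hzb : z ∈ ball (0 : ℂ) 1 :=
        mem_ball_zero_iff.2 (lt_of_le_of_ne (mem_closedBall_zero_iff.1 hz) hz1)
      exact ⟨g z, hgd.continuousOn z hzb⟩
  set G := extendFrom (ball 0 1) g with hG
  have hcb : closedBall (0 : ℂ) 1 ⊆ closure (ball 0 1) := by rw [closure_ball _ one_ne_zero]
  have hGc : ContinuousOn G (closedBall 0 1) := continuousOn_extendFrom hcb hlim
  have hGg : EqOn G g (ball 0 1) := fun z hz =>
    extendFrom_eq (hcb (ball_subset_closedBall hz)) (hgd.continuousOn z hz)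
  have hGi : InjOn G (ball 0 1) := hgb.injOn.congr hGg.symm
  have hΦc : ContinuousOn (ψ ∘ G) (closedBall 0 1) := hψc.comp_continuousOn hGc
  have hΦimg : (ψ ∘ G) '' ball 0 1 = V₁ := by
    rw [image_comp, hGg.image_eq, hgb.image_eq, hψW]
  have hcl : ∀ z ∈ closedBall (0 : ℂ) 1, (ψ ∘ G) z ∈ closure V₁ := by
    intro z hz
    rw [← hΦimg]
    exact ((hΦc z hz).mono ball_subset_closedBall).mem_closure_image (hcb hz)
  have hball : ∀ z ∈ ball (0 : ℂ) 1, (ψ ∘ G) z ∈ V₁ := fun z hz => by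
    rw [← hΦimg]; exact mem_image_of_mem _ hz
  have hV₁J : Disjoint V₁ J := by
    rw [← subset_compl_iff_disjoint_right, ← hu]
    exact subset_union_left
  have hsphere : ∀ z ∈ sphere (0 : ℂ) 1, (ψ ∘ G) z ∈ J := by
    intro z hz
    have h := hcl z (sphere_subset_closedBall hz)
    rw [closure_eq_self_union_frontier, f1] at h
    refine h.resolve_left fun hV => ?_
    have hGz : G z ∈ W := hV
    have h1 : Tendsto G (𝓝[ball 0 1] z) (𝓝 (G z)) :=
      (hGc z (sphere_subset_closedBall hz)).mono ball_subset_closedBall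
    have h2 : Tendsto (fun w => f (G w)) (𝓝[ball 0 1] z) (𝓝 (f (G z))) :=
      (hfd.continuousOn.continuousAt (hWo.mem_nhds hGz)).tendsto.comp h1
    have h3 : Tendsto (fun w => f (G w)) (𝓝[ball 0 1] z) (𝓝 z) := by
      refine (tendsto_nhdsWithin_of_tendsto_nhds tendsto_id).congr' ?_
      filter_upwards [self_mem_nhdsWithin] with w hw
      rw [hGg hw, hinv.2 hw, id]
    have : (𝓝[ball (0 : ℂ) 1] z).NeBot :=
      mem_closure_iff_nhdsWithin_neBot.1 (hcb (sphere_subset_closedBall hz))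
    have h4 := tendsto_nhds_unique h2 h3
    have h5 := hfb.mapsTo hGz
    rw [h4, mem_ball] at h5
    exact h5.ne hz
  have hsi : InjOn (ψ ∘ G) (closedBall 0 1) := by
    have key : ∀ x ∈ closedBall (0 : ℂ) 1, ∀ y ∈ sphere (0 : ℂ) 1, (ψ ∘ G) x = (ψ ∘ G) y → x = y := by
      intro x hx y hy h
      by_contra hne
      have hx1 : ‖x‖ = 1 := by
        by_contra hx1
        refine Set.disjoint_left.1 hV₁J (hball x ?_) (h ▸ hsphere y hy)
        exact mem_ball_zero_iff.2 (lt_of_le_of_ne (mem_closedBall_zero_iff.1 hx) hx1)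
      obtain ⟨U, hUo, hUn, hUe⟩ := exists_arc_of_eq hΦc (hψi.comp_injOn hGi) hc
        (by rw [hΦimg]; exact o1)
        (fun z hz hzc => Set.disjoint_left.1 hV₁J (hball z hz) (hcJ ▸ hzc))
        (fun z hz => by rw [hcJ]; exact hsphere z hz) hx1 (mem_sphere_zero_iff_norm.1 hy) hne h
      refine false_of_eq_zero_on_arc (F := fun z => G z - G x) (hGc.sub continuousOn_const)
        ((hgd.congr hGg).sub_const _) (fun a ha b hb hab => hGi ha hb (sub_left_injective hab))
        hUo hUn fun z hz => sub_eq_zero.2 (hψi (hUe z hz))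
    intro x hx y hy h
    by_cases hy1 : y ∈ sphere (0 : ℂ) 1
    · exact key x hx y hy1 h
    by_cases hx1 : x ∈ sphere (0 : ℂ) 1
    · exact (key y hy x hx1 h.symm).symm
    rw [mem_sphere_zero_iff_norm] at hx1 hy1
    exact hGi (mem_ball_zero_iff.2 (lt_of_le_of_ne (mem_closedBall_zero_iff.1 hx) hx1))
      (mem_ball_zero_iff.2 (lt_of_le_of_ne (mem_closedBall_zero_iff.1 hy) hy1)) (hψi h)
  have hrange : (ψ ∘ G) '' closedBall 0 1 = closure V₁ := by
    apply Subset.antisymm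
    · rintro _ ⟨z, hz, rfl⟩; exact hcl z hz
    · refine closure_minimal ?_ ((isCompact_closedBall _ _).image_of_continuousOn hΦc).isClosed
      rw [← hΦimg]
      exact image_mono ball_subset_closedBall
  have : CompactSpace ↥(closedBall (0 : ℂ) 1) := isCompact_iff_compactSpace.1 (isCompact_closedBall _ _)
  have hemb : IsClosedEmbedding ((closedBall (0 : ℂ) 1).domRestrict (ψ ∘ G)) :=
    (continuousOn_iff_continuous_domRestrict.1 hΦc).isClosedEmbedding (injOn_iff_injective.1 hsi)
  have e1 := hemb.isEmbedding.toHomeomorph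
  rw [Set.range_domRestrict, hrange] at e1
  have e2 := complexToPlane.toHomeomorph.image (closedBall (0 : ℂ) 1)
  rw [LinearIsometryEquiv.coe_toHomeomorph, LinearIsometryEquiv.image_closedBall, map_zero] at e2
  exact ⟨e1.symm.trans e2⟩

/-- A function that is continuous off a null sequence of open sets, and on the closure of each of
them, is continuous if it has small oscillation on almost all of them. -/
lemma continuousOn_of_null_sequence {X Y : Type*} [MetricSpace X] [MetricSpace Y]
    [CompactSpace X] {U : Set X} {D : ℕ → Set X} (hDo : ∀ j, IsOpen (D j))
    (hD : Tendsto (fun j => diam (D j)) atTop (𝓝 0))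
    {F : X → Y} (hT : ContinuousOn F (U \ ⋃ j, D j))
    (hE : ∀ j, (D j ∩ U).Nonempty → ContinuousOn F (closure (D j)))
    (hne : ∀ j, (D j ∩ U).Nonempty → ((closure (D j) ∩ U) \ ⋃ j, D j).Nonempty)
    (hF : ∀ ε > 0, ∃ N, ∀ j ≥ N, (D j ∩ U).Nonempty →
      ∀ x ∈ closure (D j), ∀ y ∈ closure (D j), dist (F x) (F y) < ε) :
    ContinuousOn F U := by
  intro x hxU
  by_cases hx : x ∈ ⋃ j, D j
  · obtain ⟨j, hj⟩ := mem_iUnion.1 hx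
    exact (((hE j ⟨x, hj, hxU⟩).mono subset_closure).continuousAt
      ((hDo j).mem_nhds hj)).continuousWithinAt
  rw [ContinuousWithinAt, Metric.tendsto_nhds]
  intro ε hε
  obtain ⟨δ, hδ, hδF⟩ := Metric.continuousWithinAt_iff.1 (hT x ⟨hxU, hx⟩) (ε / 2) (half_pos hε)
  obtain ⟨N₁, hN₁⟩ := hF (ε / 2) (half_pos hε)
  obtain ⟨N₂, hN₂⟩ := eventually_atTop.1 (hD.eventually (gt_mem_nhds (half_pos hδ)))
  have hsmall : ∀ᶠ y in 𝓝 x, ∀ j < max N₁ N₂, (D j ∩ U).Nonempty → y ∈ closure (D j) →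
      dist (F y) (F x) < ε := by
    refine (eventually_all_finite (finite_lt_nat _)).2 fun j _ => ?_
    by_cases hjU : (D j ∩ U).Nonempty
    · by_cases hxj : x ∈ closure (D j)
      · have := Metric.tendsto_nhds.1 (hE j hjU x hxj) ε hε
        rw [eventually_nhdsWithin_iff] at this
        filter_upwards [this] with y hy _ using hy
      · filter_upwards [isClosed_closure.isOpen_compl.mem_nhds hxj] with y hy _ hy'
        exact absurd hy' hy
    · exact Eventually.of_forall fun y h => absurd h hjU
  rw [eventually_nhdsWithin_iff]
  filter_upwards [hsmall, ball_mem_nhds x (half_pos hδ)] with y hy hyx hyU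
  by_cases hyD : y ∈ ⋃ j, D j
  · obtain ⟨j, hj⟩ := mem_iUnion.1 hyD
    have hjU : (D j ∩ U).Nonempty := ⟨y, hj, hyU⟩
    rcases lt_or_ge j (max N₁ N₂) with hjN | hjN
    · exact hy j hjN hjU (subset_closure hj)
    · obtain ⟨p, ⟨hp, hpU⟩, hpD⟩ := hne j hjU
      have h1 : dist y p < δ / 2 := by
        refine (dist_le_diam_of_mem isBounded_of_compactSpace (subset_closure hj) hp).trans_lt ?_
        rw [diam_closure]
        exact hN₂ j ((le_max_right _ _).trans hjN)
      have h2 : dist (F p) (F x) < ε / 2 := by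
        refine hδF ⟨hpU, hpD⟩ ?_
        have := dist_triangle_left p x y
        rw [mem_ball] at hyx
        linarith
      have h3 := hN₁ j ((le_max_left _ _).trans hjN) hjU y (subset_closure hj) p hp
      have := dist_triangle (F y) (F p) (F x)
      linarith
  · exact (hδF ⟨hyU, hyD⟩ ((mem_ball.1 hyx).trans (by linarith))).trans (by linarith)

namespace IsSierpinskiFamily

variable {D : ℕ → Set ↥Sphere2}

lemma disk_spec (hD : IsSierpinskiFamily D) (i : ℕ) : IsOpen (D i) ∧ IsConnected (D i) ∧
    IsClosedDisk (closure (D i)) ∧ IsJordanCurve (frontier (D i)) ∧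
    IsConnected (closure (D i))ᶜ ∧ interior (closure (D i)) = D i := by
  obtain ⟨E, ⟨e⟩, h⟩ := hD.1 i
  obtain ⟨h1, h2, h3, h4, h5, h6⟩ := diskBoundary_spec e
  rw [h, h4, h6]
  exact ⟨isOpen_interior, h2, ⟨e⟩, isJordanCurve_diskBoundary e, h1, rfl⟩

lemma frontier_eq (hD : IsSierpinskiFamily D) (i : ℕ) : frontier (D i) = closure (D i) \ D i :=
  (hD.disk_spec i).1.frontier_eq

lemma pairwise_disjoint (hD : IsSierpinskiFamily D) {i j : ℕ} (h : i ≠ j) :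
    Disjoint (closure (D i)) (closure (D j)) := hD.2.1 h

lemma closure_sdiff (hD : IsSierpinskiFamily D) (i : ℕ) :
    closure (D i) \ ⋃ j, D j = frontier (D i) := by
  rw [hD.frontier_eq]
  ext x
  simp only [Set.mem_sdiff, mem_iUnion, not_exists, and_congr_right_iff]
  refine fun hx => ⟨fun h => h i, fun h j hj => ?_⟩
  by_cases hij : i = j
  · exact h (hij ▸ hj)
  · exact Set.disjoint_left.1 (hD.pairwise_disjoint hij) hx (subset_closure hj)

lemma frontier_subset (hD : IsSierpinskiFamily D) (i : ℕ) : frontier (D i) ⊆ (⋃ j, D j)ᶜ := by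
  rw [← hD.closure_sdiff]
  exact fun x hx => hx.2

lemma frontier_nonempty (hD : IsSierpinskiFamily D) (i : ℕ) : (frontier (D i)).Nonempty := by
  obtain ⟨c, -, hc⟩ := (hD.disk_spec i).2.2.2.1.exists_isJordanParam
  rw [← hc]
  exact range_nonempty c

lemma isPreconnected_frontier (hD : IsSierpinskiFamily D) (i : ℕ) :
    IsPreconnected (frontier (D i)) := by
  obtain ⟨c, hc, h⟩ := (hD.disk_spec i).2.2.2.1.exists_isJordanParam
  rw [← h]
  exact isPreconnected_range hc.continuous

lemma isClosed (hD : IsSierpinskiFamily D) : IsClosed (⋃ i, D i)ᶜ :=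
  (isOpen_iUnion fun i => (hD.disk_spec i).1).isClosed_compl

lemma isConnected_sdiff_frontier (hD : IsSierpinskiFamily D) (i : ℕ) :
    IsConnected ((⋃ j, D j)ᶜ \ frontier (D i)) := by
  classical
  have hsub : ∀ j ≠ i, closure (D j) ⊆ (closure (D i))ᶜ := fun j hj =>
    subset_compl_iff_disjoint_right.2 (hD.pairwise_disjoint hj)
  have heq : (⋃ j, D j)ᶜ \ frontier (D i) = (closure (D i))ᶜ \ ⋃ j, D j := by
    rw [← hD.closure_sdiff i]
    ext x
    simp only [Set.mem_sdiff, mem_compl_iff, not_and, not_not]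
    tauto
  have hji : ∀ j, (D j ∩ (closure (D i))ᶜ).Nonempty → j ≠ i := by
    rintro _ ⟨x, hx, hx'⟩ rfl
    exact hx' (subset_closure hx)
  refine ⟨?_, ?_⟩
  · obtain ⟨x, hx⟩ := hD.frontier_nonempty (i + 1)
    refine ⟨x, hD.frontier_subset _ hx, fun hx' => ?_⟩
    exact Set.disjoint_left.1 (hD.pairwise_disjoint (Nat.succ_ne_self i))
      (frontier_subset_closure hx) (frontier_subset_closure hx')
  rw [heq]
  refine isPreconnected_of_forall_constant fun f hf => ?_
  choose p hp using fun j => hD.frontier_nonempty j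
  have hconst : ∀ j ≠ i, ∀ x ∈ frontier (D j), f x = f (p j) := fun j hj x hx =>
    (hD.isPreconnected_frontier j).constant (hf.mono fun y hy =>
      ⟨hsub j hj (frontier_subset_closure hy), hD.frontier_subset j hy⟩) hx (hp j)
  set F : ↥Sphere2 → ℤ := fun x => if h : ∃ j, x ∈ D j then (f (p h.choose)).toNat
    else (f x).toNat with hFdef
  have hFT : ∀ x ∉ ⋃ j, D j, F x = (f x).toNat := by
    intro x hx
    rw [mem_iUnion] at hx
    simp only [hFdef, dif_neg hx]
  have hFE : ∀ j ≠ i, ∀ x ∈ closure (D j), F x = (f (p j)).toNat := by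
    intro j hj x hx
    by_cases hxD : x ∈ ⋃ j, D j
    · have hxD' := mem_iUnion.1 hxD
      simp only [hFdef, dif_pos hxD']
      have : hxD'.choose = j := by
        by_contra hne
        exact Set.disjoint_left.1 (hD.pairwise_disjoint hne) (subset_closure hxD'.choose_spec) hx
      rw [this]
    · rw [hFT x hxD, hconst j hj x]
      rw [← hD.closure_sdiff]
      exact ⟨hx, hxD⟩
  have hFc : ContinuousOn F (closure (D i))ᶜ := by
    refine continuousOn_of_null_sequence (fun j => (hD.disk_spec j).1) hD.2.2.1 ?_ ?_ ?_ ?_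
    · refine ContinuousOn.congr (f := fun x => ((f x).toNat : ℤ))
        ((continuous_of_discreteTopology (f := fun b : Bool => (b.toNat : ℤ))).comp_continuousOn hf)
        fun x hx => hFT x hx.2
    · intro j hj
      exact continuousOn_const.congr fun x hx => hFE j (hji j hj) x hx
    · intro j hj
      refine ⟨p j, ⟨frontier_subset_closure (hp j), hsub j (hji j hj)
        (frontier_subset_closure (hp j))⟩, hD.frontier_subset j (hp j)⟩
    · intro ε hε
      refine ⟨0, fun j _ hj x hx y hy => ?_⟩
      rw [hFE j (hji j hj) x hx, hFE j (hji j hj) y hy, dist_self]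
      exact hε
  intro x hx y hy
  have := (hD.disk_spec i).2.2.2.2.1.isPreconnected.constant hFc hx.1 hy.1
  rw [hFT x hx.2, hFT y hy.2] at this
  revert this
  cases f x <;> cases f y <;> simp

end IsSierpinskiFamily

lemma isPeriphCircleIn_iff {X : Type*} [TopologicalSpace X] {S γ : Set X} :
    IsPeriphCircleIn S γ ↔ γ ⊆ S ∧ IsJordanCurve γ ∧ IsConnected (S \ γ) := by
  refine and_congr_right fun h => and_congr (isJordanCurve_preimage_val h) ?_
  have : S \ γ = Subtype.val '' ((Subtype.val ⁻¹' γ : Set ↥S)ᶜ) := by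
    rw [← preimage_compl, Subtype.image_preimage_val]; rfl
  rw [this, IsConnected, IsConnected, image_nonempty,
    IsInducing.subtypeVal.isPreconnected_image]

namespace IsSierpinskiFamily

variable {D : ℕ → Set ↥Sphere2}

lemma isPeriphCircleIn_frontier (hD : IsSierpinskiFamily D) (i : ℕ) :
    IsPeriphCircleIn (⋃ j, D j)ᶜ (frontier (D i)) :=
  isPeriphCircleIn_iff.2 ⟨hD.frontier_subset i, (hD.disk_spec i).2.2.2.1,
    hD.isConnected_sdiff_frontier i⟩

lemma exists_eq_frontier (hD : IsSierpinskiFamily D) {γ : Set ↥Sphere2}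
    (hγ : IsPeriphCircleIn (⋃ j, D j)ᶜ γ) : ∃ i, γ = frontier (D i) := by
  obtain ⟨hsub, hJ, hconn⟩ := isPeriphCircleIn_iff.1 hγ
  obtain ⟨A, B, hB, hBc, hAo, hAB, hu, hfB, hTA⟩ : ∃ A B : Set ↥Sphere2, IsOpen B ∧ IsConnected B ∧
      IsOpen A ∧ Disjoint A B ∧ A ∪ B = γᶜ ∧ frontier B = γ ∧ (⋃ j, D j)ᶜ \ γ ⊆ A := by
    obtain ⟨V₁, V₂, o1, o2, c1, c2, hdis, hu, f1, f2⟩ := hJ.exists_components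
    have hs : (⋃ j, D j)ᶜ \ γ ⊆ V₁ ∪ V₂ := by rw [hu]; exact fun x hx => hx.2
    by_cases h : (⋃ j, D j)ᶜ \ γ ⊆ V₁
    · exact ⟨V₁, V₂, o2, c2, o1, hdis, hu, f2, h⟩
    · obtain ⟨x, hx, hx1⟩ := not_subset.1 h
      refine ⟨V₂, V₁, o1, c1, o2, hdis.symm, by rw [union_comm, hu], f1, ?_⟩
      exact hconn.isPreconnected.subset_right_of_subset_union o1 o2 hdis hs
        ⟨x, hx, (hs hx).resolve_left hx1⟩
  obtain ⟨b, hb⟩ := hBc.nonempty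
  have hBγ : Disjoint B γ := by
    rw [← subset_compl_iff_disjoint_right, ← hu]; exact subset_union_right
  have hBD : B ⊆ ⋃ j, D j := by
    intro x hx
    by_contra hxD
    exact Set.disjoint_left.1 hAB (hTA ⟨hxD, Set.disjoint_left.1 hBγ hx⟩) hx
  obtain ⟨i, hi⟩ := mem_iUnion.1 (hBD hb)
  refine ⟨i, ?_⟩
  have hDo := fun j => (hD.disk_spec j).1
  have h1 : B ⊆ D i := by
    refine hBc.isPreconnected.subset_left_of_subset_union (hDo i)
      (isOpen_iUnion fun j => isOpen_iUnion fun _ : j ≠ i => hDo j) ?_ ?_ ⟨b, hb, hi⟩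
    · simp only [disjoint_iUnion_right]
      intro j hj
      exact ((hD.pairwise_disjoint hj.symm).mono subset_closure subset_closure)
    · intro x hx
      obtain ⟨j, hj⟩ := mem_iUnion.1 (hBD hx)
      by_cases hji : j = i
      · left; exact hji ▸ hj
      · right; exact mem_iUnion₂.2 ⟨j, hji, hj⟩
  have h2 : D i ⊆ B := by
    refine (hD.disk_spec i).2.1.isPreconnected.subset_right_of_subset_union hAo hB hAB ?_ ⟨b, hi, hb⟩
    rw [hu]
    exact fun x hx hxγ => hsub hxγ (mem_iUnion.2 ⟨i, hx⟩)
  rw [← hfB, h1.antisymm h2]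

end IsSierpinskiFamily

lemma Homeomorph.exists_continuousOn_extension {X Y : Type*} [TopologicalSpace X]
    [TopologicalSpace Y] [Nonempty Y] {A : Set X} {B : Set Y} (h : ↥A ≃ₜ ↥B) :
    ∃ v : X → Y, ContinuousOn v A ∧ InjOn v A ∧ v '' A = B ∧ ∀ x : ↥A, v x = h x := by
  obtain ⟨y₀⟩ := ‹Nonempty Y›
  set v := Function.extend Subtype.val (fun x : ↥A => (h x : Y)) fun _ => y₀ with hv
  have hvx : ∀ x : ↥A, v x = h x := fun x => Subtype.val_injective.extend_apply _ _ x
  refine ⟨v, ?_, ?_, ?_, hvx⟩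
  · rw [continuousOn_iff_continuous_domRestrict]
    have : A.domRestrict v = fun x => (h x : Y) := funext hvx
    rw [this]
    fun_prop
  · intro x hx y hy hxy
    have := (hvx ⟨x, hx⟩).symm.trans (hxy.trans (hvx ⟨y, hy⟩))
    exact congrArg Subtype.val (h.injective (Subtype.ext this))
  · ext y
    constructor
    · rintro ⟨x, hx, rfl⟩
      rw [hvx ⟨x, hx⟩]; exact (h _).2
    · intro hy
      refine ⟨h.symm ⟨y, hy⟩, (h.symm ⟨y, hy⟩).2, ?_⟩
      rw [hvx, h.apply_symm_apply]

/-- The cone over a self-map of the unit sphere. -/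
lemma exists_cone_extension {E : Type*} [NormedAddCommGroup E] [NormedSpace ℝ E] {φ : E → E}
    (hφ : ContinuousOn φ (sphere 0 1)) (hi : InjOn φ (sphere 0 1))
    (hm : MapsTo φ (sphere 0 1) (sphere 0 1)) :
    ∃ C : E → E, ContinuousOn C (closedBall 0 1) ∧ InjOn C (closedBall 0 1) ∧
      (∀ x, ‖C x‖ = ‖x‖) ∧ EqOn C φ (sphere 0 1) := by
  set C : E → E := fun x => ‖x‖ • φ (‖x‖⁻¹ • x) with hC
  have hs : ∀ x : E, x ≠ 0 → ‖x‖⁻¹ • x ∈ sphere (0 : E) 1 := by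
    intro x hx
    rw [mem_sphere_zero_iff_norm, norm_smul, norm_inv, norm_norm, inv_mul_cancel₀ (norm_ne_zero_iff.2 hx)]
  have hn : ∀ x, ‖C x‖ = ‖x‖ := by
    intro x
    by_cases hx : x = 0
    · simp [hC, hx]
    · rw [hC, norm_smul, mem_sphere_zero_iff_norm.1 (hm (hs x hx)), norm_norm, mul_one]
  refine ⟨C, ?_, ?_, hn, ?_⟩
  · refine Continuous.continuousOn (continuous_iff_continuousAt.2 fun x => ?_)
    by_cases hx : x = 0
    · subst hx
      have h0 : C 0 = 0 := by simp [hC]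
      rw [ContinuousAt, h0, tendsto_zero_iff_norm_tendsto_zero]
      simp_rw [hn]
      exact tendsto_norm_zero
    · have hA : ContinuousOn C {0}ᶜ := by
        refine continuousOn_id.norm.smul (hφ.comp ?_ fun y hy => hs y hy)
        refine ContinuousOn.smul (ContinuousOn.inv₀ (by fun_prop) ?_) continuousOn_id
        intro y hy; exact norm_ne_zero_iff.2 hy
      exact hA.continuousAt (isOpen_compl_singleton.mem_nhds hx)
  · intro x _ y _ hxy
    have hxy' : ‖x‖ = ‖y‖ := by rw [← hn x, ← hn y, hxy]
    by_cases hx : x = 0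
    · rw [hx, norm_zero] at hxy'
      rw [hx, norm_eq_zero.1 hxy'.symm]
    have hy : y ≠ 0 := by
      rintro rfl; rw [norm_zero] at hxy'; exact hx (norm_eq_zero.1 hxy')
    have hx0 := norm_ne_zero_iff.2 hx
    simp only [hC, ← hxy'] at hxy
    have h1 := smul_right_injective _ hx0 hxy
    have h2 := hi (hs x hx) (by rw [hxy']; exact hs y hy) h1
    exact smul_right_injective _ (inv_ne_zero hx0) h2
  · intro x hx
    have hx := mem_sphere_zero_iff_norm.1 hx
    simp [hC, hx]

/-- Embeddings between the boundaries of closed disks extend to the disks. -/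
lemma exists_disk_extension {E E' : Set ↥Sphere2} (e : ↥E ≃ₜ ↥UnitDisk2) (e' : ↥E' ≃ₜ ↥UnitDisk2)
    {f : ↥Sphere2 → ↥Sphere2} (hf : ContinuousOn f (diskBoundary e))
    (hi : InjOn f (diskBoundary e)) (hm : MapsTo f (diskBoundary e) (diskBoundary e')) :
    ∃ F : ↥Sphere2 → ↥Sphere2, ContinuousOn F E ∧ InjOn F E ∧ EqOn F f (diskBoundary e) ∧
      MapsTo F E E' ∧ MapsTo F (E \ diskBoundary e) (E' \ diskBoundary e') := by
  have : Nonempty ↥Sphere2 := ⟨(e.symm ⟨0, by simp⟩ : ↥E)⟩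
  obtain ⟨v, hvc, hvi, hvE, hv⟩ := e.exists_continuousOn_extension
  obtain ⟨u, huc, hui, huE, hu⟩ := e.symm.exists_continuousOn_extension
  obtain ⟨v', hvc', hvi', hvE', hv'⟩ := e'.exists_continuousOn_extension
  obtain ⟨u', huc', hui', huE', hu'⟩ := e'.symm.exists_continuousOn_extension
  have hvu : ∀ x ∈ UnitDisk2, v (u x) = x := fun x hx => by
    rw [hu ⟨x, hx⟩, hv, e.apply_symm_apply]
  have huv : ∀ x ∈ E, u (v x) = x := fun x hx => by
    rw [hv ⟨x, hx⟩, hu, e.symm_apply_apply]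
  have hvu' : ∀ x ∈ UnitDisk2, v' (u' x) = x := fun x hx => by
    rw [hu' ⟨x, hx⟩, hv', e'.apply_symm_apply]
  have huv' : ∀ x ∈ E', u' (v' x) = x := fun x hx => by
    rw [hv' ⟨x, hx⟩, hu', e'.symm_apply_apply]
  have hb : ∀ x ∈ E, x ∈ diskBoundary e ↔ v x ∈ UnitCircle := by
    intro x hx
    rw [hv ⟨x, hx⟩]
    constructor
    · rintro ⟨y, hy, rfl⟩; exact hy
    · intro h; exact ⟨⟨x, hx⟩, h, rfl⟩
  have hb' : ∀ x ∈ E', x ∈ diskBoundary e' ↔ v' x ∈ UnitCircle := by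
    intro x hx
    rw [hv' ⟨x, hx⟩]
    constructor
    · rintro ⟨y, hy, rfl⟩; exact hy
    · intro h; exact ⟨⟨x, hx⟩, h, rfl⟩
  have hvm : ∀ x ∈ E, v x ∈ UnitDisk2 := fun x hx => hvE ▸ mem_image_of_mem v hx
  have hum : ∀ x ∈ UnitDisk2, u x ∈ E := fun x hx => huE ▸ mem_image_of_mem u hx
  have hvm' : ∀ x ∈ E', v' x ∈ UnitDisk2 := fun x hx => hvE' ▸ mem_image_of_mem v' hx
  have hum' : ∀ x ∈ UnitDisk2, u' x ∈ E' := fun x hx => huE' ▸ mem_image_of_mem u' hx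
  have hcd : UnitCircle ⊆ UnitDisk2 := sphere_subset_closedBall
  have hus : MapsTo u UnitCircle (diskBoundary e) := fun x hx => by
    rw [hb _ (hum x (hcd hx)), hvu x (hcd hx)]; exact hx
  have hE' := diskBoundary_subset e'
  have hE := diskBoundary_subset e
  obtain ⟨C, hCc, hCi, hCn, hCe⟩ := exists_cone_extension (φ := v' ∘ f ∘ u)
    (hvc'.comp (hf.comp (huc.mono hcd) hus) fun x hx => hE' (hm (hus hx)))
    (fun x hx y hy h => hui (hcd hx) (hcd hy) (hi (hus hx) (hus hy)
      (hvi' (hE' (hm (hus hx))) (hE' (hm (hus hy))) h)))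
    (fun x hx => (hb' _ (hE' (hm (hus hx)))).1 (hm (hus hx)))
  have hCm : ∀ x ∈ UnitDisk2, C x ∈ UnitDisk2 := fun x hx => by
    rw [mem_closedBall_zero_iff, hCn]; exact mem_closedBall_zero_iff.1 hx
  have hmaps : MapsTo (u' ∘ C ∘ v) E E' := fun x hx => hum' _ (hCm _ (hvm x hx))
  refine ⟨u' ∘ C ∘ v, ?_, ?_, ?_, hmaps, ?_⟩
  · exact huc'.comp (hCc.comp hvc fun x hx => hvm x hx) fun x hx => hCm _ (hvm x hx)
  · intro x hx y hy h
    exact hvi hx hy (hCi (hvm x hx) (hvm y hy) (hui' (hCm _ (hvm x hx)) (hCm _ (hvm y hy)) h))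
  · intro x hx
    have := hCe ((hb x (hE hx)).1 hx)
    simp only [Function.comp_apply] at this ⊢
    rw [this, huv x (hE hx), huv' _ (hE' (hm hx))]
  · rintro x ⟨hx, hxb⟩
    refine ⟨hmaps hx, fun h => hxb ?_⟩
    rw [hb' _ (hmaps hx)] at h
    simp only [Function.comp_apply] at h
    rw [hvu' _ (hCm _ (hvm x hx)), mem_sphere_zero_iff_norm, hCn] at h
    rw [hb x hx]
    exact mem_sphere_zero_iff_norm.2 h

/-- Small sets lie in small compact sets with connected complement. -/
lemma exists_small_nonseparating {ε : ℝ} (hε : 0 < ε) : ∃ δ > 0, ∀ x : ↥Sphere2,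
    ∃ K : Set ↥Sphere2, ball x δ ⊆ K ∧ diam K ≤ ε ∧ IsClosed K ∧ IsPreconnected Kᶜ := by
  have key : ∀ x : ↥Sphere2, ∃ O K : Set ↥Sphere2, IsOpen O ∧ x ∈ O ∧ O ⊆ K ∧ diam K ≤ ε ∧ IsClosed K ∧
      IsPreconnected Kᶜ := by
    intro x
    obtain ⟨q, hq⟩ : ∃ q : ↥Sphere2, x ≠ q := ⟨-x, ne_neg_of_mem_unit_sphere ℝ x⟩
    have hc := (continuous_sphereChart_symm q).continuousAt (x := sphereChart q x)
    rw [ContinuousAt, sphereChart_left_inv hq] at hc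
    obtain ⟨r, hr, hrb⟩ := nhds_basis_closedBall.mem_iff.1
      (hc (closedBall_mem_nhds x (half_pos hε)))
    set a := sphereChart q x with ha
    have hcpt : IsCompact ((sphereChart q).symm '' closedBall a r) :=
      (isCompact_closedBall _ _).image (continuous_sphereChart_symm q)
    have hK : LogAcyclic ((sphereChart q).symm '' closedBall a r) :=
      LogAcyclic.image_of_convex (convex_closedBall _ _) (isCompact_closedBall _ _)
        (continuous_sphereChart_symm q).continuousOn injective_sphereChart_symm.injOn
    refine ⟨(sphereChart q).symm '' ball a r, _, isOpen_sphereChart_symm_image isOpen_ball,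
      ⟨a, mem_ball_self hr, sphereChart_left_inv hq⟩, image_mono ball_subset_closedBall,
      ?_, hcpt.isClosed, hK.isPreconnected_compl hcpt.isClosed⟩
    refine (diam_mono (image_subset_iff.2 hrb) isBounded_closedBall).trans ?_
    exact (diam_closedBall (half_pos hε).le).trans (by linarith)
  choose O K hO hxO hOK hKd hKc hKp using key
  obtain ⟨δ, hδ, hδO⟩ := lebesgue_number_lemma_of_metric (isCompact_univ (X := ↥Sphere2)) hO
    (fun x _ => mem_iUnion.2 ⟨x, hxO x⟩)
  refine ⟨δ, hδ, fun x => ?_⟩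
  obtain ⟨i, hi⟩ := hδO x (mem_univ x)
  exact ⟨K i, hi.trans (hOK i), hKd i, hKc i, hKp i⟩

/-- The sets `V` and `O` are the two complementary components of the Jordan curve `J`. -/
structure IsJordanSplit (J V O : Set ↥Sphere2) : Prop where
  isJordanCurve : IsJordanCurve J
  isOpen_left : IsOpen V
  isOpen_right : IsOpen O
  isConnected_left : IsConnected V
  isConnected_right : IsConnected O
  disjoint : Disjoint V O
  union_eq : V ∪ O = Jᶜ
  frontier_left : frontier V = J
  frontier_right : frontier O = J

namespace IsJordanSplit

variable {J V O : Set ↥Sphere2}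

lemma symm (h : IsJordanSplit J V O) : IsJordanSplit J O V :=
  ⟨h.1, h.3, h.2, h.5, h.4, h.6.symm, by rw [union_comm, h.7], h.9, h.8⟩

lemma closure_left (h : IsJordanSplit J V O) : closure V = Oᶜ :=
  closure_eq_of_components h.disjoint h.union_eq h.frontier_left

lemma closure_right (h : IsJordanSplit J V O) : closure O = Vᶜ := h.symm.closure_left

lemma closure_left_eq_union (h : IsJordanSplit J V O) : closure V = V ∪ J := by
  rw [closure_eq_self_union_frontier, h.frontier_left]

lemma disjoint_curve (h : IsJordanSplit J V O) : Disjoint V J := by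
  rw [← subset_compl_iff_disjoint_right, ← h.union_eq]
  exact subset_union_left

lemma isClosedDisk_left (h : IsJordanSplit J V O) : IsClosedDisk (closure V) :=
  isClosedDisk_closure h.1 h.2 h.4 h.5 h.6 h.7 h.8 h.9

lemma interior_closure_left (h : IsJordanSplit J V O) : interior (closure V) = V := by
  rw [h.closure_left, interior_compl, h.closure_right, compl_compl]

lemma subset_or_subset (h : IsJordanSplit J V O) {A : Set ↥Sphere2} (hA : IsPreconnected A)
    (hAJ : Disjoint A J) : A ⊆ V ∨ A ⊆ O := by
  have hs : A ⊆ V ∪ O := by rw [h.union_eq]; exact subset_compl_iff_disjoint_right.2 hAJ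
  by_cases hV : A ⊆ V
  · exact Or.inl hV
  · obtain ⟨x, hx, hxV⟩ := not_subset.1 hV
    exact Or.inr (hA.subset_right_of_subset_union h.isOpen_left h.isOpen_right h.disjoint hs
      ⟨x, hx, (hs hx).resolve_left hxV⟩)

end IsJordanSplit

lemma IsJordanCurve.exists_split {J : Set ↥Sphere2} (hJ : IsJordanCurve J) {A : Set ↥Sphere2}
    (hA : IsPreconnected A) (hAJ : Disjoint A J) : ∃ V O, IsJordanSplit J V O ∧ A ⊆ O := by
  obtain ⟨V₁, V₂, o1, o2, c1, c2, hd, hu, f1, f2⟩ := hJ.exists_components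
  have h : IsJordanSplit J V₁ V₂ := ⟨hJ, o1, o2, c1, c2, hd, hu, f1, f2⟩
  rcases h.subset_or_subset hA hAJ with h' | h'
  · exact ⟨_, _, h.symm, h'⟩
  · exact ⟨_, _, h, h'⟩

lemma IsSierpinskiFamily.isJordanSplit {D : ℕ → Set ↥Sphere2} (hD : IsSierpinskiFamily D) (i : ℕ) :
    IsJordanSplit (frontier (D i)) (D i) (closure (D i))ᶜ := by
  obtain ⟨h1, h2, -, h4, h5, h6⟩ := hD.disk_spec i
  refine ⟨h4, h1, isClosed_closure.isOpen_compl, h2, h5, ?_, ?_, rfl, ?_⟩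
  · exact disjoint_compl_right_iff_subset.2 subset_closure
  · rw [h1.frontier_eq]
    ext x
    have := @subset_closure _ _ (D i) x
    simp only [mem_union, mem_compl_iff, Set.mem_sdiff, not_and, not_not]
    tauto
  · rw [frontier_compl, isClosed_closure.frontier_eq, h6, h1.frontier_eq]

lemma image_eq_image_domRestrict {X Y : Type*} {K : Set X} {η : X → Y} {A : Set X} (hA : A ⊆ K) :
    η '' A = K.domRestrict η '' (Subtype.val ⁻¹' A) := by
  ext y
  constructor
  · rintro ⟨x, hx, rfl⟩; exact ⟨⟨x, hA hx⟩, hx, rfl⟩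
  · rintro ⟨x, hx, rfl⟩; exact ⟨x, hx, rfl⟩

section Image

variable {X Y : Type*} [TopologicalSpace X] [TopologicalSpace Y] [T2Space Y] {K : Set X} {η : X → Y}

lemma isClosedEmbedding_domRestrict (hK : IsCompact K) (hη : ContinuousOn η K) (hi : InjOn η K) :
    IsClosedEmbedding (K.domRestrict η) :=
  have := isCompact_iff_compactSpace.1 hK
  (continuousOn_iff_continuous_domRestrict.1 hη).isClosedEmbedding (injOn_iff_injective.1 hi)

lemma isJordanCurve_image_iff (hK : IsCompact K) (hη : ContinuousOn η K) (hi : InjOn η K)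
    {A : Set X} (hA : A ⊆ K) : IsJordanCurve (η '' A) ↔ IsJordanCurve A := by
  rw [image_eq_image_domRestrict hA,
    (isClosedEmbedding_domRestrict hK hη hi).isEmbedding.isJordanCurve_image,
    isJordanCurve_preimage_val hA]

lemma isConnected_image_iff (hK : IsCompact K) (hη : ContinuousOn η K) (hi : InjOn η K)
    {A : Set X} (hA : A ⊆ K) : IsConnected (η '' A) ↔ IsConnected A := by
  rw [IsConnected, IsConnected, image_nonempty, image_eq_image_domRestrict hA,
    (isClosedEmbedding_domRestrict hK hη hi).isEmbedding.isInducing.isPreconnected_image,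
    ← IsInducing.subtypeVal.isPreconnected_image, Subtype.image_preimage_val, inter_eq_right.2 hA]

lemma isPeriphCircleIn_image_iff (hK : IsCompact K) (hη : ContinuousOn η K) (hi : InjOn η K)
    {A : Set X} (hA : A ⊆ K) : IsPeriphCircleIn (η '' K) (η '' A) ↔ IsPeriphCircleIn K A := by
  rw [isPeriphCircleIn_iff, isPeriphCircleIn_iff, isJordanCurve_image_iff hK hη hi hA,
    ← hi.image_sdiff_subset hA, isConnected_image_iff hK hη hi sdiff_subset]
  exact and_congr_left fun _ => ⟨fun _ => hA, fun h => image_mono h⟩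

end Image

namespace IsSierpinskiFamily

variable {D V O : ℕ → Set ↥Sphere2} {η : ↥Sphere2 → ↥Sphere2}

lemma isPeriphCircleIn_image_iff_exists (hD : IsSierpinskiFamily D)
    (hη : ContinuousOn η (⋃ i, D i)ᶜ) (hi : InjOn η (⋃ i, D i)ᶜ) {γ : Set ↥Sphere2} :
    IsPeriphCircleIn (η '' (⋃ i, D i)ᶜ) γ ↔ ∃ k, γ = η '' frontier (D k) := by
  constructor
  · intro h
    obtain ⟨A, hA, rfl⟩ := subset_image_iff.1 h.1
    rw [isPeriphCircleIn_image_iff hD.isClosed.isCompact hη hi hA] at h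
    obtain ⟨k, rfl⟩ := hD.exists_eq_frontier h
    exact ⟨k, rfl⟩
  · rintro ⟨k, rfl⟩
    rw [isPeriphCircleIn_image_iff hD.isClosed.isCompact hη hi (hD.frontier_subset k)]
    exact hD.isPeriphCircleIn_frontier k

lemma exists_split_image (hD : IsSierpinskiFamily D)
    (hη : ContinuousOn η (⋃ i, D i)ᶜ) (hi : InjOn η (⋃ i, D i)ᶜ) (k : ℕ) :
    ∃ V O, IsJordanSplit (η '' frontier (D k)) V O ∧
      η '' (⋃ i, D i)ᶜ \ η '' frontier (D k) ⊆ O := by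
  have h := isPeriphCircleIn_iff.1 ((hD.isPeriphCircleIn_image_iff_exists hη hi).2 ⟨k, rfl⟩)
  exact h.2.1.exists_split h.2.2.isPreconnected disjoint_sdiff_left

lemma disjoint_image_frontier (hD : IsSierpinskiFamily D) (hi : InjOn η (⋃ i, D i)ᶜ)
    {k l : ℕ} (hkl : k ≠ l) : Disjoint (η '' frontier (D k)) (η '' frontier (D l)) := by
  rw [Set.disjoint_left]
  rintro _ ⟨x, hx, rfl⟩ ⟨y, hy, hxy⟩
  have := hi (hD.frontier_subset l hy) (hD.frontier_subset k hx) hxy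
  subst this
  exact Set.disjoint_left.1 (hD.pairwise_disjoint hkl) (frontier_subset_closure hx)
    (frontier_subset_closure hy)

lemma disjoint_side {k : ℕ} (hV : IsJordanSplit (η '' frontier (D k)) (V k) (O k))
    (hO : η '' (⋃ i, D i)ᶜ \ η '' frontier (D k) ⊆ O k) :
    Disjoint (V k) (η '' (⋃ i, D i)ᶜ) := by
  rw [Set.disjoint_left]
  intro x hx hxS
  by_cases h : x ∈ η '' frontier (D k)
  · exact Set.disjoint_left.1 hV.disjoint_curve hx h
  · exact Set.disjoint_left.1 hV.disjoint hx (hO ⟨hxS, h⟩)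

lemma disjoint_closure_side (hD : IsSierpinskiFamily D) (hi : InjOn η (⋃ i, D i)ᶜ)
    (hV : ∀ k, IsJordanSplit (η '' frontier (D k)) (V k) (O k))
    (hO : ∀ k, η '' (⋃ i, D i)ᶜ \ η '' frontier (D k) ⊆ O k) {k l : ℕ} (hkl : k ≠ l) :
    Disjoint (closure (V k)) (closure (V l)) := by
  have hγ := hD.disjoint_image_frontier hi hkl
  have hγS : ∀ k, η '' frontier (D k) ⊆ η '' (⋃ i, D i)ᶜ := fun k => image_mono (hD.frontier_subset k)
  have hVS : ∀ k, Disjoint (V k) (η '' (⋃ i, D i)ᶜ) := fun k => disjoint_side (hV k) (hO k)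
  have hVkl : Disjoint (V k) (V l) := by
    rcases (hV l).subset_or_subset (hV k).isConnected_left.isPreconnected
      ((hVS k).mono_right (hγS l)) with h | h
    · exfalso
      obtain ⟨x, hx⟩ := (hD.frontier_nonempty k).image η
      have hxc : x ∈ closure (V l) := by
        refine closure_mono h (frontier_subset_closure ?_)
        rwa [(hV k).frontier_left]
      rw [(hV l).closure_left_eq_union] at hxc
      rcases hxc with h' | h'
      · exact Set.disjoint_left.1 (hVS l) h' (hγS k hx)
      · exact Set.disjoint_left.1 hγ hx h'
    · exact ((hV l).disjoint.mono_right h).symm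
  rw [(hV k).closure_left_eq_union, (hV l).closure_left_eq_union]
  simp only [disjoint_union_left, disjoint_union_right]
  exact ⟨⟨hVkl, ((hVS l).mono_right (hγS k)).symm⟩, (hVS k).mono_right (hγS l), hγ⟩

lemma tendsto_diam_side (hD : IsSierpinskiFamily D)
    (hη : ContinuousOn η (⋃ i, D i)ᶜ) (hi : InjOn η (⋃ i, D i)ᶜ)
    (hV : ∀ k, IsJordanSplit (η '' frontier (D k)) (V k) (O k))
    (hO : ∀ k, η '' (⋃ i, D i)ᶜ \ η '' frontier (D k) ⊆ O k) :
    Tendsto (fun k => diam (V k)) atTop (𝓝 0) := by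
  obtain ⟨a, ha⟩ := (hD.frontier_nonempty 0).image η
  obtain ⟨b, hb⟩ := (hD.frontier_nonempty 1).image η
  have hγS : ∀ k, η '' frontier (D k) ⊆ η '' (⋃ i, D i)ᶜ := fun k => image_mono (hD.frontier_subset k)
  have hab : 0 < dist a b := by
    refine dist_pos.2 ?_
    rintro rfl
    exact Set.disjoint_left.1 (hD.disjoint_image_frontier hi zero_ne_one) ha hb
  rw [Metric.tendsto_atTop]
  intro ε hε
  obtain ⟨δ, hδ, hδK⟩ := exists_small_nonseparating
    (ε := min (ε / 2) (dist a b / 2)) (lt_min (half_pos hε) (half_pos hab))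
  obtain ⟨ρ, hρ, hρη⟩ := Metric.uniformContinuousOn_iff.1
    (hD.isClosed.isCompact.uniformContinuousOn_of_continuous hη) δ hδ
  obtain ⟨N, hN⟩ := eventually_atTop.1 (hD.2.2.1.eventually (gt_mem_nhds hρ))
  refine ⟨N, fun k hk => ?_⟩
  obtain ⟨x, hx⟩ := hD.frontier_nonempty k
  obtain ⟨K, hKb, hKd, hKc, hKp⟩ := hδK (η x)
  have hγK : η '' frontier (D k) ⊆ K := by
    rintro _ ⟨y, hy, rfl⟩
    refine hKb (hρη y (hD.frontier_subset k hy) x (hD.frontier_subset k hx) ?_)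
    refine (dist_le_diam_of_mem isBounded_of_compactSpace (frontier_subset_closure hy)
      (frontier_subset_closure hx)).trans_lt ?_
    rw [diam_closure]
    exact hN k hk
  rw [dist_zero_right, Real.norm_of_nonneg diam_nonneg]
  rcases (hV k).subset_or_subset hKp (disjoint_compl_left_iff_subset.2 hγK) with h | h
  · exfalso
    have hSK : η '' (⋃ i, D i)ᶜ ⊆ K := by
      intro y hy
      by_contra hyK
      exact Set.disjoint_left.1 (disjoint_side (hV k) (hO k)) (h hyK) hy
    have := dist_le_diam_of_mem isBounded_of_compactSpace (hSK (hγS 0 ha)) (hSK (hγS 1 hb))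
    have := hKd.trans (min_le_right _ _)
    linarith
  · have hVK : V k ⊆ K := by
      intro y hy
      by_contra hyK
      exact Set.disjoint_left.1 (hV k).disjoint hy (h hyK)
    have := diam_mono hVK isBounded_of_compactSpace
    have := hKd.trans (min_le_left _ _)
    linarith

end IsSierpinskiFamily

/-- A continuous injection maps the interior of a closed disk to an open set. -/
lemma isOpen_image_of_isClosedDisk {J V O : Set ↥Sphere2} (h : IsJordanSplit J V O)
    {H : ↥Sphere2 → ↥Sphere2} (hH : Continuous H) (hi : Function.Injective H) :
    IsOpen (H '' V) := by
  obtain ⟨e⟩ := h.isClosedDisk_left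
  have hb : diskBoundary e = J := by
    rw [← (diskBoundary_spec e).2.2.2.1, h.interior_closure_left, h.frontier_left]
  have hemb : IsEmbedding H := (hH.isClosedEmbedding hi).isEmbedding
  set e₂ := (hemb.homeomorphImage (closure V)).symm.trans e with he₂
  have hb₂ : diskBoundary e₂ = H '' J := by
    rw [← hb]
    ext y
    constructor
    · rintro ⟨⟨y, x, hx, rfl⟩, hy, rfl⟩
      have : (hemb.homeomorphImage (closure V)).symm ⟨H x, x, hx, rfl⟩ = ⟨x, hx⟩ :=
        (Homeomorph.symm_apply_eq _).2 rfl
      refine ⟨x, ⟨⟨x, hx⟩, ?_, rfl⟩, rfl⟩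
      rw [← this]
      exact hy
    · rintro ⟨_, ⟨x, hx, rfl⟩, rfl⟩
      refine ⟨hemb.homeomorphImage (closure V) x, ?_, rfl⟩
      simpa [he₂] using hx
  have h1 : interior (H '' closure V) = H '' V := by
    rw [(diskBoundary_spec e₂).2.2.1, hb₂, ← image_sdiff hi, h.closure_left_eq_union,
      union_sdiff_right, h.disjoint_curve.sdiff_eq_left]
  rw [← h1]
  exact isOpen_interior

namespace IsSierpinskiFamily

variable {D V O : ℕ → Set ↥Sphere2} {η : ↥Sphere2 → ↥Sphere2}

/-- A continuous injection of the sphere into itself is surjective. -/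
lemma surjective_of_injective (hD : IsSierpinskiFamily D) {H : ↥Sphere2 → ↥Sphere2}
    (hH : Continuous H) (hi : Function.Injective H) : Function.Surjective H := by
  have ho : IsOpen (range H) := by
    have h := fun i => isOpen_image_of_isClosedDisk (hD.isJordanSplit i).symm hH hi
    have : range H = H '' (closure (D 0))ᶜ ∪ H '' (closure (D 1))ᶜ := by
      rw [← image_union, ← compl_inter, (hD.pairwise_disjoint zero_ne_one).inter_eq, compl_empty,
        image_univ]
    rw [this]
    exact (h 0).union (h 1)
  have hne : (range H).Nonempty := ⟨_, mem_range_self (hD.frontier_nonempty 0).some⟩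
  exact range_eq_univ.1 (IsClopen.eq_univ ⟨(isCompact_range hH).isClosed, ho⟩ hne)

lemma union_sides_eq_univ (hD : IsSierpinskiFamily D)
    (hη : ContinuousOn η (⋃ i, D i)ᶜ) (hi : InjOn η (⋃ i, D i)ᶜ)
    (hV : ∀ k, IsJordanSplit (η '' frontier (D k)) (V k) (O k))
    (hO : ∀ k, η '' (⋃ i, D i)ᶜ \ η '' frontier (D k) ⊆ O k) :
    η '' (⋃ i, D i)ᶜ ∪ ⋃ k, V k = univ := by
  classical
  have hS := fun k => hD.isJordanSplit k
  have hVS : ∀ k, Disjoint (V k) (η '' (⋃ i, D i)ᶜ) := fun k => disjoint_side (hV k) (hO k)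
  have hext : ∀ k, ∃ F : ↥Sphere2 → ↥Sphere2, ContinuousOn F (closure (D k)) ∧
      InjOn F (closure (D k)) ∧ EqOn F η (frontier (D k)) ∧
      MapsTo F (closure (D k)) (closure (V k)) ∧ MapsTo F (D k) (V k) := by
    intro k
    obtain ⟨e⟩ := (hS k).isClosedDisk_left
    obtain ⟨e'⟩ := (hV k).isClosedDisk_left
    have hb : diskBoundary e = frontier (D k) := by
      rw [← (diskBoundary_spec e).2.2.2.1, (hS k).interior_closure_left]
    have hb' : diskBoundary e' = η '' frontier (D k) := by
      rw [← (diskBoundary_spec e').2.2.2.1, (hV k).interior_closure_left, (hV k).frontier_left]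
    obtain ⟨F, h1, h2, h3, h4, h5⟩ := exists_disk_extension e e' (f := η)
      (by rw [hb]; exact hη.mono (hD.frontier_subset k))
      (by rw [hb]; exact hi.mono (hD.frontier_subset k))
      (by rw [hb, hb']; exact mapsTo_image _ _)
    rw [← (diskBoundary_spec e).2.2.1, ← (diskBoundary_spec e').2.2.1,
      (hS k).interior_closure_left, (hV k).interior_closure_left] at h5
    exact ⟨F, h1, h2, hb ▸ h3, h4, h5⟩
  choose F hFc hFi hFe hFm hFV using hext
  set H : ↥Sphere2 → ↥Sphere2 := fun x => if h : ∃ k, x ∈ D k then F h.choose x else η x with hH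
  have hHT : ∀ x ∉ ⋃ i, D i, H x = η x := by
    intro x hx
    rw [mem_iUnion] at hx
    simp only [hH, dif_neg hx]
  have hHE : ∀ k, ∀ x ∈ closure (D k), H x = F k x := by
    intro k x hx
    by_cases hxD : x ∈ ⋃ j, D j
    · have hxD' := mem_iUnion.1 hxD
      simp only [hH, dif_pos hxD']
      have : hxD'.choose = k := by
        by_contra hne
        exact Set.disjoint_left.1 (hD.pairwise_disjoint hne) (subset_closure hxD'.choose_spec) hx
      rw [this]
    · rw [hHT x hxD, hFe k]
      rw [← hD.closure_sdiff]
      exact ⟨hx, hxD⟩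
  have hHD : ∀ k, ∀ x ∈ D k, H x ∈ V k := fun k x hx => by
    rw [hHE k x (subset_closure hx)]; exact hFV k hx
  have hHS : ∀ x ∉ ⋃ i, D i, H x ∈ η '' (⋃ i, D i)ᶜ := fun x hx => by
    rw [hHT x hx]; exact mem_image_of_mem η hx
  have hHc : Continuous H := by
    rw [← continuousOn_univ]
    refine continuousOn_of_null_sequence (fun j => (hD.disk_spec j).1) hD.2.2.1 ?_ ?_ ?_ ?_
    · rw [← compl_eq_univ_sdiff]
      exact hη.congr fun x hx => hHT x hx
    · exact fun j _ => (hFc j).congr (hHE j)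
    · intro j _
      rw [inter_univ, hD.closure_sdiff]
      exact hD.frontier_nonempty j
    · intro ε hε
      obtain ⟨N, hN⟩ := eventually_atTop.1
        ((hD.tendsto_diam_side hη hi hV hO).eventually (gt_mem_nhds hε))
      refine ⟨N, fun j hj _ x hx y hy => ?_⟩
      rw [hHE j x hx, hHE j y hy]
      refine (dist_le_diam_of_mem isBounded_of_compactSpace (hFm j hx) (hFm j hy)).trans_lt ?_
      rw [diam_closure]
      exact hN j hj
  have hHi : Function.Injective H := by
    intro x y hxy
    by_cases hx : x ∈ ⋃ i, D i <;> by_cases hy : y ∈ ⋃ i, D i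
    · obtain ⟨k, hk⟩ := mem_iUnion.1 hx
      obtain ⟨l, hl⟩ := mem_iUnion.1 hy
      have hkl : k = l := by
        by_contra hkl
        exact Set.disjoint_left.1 (hD.disjoint_closure_side hi hV hO hkl)
          (subset_closure (hHD k x hk)) (hxy ▸ subset_closure (hHD l y hl))
      subst hkl
      rw [hHE k x (subset_closure hk), hHE k y (subset_closure hl)] at hxy
      exact hFi k (subset_closure hk) (subset_closure hl) hxy
    · obtain ⟨k, hk⟩ := mem_iUnion.1 hx
      exact absurd (hxy ▸ hHS y hy) (Set.disjoint_left.1 (hVS k) (hHD k x hk))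
    · obtain ⟨k, hk⟩ := mem_iUnion.1 hy
      exact absurd (hxy ▸ hHS x hx) (Set.disjoint_left.1 (hVS k) (hHD k y hk))
    · rw [hHT x hx, hHT y hy] at hxy
      exact hi hx hy hxy
  refine eq_univ_of_forall fun p => ?_
  obtain ⟨x, rfl⟩ := hD.surjective_of_injective hHc hHi p
  by_cases hx : x ∈ ⋃ i, D i
  · obtain ⟨k, hk⟩ := mem_iUnion.1 hx
    exact Or.inr (mem_iUnion.2 ⟨k, hHD k x hk⟩)
  · exact Or.inl (hHS x hx)

/-- The part of a Sierpiński curve in a closed disk whose boundary lies in the curve and avoids the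
peripheral circles. -/
lemma exists_family_side (hD : IsSierpinskiFamily D) {J V O : Set ↥Sphere2}
    (h : IsJordanSplit J V O) (hJD : ∀ i, Disjoint (closure (D i)) J) :
    ∃ D' : ℕ → Set ↥Sphere2, IsSierpinskiFamily D' ∧ D' 0 = O ∧
      (⋃ i, D' i)ᶜ = closure V ∩ (⋃ i, D i)ᶜ := by
  have hside : ∀ i, closure (D i) ⊆ V ∨ closure (D i) ⊆ O := fun i =>
    h.subset_or_subset (hD.disk_spec i).2.1.closure.isPreconnected (hJD i)
  have hVside : ∀ i, (closure (D i) ∩ V).Nonempty → closure (D i) ⊆ V := by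
    rintro i ⟨x, hx, hxV⟩
    exact (hside i).resolve_right fun h' => Set.disjoint_left.1 h.disjoint hxV (h' hx)
  have hdense : V ⊆ closure (⋃ i ∈ {i | closure (D i) ⊆ V}, closure (D i)) := by
    intro x hx
    rw [_root_.mem_closure_iff]
    intro U hU hxU
    obtain ⟨y, ⟨hyU, hyV⟩, hy⟩ := hD.2.2.2.inter_open_nonempty _ (hU.inter h.isOpen_left)
      ⟨x, hxU, hx⟩
    obtain ⟨i, hi⟩ := mem_iUnion.1 hy
    exact ⟨y, hyU, mem_iUnion₂.2 ⟨i, hVside i ⟨y, hi, hyV⟩, hi⟩⟩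
  have hinf : {i | closure (D i) ⊆ V}.Infinite := by
    intro hfin
    rw [(hfin.isClosed_biUnion fun i _ => isClosed_closure).closure_eq] at hdense
    have hVeq : V = ⋃ i ∈ {i | closure (D i) ⊆ V}, closure (D i) :=
      hdense.antisymm (iUnion₂_subset fun i hi => hi)
    have hVc : IsClosed V := by
      rw [hVeq]; exact hfin.isClosed_biUnion fun i _ => isClosed_closure
    have hVu : V = univ := IsClopen.eq_univ ⟨hVc, h.isOpen_left⟩ h.isConnected_left.nonempty
    obtain ⟨x, hx⟩ := h.isConnected_right.nonempty
    exact Set.disjoint_left.1 h.disjoint (hVu ▸ mem_univ x) hx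
  set ν := Nat.nth fun i => closure (D i) ⊆ V with hν
  have hνm : StrictMono ν := Nat.nth_strictMono hinf
  have hνV : ∀ n, closure (D (ν n)) ⊆ V := fun n => Nat.nth_mem_of_infinite hinf n
  have hνr : ∀ i, closure (D i) ⊆ V → ∃ n, ν n = i := fun i hi => by
    have := Nat.range_nth_of_infinite hinf
    rw [← hν] at this
    exact (this ▸ (show i ∈ {i | closure (D i) ⊆ V} from hi) : i ∈ range ν)
  set D' : ℕ → Set ↥Sphere2 := fun n => Nat.casesOn n O fun n => D (ν n) with hD'
  have h0 : D' 0 = O := rfl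
  have hs : ∀ n, D' (n + 1) = D (ν n) := fun n => rfl
  refine ⟨D', ⟨?_, ?_, ?_, ?_⟩, h0, ?_⟩
  · rintro (_ | n)
    · exact ⟨closure O, h.symm.isClosedDisk_left, h.symm.interior_closure_left.symm⟩
    · exact hD.1 _
  · have hOV : ∀ n, Disjoint (closure O) (closure (D (ν n))) := fun n => by
      rw [h.closure_right]
      exact disjoint_compl_left_iff_subset.2 (hνV n)
    rintro (_ | n) (_ | m) hnm
    · exact absurd rfl hnm
    · exact hOV m
    · exact (hOV n).symm
    · exact hD.pairwise_disjoint fun h' => hnm (by rw [hνm.injective h'])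
  · rw [← tendsto_add_atTop_iff_nat 1]
    exact hD.2.2.1.comp hνm.tendsto_atTop
  · intro x
    by_cases hx : x ∈ closure O
    · exact subset_closure (mem_iUnion.2 ⟨0, hx⟩)
    · rw [h.closure_right, notMem_compl_iff] at hx
      refine closure_mono ?_ (hdense hx)
      refine iUnion₂_subset fun i hi => ?_
      obtain ⟨n, rfl⟩ := hνr i hi
      exact subset_iUnion (fun n => closure (D' n)) (n + 1)
  · rw [h.closure_left, ← compl_union, compl_inj_iff]
    apply Subset.antisymm
    · refine iUnion_subset ?_
      rintro (_ | n)
      · exact subset_union_left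
      · exact (subset_iUnion D (ν n)).trans subset_union_right
    · refine union_subset (subset_iUnion D' 0) (iUnion_subset fun i => ?_)
      rcases hside i with hi | hi
      · obtain ⟨n, rfl⟩ := hνr i hi
        exact subset_iUnion D' (n + 1)
      · exact (subset_closure.trans hi).trans (subset_iUnion D' 0)

end IsSierpinskiFamily

theorem stmt6 (D : ℕ → Set ↥Sphere2) (hD : IsSierpinskiFamily D)
    (T : Set ↥Sphere2) (hT : T = (⋃ i, D i)ᶜ)
    (S : Set ↥Sphere2) (hST : S ⊆ T) (hS : IsSierpinskiCurve ↥S)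
    (hentwined : ∀ γ δ : Set ↥Sphere2,
      IsPeriphCircleIn S γ → IsPeriphCircleIn T δ → Disjoint γ δ) :
    ∃ Sk : ℕ → Set ↥Sphere2,
      (∀ i, Sk i ⊆ T) ∧
      (∀ i, IsSierpinskiCurve ↥(Sk i)) ∧
      T = S ∪ ⋃ i, Sk i ∧
      (∀ i, IsPeriphCircleIn S (Sk i ∩ S) ∧ IsPeriphCircleIn (Sk i) (Sk i ∩ S)) ∧
      (∀ γ : Set ↥Sphere2, IsPeriphCircleIn S γ → ∃ i, γ = Sk i ∩ S) ∧
      (Pairwise fun i j => Disjoint (Sk i) (Sk j)) ∧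
      Tendsto (fun i => Metric.diam (Sk i)) atTop (𝓝 0) := by
  subst hT
  obtain ⟨C, hC, ⟨g⟩⟩ := hS
  have : Nonempty ↥Sphere2 := ⟨(hD.frontier_nonempty 0).some⟩
  obtain ⟨η, hη, hi, rfl, -⟩ := g.symm.exists_continuousOn_extension
  choose V O hV hO using hC.exists_split_image hη hi
  have hper : ∀ k, IsPeriphCircleIn (η '' (⋃ i, C i)ᶜ) (η '' frontier (C k)) := fun k =>
    (hC.isPeriphCircleIn_image_iff_exists hη hi).2 ⟨k, rfl⟩
  have hJD : ∀ k i, Disjoint (closure (D i)) (η '' frontier (C k)) := by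
    intro k i
    rw [closure_eq_self_union_frontier, disjoint_union_left]
    refine ⟨?_, (hentwined _ _ (hper k) (hD.isPeriphCircleIn_frontier i)).symm⟩
    rw [Set.disjoint_left]
    exact fun x hx hx' => hST ((hper k).1 hx') (mem_iUnion.2 ⟨i, hx⟩)
  choose D' hD' hD'0 hD'U using fun k => hD.exists_family_side (hV k) (hJD k)
  have hVS : ∀ k, Disjoint (V k) (η '' (⋃ i, C i)ᶜ) := fun k =>
    IsSierpinskiFamily.disjoint_side (hV k) (hO k)
  have hinter : ∀ k, (closure (V k) ∩ (⋃ i, D i)ᶜ) ∩ η '' (⋃ i, C i)ᶜ = η '' frontier (C k) := by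
    intro k
    rw [inter_assoc, inter_eq_right.2 hST, (hV k).closure_left_eq_union, union_inter_distrib_right,
      (hVS k).inter_eq, empty_union, inter_eq_left.2 (hper k).1]
  refine ⟨fun k => closure (V k) ∩ (⋃ i, D i)ᶜ, fun k => inter_subset_right, fun k => ?_, ?_,
    fun k => ?_, fun γ hγ => ?_, fun k l hkl => ?_, ?_⟩
  · exact ⟨D' k, hD' k, ⟨Homeomorph.setCongr (hD'U k).symm⟩⟩
  · refine Subset.antisymm (fun x hx => ?_)
      (union_subset hST (iUnion_subset fun k => inter_subset_right))
    have hxu : x ∈ η '' (⋃ i, C i)ᶜ ∪ ⋃ k, V k := by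
      rw [hC.union_sides_eq_univ hη hi hV hO]; exact mem_univ x
    refine hxu.imp_right fun h => ?_
    obtain ⟨k, hk⟩ := mem_iUnion.1 h
    exact mem_iUnion.2 ⟨k, subset_closure hk, hx⟩
  · simp only [hinter]
    refine ⟨hper k, ?_⟩
    have := (hD' k).isPeriphCircleIn_frontier 0
    rwa [hD'0, hD'U, (hV k).frontier_right] at this
  · obtain ⟨k, rfl⟩ := (hC.isPeriphCircleIn_image_iff_exists hη hi).1 hγ
    exact ⟨k, (hinter k).symm⟩
  · exact (hC.disjoint_closure_side hi hV hO hkl).mono inter_subset_left inter_subset_left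
  · refine squeeze_zero (fun k => diam_nonneg) (fun k => ?_) (hC.tendsto_diam_side hη hi hV hO)
    rw [← diam_closure (s := V k)]
    exact diam_mono inter_subset_left isBounded_of_compactSpace
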